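/- Let R be a commutative Noetherian ring and 𝔞 an ideal of R such that either dim R/𝔞 = 2, or dim R = 3, or ara(𝔞) = 2. Then an R-module M is 𝔞-cofinite if and only if Supp_R M ⊆ V(𝔞) and the R-module Ext^i_R(R/𝔞, M) is finitely generated for i = 0, 1, 2. -/

import Mathlib

open CategoryTheory

universe u

/-- The `R`-module `Ext^i_R(N, M)` for two `R`-modules (objects of `ModuleCat R`). -/
noncomputable def extObj {R : Type u} [CommRing R] (N M : ModuleCat.{u} R) (i : ℕ) :
    ModuleCat.{u} R :=
  ((Ext R (ModuleCat.{u} R) i).obj (Opposite.op N)).obj M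

/-- The `R`-module `Ext^i_R(R/𝔞, M)`. -/
noncomputable def extIdeal {R : Type u} [CommRing R] (𝔞 : Ideal R) (i : ℕ)
    (M : ModuleCat.{u} R) : ModuleCat.{u} R :=
  extObj (ModuleCat.of R (R ⧸ 𝔞)) M i

/-- An `R`-module `M` is `𝔞`-cofinite if `Supp_R M ⊆ V(𝔞)` and `Ext^i_R(R/𝔞, M)` is a finitely
generated `R`-module for every `i ≥ 0`. -/
def IsCofinite {R : Type u} [CommRing R] (𝔞 : Ideal R) (M : ModuleCat.{u} R) : Prop :=
  Module.support R M ⊆ PrimeSpectrum.zeroLocus (𝔞 : Set R) ∧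
    ∀ i : ℕ, Module.Finite R (extIdeal 𝔞 i M)

/-- The Krull dimension `dim_R M` of an `R`-module `M`: the Krull dimension of its support,
i.e. the supremum of `dim R/𝔭` over primes `𝔭` in the support of `M`. -/
noncomputable def moduleDim (R : Type u) [CommRing R] (M : Type u) [AddCommGroup M]
    [Module R M] : WithBot ℕ∞ :=
  Order.krullDim (Module.support R M)

/-- An `R`-module `M` is in `FD_{≤n}` if there is a finitely generated submodule `N ⊆ M`
with `dim_R (M/N) ≤ n`. -/
def MemFD (R : Type u) [CommRing R] (n : ℕ) (M : Type u) [AddCommGroup M] [Module R M] : Prop :=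
  ∃ N : Submodule R M, N.FG ∧ moduleDim R (M ⧸ N) ≤ (n : WithBot ℕ∞)

/-- An `R`-module `M` is `𝔞`-torsion if every element is annihilated by some power of `𝔞`. -/
def IsTorsionIdeal {R : Type u} [CommRing R] (𝔞 : Ideal R) (M : Type u) [AddCommGroup M]
    [Module R M] : Prop :=
  ∀ m : M, ∃ n : ℕ, ∀ a ∈ 𝔞 ^ n, a • m = 0

/-- The arithmetic rank of an ideal `𝔞`: the least `n` such that there exist `a₁, …, aₙ ∈ R`
with `Rad (a₁, …, aₙ) = Rad 𝔞`. -/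
noncomputable def arithRank {R : Type u} [CommRing R] (𝔞 : Ideal R) : ℕ :=
  sInf {n : ℕ | ∃ f : Fin n → R, (Ideal.span (Set.range f)).radical = 𝔞.radical}

namespace Cofinite

open Submodule

section Serre

variable {R : Type*} [CommRing R]

/-- `X` is finitely generated up to `s`-power torsion for some `s ∈ S`. -/
def FGUpTo (S : Submonoid R) (X : Type*) [AddCommGroup X] [Module R X] : Prop :=
  ∃ N : Submodule R X, N.FG ∧ ∃ s ∈ S, ∀ x : X, ∃ k : ℕ, s ^ k • x ∈ N

variable {S : Submonoid R} {X Y Z : Type*} [AddCommGroup X] [Module R X] [AddCommGroup Y]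
  [Module R Y] [AddCommGroup Z] [Module R Z]

lemma pow_smul_mem_of_le {N : Submodule R X} {s : R} {x : X} {k l : ℕ} (hkl : k ≤ l)
    (h : s ^ k • x ∈ N) : s ^ l • x ∈ N := by
  obtain ⟨m, rfl⟩ := Nat.exists_eq_add_of_le hkl
  rw [pow_add, mul_comm, mul_smul]
  exact N.smul_mem _ h

lemma FGUpTo.of_finite [Module.Finite R X] : FGUpTo S X :=
  ⟨⊤, Module.Finite.fg_top, 1, S.one_mem, fun _ => ⟨0, trivial⟩⟩

lemma fgUpTo_bot_iff : FGUpTo (⊥ : Submonoid R) X ↔ Module.Finite R X := by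
  refine ⟨?_, fun _ => .of_finite⟩
  rintro ⟨N, hN, s, hs, h⟩
  obtain rfl := Submonoid.mem_bot.1 hs
  have : N = ⊤ := by
    ext x
    obtain ⟨k, hk⟩ := h x
    simpa using hk
  exact ⟨this ▸ hN⟩

lemma FGUpTo.of_surjective (f : X →ₗ[R] Y) (hf : Function.Surjective f) (h : FGUpTo S X) :
    FGUpTo S Y := by
  obtain ⟨N, hN, s, hs, h⟩ := h
  refine ⟨N.map f, hN.map f, s, hs, fun y => ?_⟩
  obtain ⟨x, rfl⟩ := hf y
  obtain ⟨k, hk⟩ := h x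
  exact ⟨k, by rw [← map_smul]; exact mem_map_of_mem hk⟩

lemma FGUpTo.of_injective [IsNoetherianRing R] (f : X →ₗ[R] Y) (hf : Function.Injective f)
    (h : FGUpTo S Y) : FGUpTo S X := by
  obtain ⟨N, hN, s, hs, h⟩ := h
  have : Module.Finite R N := .of_fg hN
  have hfin : (N.comap f).FG := by
    have : Module.Finite R (N.comap f) :=
      Module.Finite.of_injective (f.restrict (p := N.comap f) (q := N) fun x hx => hx)
        fun x y hxy => Subtype.ext (hf (congrArg Subtype.val hxy))
    exact Module.Finite.iff_fg.1 this
  refine ⟨N.comap f, hfin, s, hs, fun x => ?_⟩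
  obtain ⟨k, hk⟩ := h (f x)
  exact ⟨k, by simpa using hk⟩

lemma FGUpTo.congr (e : X ≃ₗ[R] Y) (h : FGUpTo S X) : FGUpTo S Y :=
  h.of_surjective e.toLinearMap e.surjective

lemma FGUpTo.mono {T : Submonoid R} (hST : S ≤ T) (h : FGUpTo S X) : FGUpTo T X := by
  obtain ⟨N, hN, s, hs, h⟩ := h
  exact ⟨N, hN, s, hST hs, h⟩

lemma FGUpTo.submodule [IsNoetherianRing R] (h : FGUpTo S X) (N : Submodule R X) : FGUpTo S N :=
  h.of_injective N.subtype N.injective_subtype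

lemma FGUpTo.of_submodule_quotient (N : Submodule R X) [IsNoetherianRing R]
    (h1 : FGUpTo S N) (h2 : FGUpTo S (X ⧸ N)) : FGUpTo S X := by
  obtain ⟨A, hA, s, hs, hA'⟩ := h1
  obtain ⟨B, hB, t, ht, hB'⟩ := h2
  obtain ⟨B₀, hB₀, rfl⟩ : ∃ B₀ : Submodule R X, B₀.FG ∧ B₀.map N.mkQ = B := by
    obtain ⟨n, v, hv⟩ := Submodule.fg_iff_exists_fin_generating_family.1 hB
    choose w hw using fun i => N.mkQ_surjective (v i)
    refine ⟨span R (Set.range w), fg_span (Set.finite_range w), ?_⟩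
    rw [map_span, ← Set.range_comp, ← hv]
    congr 2
    ext i; simp [← hw]
  refine ⟨A.map N.subtype ⊔ B₀, (hA.map _).sup hB₀, s * t, S.mul_mem hs ht, fun x => ?_⟩
  obtain ⟨k, b, hb, hk⟩ := hB' (N.mkQ x)
  have hx : t ^ k • x - b ∈ N := by
    rw [← Submodule.Quotient.mk_eq_zero, Submodule.Quotient.mk_sub, sub_eq_zero]
    exact hk.symm
  obtain ⟨l, hl⟩ := hA' ⟨_, hx⟩
  have h3 : s ^ l • (t ^ k • x - b) ∈ A.map N.subtype := ⟨_, hl, rfl⟩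
  have h4 : s ^ l • t ^ k • x ∈ A.map N.subtype ⊔ B₀ := by
    have := add_mem (mem_sup_left h3 : _ ∈ A.map N.subtype ⊔ B₀)
      (mem_sup_right (B₀.smul_mem (s ^ l) hb))
    simpa [smul_sub] using this
  refine ⟨k + l, ?_⟩
  have h5 : (s * t) ^ (k + l) • x = (s ^ k * t ^ l) • s ^ l • t ^ k • x := by
    rw [smul_smul, smul_smul]; congr 1; ring
  rw [h5]
  exact smul_mem _ _ h4

lemma FGUpTo.quotient_ker [IsNoetherianRing R] (g : Y →ₗ[R] Z) (h : FGUpTo S Z) :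
    FGUpTo S (Y ⧸ LinearMap.ker g) :=
  h.of_injective ((LinearMap.ker g).liftQ g le_rfl)
    (LinearMap.ker_eq_bot.1 (ker_liftQ_eq_bot _ _ _ le_rfl))

lemma FGUpTo.of_exact [IsNoetherianRing R] (f : X →ₗ[R] Y) (g : Y →ₗ[R] Z)
    (hfg : Function.Exact f g) (h1 : FGUpTo S X) (h2 : FGUpTo S Z) : FGUpTo S Y := by
  refine .of_submodule_quotient (LinearMap.ker g) ?_ ?_
  · rw [LinearMap.exact_iff.1 hfg]
    exact h1.of_surjective f.rangeRestrict f.surjective_rangeRestrict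
  · exact h2.quotient_ker g

lemma FGUpTo.pi {ι : Type*} [Finite ι] (h : FGUpTo S X) : FGUpTo S (ι → X) := by
  cases nonempty_fintype ι
  obtain ⟨N, hN, s, hs, h⟩ := h
  refine ⟨Submodule.pi Set.univ fun _ => N, ?_, s, hs, fun x => ?_⟩
  · exact Submodule.fg_pi fun _ => hN
  · choose k hk using fun i => h (x i)
    refine ⟨Finset.univ.sup k, fun i _ => ?_⟩
    exact pow_smul_mem_of_le (Finset.le_sup (Finset.mem_univ i)) (hk i)

lemma FGUpTo.ker_comp [IsNoetherianRing R] (f : X →ₗ[R] Y) (g : Y →ₗ[R] Z)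
    (hf : FGUpTo S (LinearMap.ker f)) (hg : FGUpTo S (LinearMap.ker g)) :
    FGUpTo S (LinearMap.ker (g ∘ₗ f)) := by
  let f' : LinearMap.ker (g ∘ₗ f) →ₗ[R] LinearMap.ker g := f.restrict fun x hx => by simpa using hx
  let i : LinearMap.ker f →ₗ[R] LinearMap.ker (g ∘ₗ f) :=
    Submodule.inclusion (fun x hx => by simp_all)
  refine .of_exact i f' (fun x => ⟨fun hx => ⟨⟨x, ?_⟩, rfl⟩, ?_⟩) hf hg
  · simpa [f', LinearMap.restrict_apply, Subtype.ext_iff] using hx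
  · rintro ⟨y, rfl⟩
    exact Subtype.ext y.2

end Serre

section Coh

variable {R : Type*} [CommRing R]
  {A₀ A₁ A₂ A₃ B₀ B₁ B₂ B₃ C₀ C₁ C₂ : Type*}
  [AddCommGroup A₀] [Module R A₀] [AddCommGroup A₁] [Module R A₁] [AddCommGroup A₂] [Module R A₂]
  [AddCommGroup A₃] [Module R A₃]
  [AddCommGroup B₀] [Module R B₀] [AddCommGroup B₁] [Module R B₁] [AddCommGroup B₂] [Module R B₂]
  [AddCommGroup B₃] [Module R B₃]
  [AddCommGroup C₀] [Module R C₀] [AddCommGroup C₁] [Module R C₁] [AddCommGroup C₂] [Module R C₂]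

/-- The homology `ker g / im f` of two composable maps. -/
abbrev Coh (f : A₀ →ₗ[R] A₁) (g : A₁ →ₗ[R] A₂) : Type _ :=
  LinearMap.ker g ⧸ (LinearMap.range f).comap (LinearMap.ker g).subtype

/-- Functoriality of `Coh`. -/
def cohMap {f : A₀ →ₗ[R] A₁} {g : A₁ →ₗ[R] A₂} {f' : B₀ →ₗ[R] B₁} {g' : B₁ →ₗ[R] B₂}
    (φ₀ : A₀ →ₗ[R] B₀) (φ₁ : A₁ →ₗ[R] B₁) (φ₂ : A₂ →ₗ[R] B₂)
    (h₀ : φ₁ ∘ₗ f = f' ∘ₗ φ₀) (h₁ : φ₂ ∘ₗ g = g' ∘ₗ φ₁) : Coh f g →ₗ[R] Coh f' g' :=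
  mapQ _ _ (φ₁.restrict (p := LinearMap.ker g) (q := LinearMap.ker g') fun x hx => by
      rw [LinearMap.mem_ker, ← LinearMap.comp_apply, ← h₁, LinearMap.comp_apply,
        LinearMap.mem_ker.1 hx, map_zero]) <| by
    rintro ⟨_, hx⟩ ⟨y, rfl⟩
    exact ⟨φ₀ y, (LinearMap.congr_fun h₀ y).symm⟩

lemma cohMap_mk {f : A₀ →ₗ[R] A₁} {g : A₁ →ₗ[R] A₂} {f' : B₀ →ₗ[R] B₁} {g' : B₁ →ₗ[R] B₂}
    (φ₀ : A₀ →ₗ[R] B₀) (φ₁ : A₁ →ₗ[R] B₁) (φ₂ : A₂ →ₗ[R] B₂)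
    (h₀ : φ₁ ∘ₗ f = f' ∘ₗ φ₀) (h₁ : φ₂ ∘ₗ g = g' ∘ₗ φ₁) (x : A₁) (hx : g x = 0)
    (hx' : g' (φ₁ x) = 0) :
    cohMap φ₀ φ₁ φ₂ h₀ h₁ (mkQ _ ⟨x, hx⟩) = mkQ _ ⟨φ₁ x, hx'⟩ := rfl

lemma coh_mk_eq_zero {f : A₀ →ₗ[R] A₁} {g : A₁ →ₗ[R] A₂} {x : A₁} (hx : g x = 0) :
    (mkQ _ ⟨x, hx⟩ : Coh f g) = 0 ↔ ∃ y, f y = x := by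
  rw [mkQ_apply, Submodule.Quotient.mk_eq_zero]
  rfl

lemma coh_ind {f : A₀ →ₗ[R] A₁} {g : A₁ →ₗ[R] A₂} {P : Coh f g → Prop}
    (h : ∀ x (hx : g x = 0), P (mkQ _ ⟨x, hx⟩)) (z : Coh f g) : P z := by
  obtain ⟨⟨x, hx⟩, rfl⟩ := mkQ_surjective _ z
  exact h x hx

lemma cohMap_exact {fA : A₀ →ₗ[R] A₁} {gA : A₁ →ₗ[R] A₂} {fB : B₀ →ₗ[R] B₁} {gB : B₁ →ₗ[R] B₂}
    {fC : C₀ →ₗ[R] C₁} {gC : C₁ →ₗ[R] C₂}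
    (φ₀ : A₀ →ₗ[R] B₀) (φ₁ : A₁ →ₗ[R] B₁) (φ₂ : A₂ →ₗ[R] B₂)
    (ψ₀ : B₀ →ₗ[R] C₀) (ψ₁ : B₁ →ₗ[R] C₁) (ψ₂ : B₂ →ₗ[R] C₂)
    (hφ₀ : φ₁ ∘ₗ fA = fB ∘ₗ φ₀) (hφ₁ : φ₂ ∘ₗ gA = gB ∘ₗ φ₁)
    (hψ₀ : ψ₁ ∘ₗ fB = fC ∘ₗ ψ₀) (hψ₁ : ψ₂ ∘ₗ gB = gC ∘ₗ ψ₁)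
    (hB : gB ∘ₗ fB = 0)
    (inj : Function.Injective φ₂) (ex : Function.Exact φ₁ ψ₁) (surj : Function.Surjective ψ₀) :
    Function.Exact (cohMap φ₀ φ₁ φ₂ hφ₀ hφ₁) (cohMap ψ₀ ψ₁ ψ₂ hψ₀ hψ₁) := by
  intro z
  induction z using coh_ind with | h b hb => ?_
  have hb' : gC (ψ₁ b) = 0 := by rw [← LinearMap.comp_apply, ← hψ₁]; simp [hb]
  rw [cohMap_mk _ _ _ _ _ b hb hb', coh_mk_eq_zero]
  constructor
  · rintro ⟨c, hc⟩
    obtain ⟨b₀, rfl⟩ := surj c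
    have h1 : ψ₁ (b - fB b₀) = 0 := by
      rw [map_sub, ← hc, sub_eq_zero]
      exact (LinearMap.congr_fun hψ₀ b₀).symm
    obtain ⟨a, ha⟩ := (ex _).1 h1
    have hgb : gB (b - fB b₀) = 0 := by
      rw [map_sub, hb]; simpa using LinearMap.congr_fun hB b₀
    have ha' : gA a = 0 := inj (by
      rw [map_zero, ← LinearMap.comp_apply, hφ₁, LinearMap.comp_apply, ha, hgb])
    refine ⟨mkQ _ ⟨a, ha'⟩, ?_⟩
    rw [cohMap_mk _ _ _ _ _ a ha' (by rw [ha, hgb]), ← sub_eq_zero, ← map_sub]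
    have hz : gB (fB b₀) = 0 := LinearMap.congr_fun hB b₀
    refine (coh_mk_eq_zero (by simp [ha, hz])).2 ⟨-b₀, ?_⟩
    simp [ha]
  · rintro ⟨y, hy⟩
    induction y using coh_ind with | h a ha => ?_
    have ha' : gB (φ₁ a) = 0 := by rw [← LinearMap.comp_apply, ← hφ₁]; simp [ha]
    rw [cohMap_mk _ _ _ _ _ a ha ha', ← sub_eq_zero, ← map_sub] at hy
    obtain ⟨b₀, hb₀⟩ := (coh_mk_eq_zero (by simp [ha', hb])).1 hy
    refine ⟨ψ₀ (- b₀), ?_⟩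
    rw [← LinearMap.comp_apply, ← hψ₀, LinearMap.comp_apply, map_neg, hb₀]
    simp [ex.apply_apply_eq_zero]

/-- The connecting homomorphism. -/
lemma exists_coh_connecting
    {a₁ : A₁ →ₗ[R] A₂} {a₂ : A₂ →ₗ[R] A₃}
    {b₀ : B₀ →ₗ[R] B₁} {b₁ : B₁ →ₗ[R] B₂} {b₂ : B₂ →ₗ[R] B₃}
    {c₀ : C₀ →ₗ[R] C₁} {c₁ : C₁ →ₗ[R] C₂}
    (φ₁ : A₁ →ₗ[R] B₁) (φ₂ : A₂ →ₗ[R] B₂) (φ₃ : A₃ →ₗ[R] B₃)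
    (ψ₀ : B₀ →ₗ[R] C₀) (ψ₁ : B₁ →ₗ[R] C₁) (ψ₂ : B₂ →ₗ[R] C₂)
    (hφ₁ : φ₂ ∘ₗ a₁ = b₁ ∘ₗ φ₁) (hφ₂ : φ₃ ∘ₗ a₂ = b₂ ∘ₗ φ₂)
    (hψ₀ : ψ₁ ∘ₗ b₀ = c₀ ∘ₗ ψ₀) (hψ₁ : ψ₂ ∘ₗ b₁ = c₁ ∘ₗ ψ₁)
    (hb₀ : b₁ ∘ₗ b₀ = 0) (hb₁ : b₂ ∘ₗ b₁ = 0)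
    (inj₂ : Function.Injective φ₂) (inj₃ : Function.Injective φ₃)
    (ex₁ : Function.Exact φ₁ ψ₁) (ex₂ : Function.Exact φ₂ ψ₂)
    (surj₀ : Function.Surjective ψ₀) (surj₁ : Function.Surjective ψ₁) :
    ∃ δ : Coh c₀ c₁ →ₗ[R] Coh a₁ a₂,
      Function.Exact (cohMap ψ₀ ψ₁ ψ₂ hψ₀ hψ₁) δ ∧
      Function.Exact δ (cohMap φ₁ φ₂ φ₃ hφ₁ hφ₂) := by
  let W : Submodule R B₁ := LinearMap.ker (ψ₂ ∘ₗ b₁)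
  let e := LinearEquiv.ofInjective φ₂ inj₂
  have hW (w : W) : b₁ w ∈ LinearMap.range φ₂ := (ex₂ _).1 w.2
  let τ₀ : W →ₗ[R] A₂ := e.symm.toLinearMap ∘ₗ (b₁ ∘ₗ W.subtype).codRestrict _ hW
  have hτ₀ (w : W) : φ₂ (τ₀ w) = b₁ w := by
    have := e.apply_symm_apply ⟨b₁ w, hW w⟩
    exact congrArg Subtype.val this
  have hτ₀' (w : W) : a₂ (τ₀ w) = 0 := inj₃ (by
    rw [← LinearMap.comp_apply, hφ₂, LinearMap.comp_apply, hτ₀, map_zero]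
    exact LinearMap.congr_fun hb₁ _)
  let τ : W →ₗ[R] Coh a₁ a₂ := mkQ _ ∘ₗ τ₀.codRestrict (LinearMap.ker a₂) hτ₀'
  have hW' (w : W) : c₁ (ψ₁ w) = 0 := by
    rw [← LinearMap.comp_apply, ← hψ₁]; exact w.2
  let q : W →ₗ[R] Coh c₀ c₁ :=
    mkQ _ ∘ₗ (ψ₁ ∘ₗ W.subtype).codRestrict (LinearMap.ker c₁) hW'
  have hq : Function.Surjective q := fun z => by
    induction z using coh_ind with | h c hc => ?_
    obtain ⟨b, rfl⟩ := surj₁ c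
    refine ⟨⟨b, ?_⟩, rfl⟩
    show (ψ₂ ∘ₗ b₁) b = 0
    rw [hψ₁]; exact hc
  have qz (w : W) : q w = 0 ↔ ∃ y, c₀ y = ψ₁ w := coh_mk_eq_zero (hW' w)
  have τz (w : W) : τ w = 0 ↔ ∃ y, a₁ y = τ₀ w := coh_mk_eq_zero (hτ₀' w)
  have hker : LinearMap.ker q ≤ LinearMap.ker τ := by
    intro w hw
    obtain ⟨c, hc⟩ := (qz w).1 hw
    obtain ⟨b, rfl⟩ := surj₀ c
    have h1 : ψ₁ (w - b₀ b) = 0 := by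
      rw [map_sub, ← hc, sub_eq_zero]
      exact (LinearMap.congr_fun hψ₀ b).symm
    obtain ⟨a, ha⟩ := (ex₁ _).1 h1
    refine (τz w).2 ⟨a, inj₂ ?_⟩
    rw [← LinearMap.comp_apply, hφ₁, LinearMap.comp_apply, ha, hτ₀, map_sub]
    have : b₁ (b₀ b) = 0 := LinearMap.congr_fun hb₀ b
    rw [this, sub_zero]
  let δ : Coh c₀ c₁ →ₗ[R] Coh a₁ a₂ :=
    (LinearMap.ker q).liftQ τ hker ∘ₗ (q.quotKerEquivOfSurjective hq).symm.toLinearMap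
  have hδ (w : W) : δ (q w) = τ w := by
    have : (q.quotKerEquivOfSurjective hq).symm (q w) = mkQ _ w := by
      rw [LinearEquiv.symm_apply_eq]; rfl
    simp only [δ, LinearMap.comp_apply, LinearEquiv.coe_coe, this]
    simp
  refine ⟨δ, fun z => ?_, fun z => ?_⟩
  · obtain ⟨w, rfl⟩ := hq z
    rw [hδ, τz]
    constructor
    · rintro ⟨a, ha⟩
      have h1 : b₁ (w - φ₁ a) = 0 := by
        have := LinearMap.congr_fun hφ₁ a
        simp only [LinearMap.comp_apply] at this
        rw [map_sub, ← this, ha, hτ₀, sub_self]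
      have h2 : ψ₁ (w - φ₁ a) = ψ₁ w := by
        simp [ex₁.apply_apply_eq_zero]
      refine ⟨mkQ _ ⟨w - φ₁ a, h1⟩, ?_⟩
      rw [cohMap_mk _ _ _ _ _ _ h1 (by rw [h2, hW'])]
      show _ = mkQ _ (⟨ψ₁ w, hW' w⟩ : LinearMap.ker c₁)
      congr 2
    · rintro ⟨y, hy⟩
      induction y using coh_ind with | h b hb => ?_
      let w' : W := ⟨b, by simp [W, hb]⟩
      have h1 : cohMap ψ₀ ψ₁ ψ₂ hψ₀ hψ₁ (mkQ _ ⟨b, hb⟩) = q w' := rfl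
      have h2 : τ w' = τ w := by rw [← hδ, ← hδ, ← hy, h1]
      rw [← τz, ← h2, τz]
      refine ⟨0, inj₂ ?_⟩
      rw [hτ₀]; simp [w', hb]
  · induction z using coh_ind with | h a ha => ?_
    have ha' : b₂ (φ₂ a) = 0 := by rw [← LinearMap.comp_apply, ← hφ₂]; simp [ha]
    rw [cohMap_mk _ _ _ _ _ a ha ha', coh_mk_eq_zero]
    constructor
    · rintro ⟨b, hb⟩
      let w : W := ⟨b, by simp [W, hb, ex₂.apply_apply_eq_zero]⟩
      refine ⟨q w, ?_⟩
      rw [hδ]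
      have : τ₀ w = a := inj₂ (by rw [hτ₀, ← hb])
      show mkQ _ (⟨τ₀ w, hτ₀' w⟩ : LinearMap.ker a₂) = _
      congr 2
    · rintro ⟨y, hy⟩
      obtain ⟨w, rfl⟩ := hq y
      rw [hδ] at hy
      have : mkQ _ (⟨τ₀ w, hτ₀' w⟩ : LinearMap.ker a₂) = (mkQ _ ⟨a, ha⟩ : Coh a₁ a₂) := hy
      rw [← sub_eq_zero, ← map_sub] at this
      obtain ⟨a', h⟩ := (coh_mk_eq_zero (by simp [hτ₀', ha])).1 this
      refine ⟨w - φ₁ a', ?_⟩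
      have h3 := LinearMap.congr_fun hφ₁ a'
      simp only [LinearMap.comp_apply] at h3
      rw [map_sub, ← h3, h, map_sub, hτ₀]
      abel

end Coh
end Cofinite

namespace Cofinite

open Submodule

section Mat

variable {R : Type*} [CommRing R] {p q r : ℕ} {M N : Type*} [AddCommGroup M] [Module R M]
  [AddCommGroup N] [Module R N]

/-- A matrix over `R` acting on column vectors with entries in an `R`-module. -/
def matAct (D : Matrix (Fin p) (Fin q) R) (M : Type*) [AddCommGroup M] [Module R M] :
    (Fin q → M) →ₗ[R] (Fin p → M) :=
  LinearMap.pi fun j => ∑ k, D j k • LinearMap.proj k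

lemma matAct_apply (D : Matrix (Fin p) (Fin q) R) (f : Fin q → M) (j : Fin p) :
    matAct D M f j = ∑ k, D j k • f k := by
  simp [matAct]

lemma matAct_mul (D : Matrix (Fin p) (Fin q) R) (E : Matrix (Fin q) (Fin r) R) (f : Fin r → M) :
    matAct (D * E) M f = matAct D M (matAct E M f) := by
  ext j
  simp only [matAct_apply, Matrix.mul_apply, Finset.sum_smul, Finset.smul_sum, smul_smul]
  exact Finset.sum_comm

lemma matAct_comp (D : Matrix (Fin p) (Fin q) R) (φ : M →ₗ[R] N) :
    φ.compLeft (Fin p) ∘ₗ matAct D M = matAct D N ∘ₗ φ.compLeft (Fin q) := by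
  ext f j
  simp [matAct_apply]

end Mat

/-- A complex of free modules together with null-homotopies for multiplication by elements of `a`,
as provided by a resolution of `R ⧸ a` by finite free modules. -/
structure ResData {R : Type*} [CommRing R] (a : Ideal R) where
  n : ℕ → ℕ
  n_zero : n 0 = 0
  n_one : n 1 = 1
  D : ∀ i, Matrix (Fin (n (i + 1))) (Fin (n i)) R
  D_mul : ∀ i, D (i + 1) * D i = 0
  span_D : Ideal.span {x | ∃ j k, x = D 1 j k} = a
  homotopy : ∀ x ∈ a, ∃ h : ∀ i, Matrix (Fin (n i)) (Fin (n (i + 1))) R,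
    ∀ i, x • (1 : Matrix (Fin (n (i + 1))) (Fin (n (i + 1))) R) =
      h (i + 1) * D (i + 1) + D i * h i

namespace ResData

section LES

variable {R : Type*} [CommRing R] {a : Ideal R} (𝒟 : ResData a)

/-- The `i`-th cohomology of the complex of vectors attached to a resolution. -/
abbrev H (i : ℕ) (M : Type*) [AddCommGroup M] [Module R M] : Type _ :=
  Coh (matAct (𝒟.D i) M) (matAct (𝒟.D (i + 1)) M)

variable {M N P : Type*} [AddCommGroup M] [Module R M] [AddCommGroup N] [Module R N]
  [AddCommGroup P] [Module R P]

/-- The map on cohomology. -/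
def map (i : ℕ) (φ : M →ₗ[R] N) : 𝒟.H i M →ₗ[R] 𝒟.H i N :=
  cohMap (φ.compLeft _) (φ.compLeft _) (φ.compLeft _) (matAct_comp _ _) (matAct_comp _ _)

lemma map_comp (i : ℕ) (φ : M →ₗ[R] N) (ψ : N →ₗ[R] P) :
    𝒟.map i (ψ ∘ₗ φ) = 𝒟.map i ψ ∘ₗ 𝒟.map i φ := by
  ext z
  rfl

lemma map_id (i : ℕ) : 𝒟.map i (LinearMap.id : M →ₗ[R] M) = LinearMap.id := by
  ext z
  rfl

lemma matAct_D_comp (i : ℕ) : matAct (𝒟.D (i + 1)) M ∘ₗ matAct (𝒟.D i) M = 0 := by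
  refine LinearMap.ext fun f => funext fun j => ?_
  rw [LinearMap.comp_apply, ← matAct_mul, 𝒟.D_mul]
  simp [matAct_apply]

lemma smul_eq_zero {x : R} (hx : x ∈ a) (i : ℕ) (z : 𝒟.H i M) : x • z = 0 := by
  induction z using coh_ind with | h f hf => ?_
  obtain ⟨h, hh⟩ := 𝒟.homotopy x hx
  rw [← map_smul]
  refine (coh_mk_eq_zero (by simp [hf])).2 ⟨matAct (h i) M f, ?_⟩
  have h1 : matAct (x • (1 : Matrix _ _ R)) M f = x • f := by
    ext j; simp [matAct_apply, Matrix.one_apply]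
  have h2 : matAct (h (i + 1) * 𝒟.D (i + 1) + 𝒟.D i * h i) M f =
      matAct (h (i + 1) * 𝒟.D (i + 1)) M f + matAct (𝒟.D i * h i) M f := by
    ext j; simp [matAct_apply, add_smul, Finset.sum_add_distrib]
  rw [hh i, h2, matAct_mul, matAct_mul, hf, map_zero, zero_add] at h1
  exact h1

lemma compLeft_exact {φ : M →ₗ[R] N} {ψ : N →ₗ[R] P} (h : Function.Exact φ ψ) (n : ℕ) :
    Function.Exact (φ.compLeft (Fin n)) (ψ.compLeft (Fin n)) := by
  intro f
  constructor
  · intro hf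
    choose g hg using fun i => (h (f i)).1 (congrFun hf i)
    exact ⟨g, funext hg⟩
  · rintro ⟨g, rfl⟩
    ext i
    simp [h.apply_apply_eq_zero]

lemma compLeft_injective {φ : M →ₗ[R] N} (h : Function.Injective φ) (n : ℕ) :
    Function.Injective (φ.compLeft (Fin n)) :=
  fun _ _ hfg => funext fun i => h (congrFun hfg i)

lemma compLeft_surjective {φ : M →ₗ[R] N} (h : Function.Surjective φ) (n : ℕ) :
    Function.Surjective (φ.compLeft (Fin n)) :=
  fun f => ⟨fun i => (h (f i)).choose, funext fun i => (h (f i)).choose_spec⟩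

variable {φ : M →ₗ[R] N} {ψ : N →ₗ[R] P}

lemma map_exact (hφ : Function.Injective φ) (h : Function.Exact φ ψ) (hψ : Function.Surjective ψ)
    (i : ℕ) : Function.Exact (𝒟.map i φ) (𝒟.map i ψ) :=
  cohMap_exact _ _ _ _ _ _ _ _ _ _ (𝒟.matAct_D_comp i) (compLeft_injective hφ _)
    (compLeft_exact h _) (compLeft_surjective hψ _)

lemma exists_connecting (hφ : Function.Injective φ) (h : Function.Exact φ ψ)
    (hψ : Function.Surjective ψ) (i : ℕ) :
    ∃ δ : 𝒟.H i P →ₗ[R] 𝒟.H (i + 1) M,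
      Function.Exact (𝒟.map i ψ) δ ∧ Function.Exact δ (𝒟.map (i + 1) φ) :=
  exists_coh_connecting (φ.compLeft _) (φ.compLeft _) (φ.compLeft _)
    (ψ.compLeft _) (ψ.compLeft _) (ψ.compLeft _) (matAct_comp _ _) (matAct_comp _ _)
    (matAct_comp _ _) (matAct_comp _ _) (𝒟.matAct_D_comp i) (𝒟.matAct_D_comp (i + 1))
    (compLeft_injective hφ _) (compLeft_injective hφ _) (compLeft_exact h _) (compLeft_exact h _)
    (compLeft_surjective hψ _) (compLeft_surjective hψ _)

lemma map_zero_injective (hφ : Function.Injective φ) : Function.Injective (𝒟.map 0 φ) := by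
  rw [injective_iff_map_eq_zero]
  intro z hz
  induction z using coh_ind with | h f hf => ?_
  have hf' : matAct (𝒟.D 1) N (φ.compLeft _ f) = 0 := by
    rw [← LinearMap.comp_apply, ← matAct_comp]; simp [hf]
  obtain ⟨g, hg⟩ := (coh_mk_eq_zero hf').1 hz
  have : IsEmpty (Fin (𝒟.n 0)) := by rw [𝒟.n_zero]; infer_instance
  have h0 : φ.compLeft (Fin (𝒟.n 1)) f = 0 := by
    rw [← hg]; ext j; simp [matAct_apply]
  have : f = 0 := compLeft_injective hφ _ (by rw [h0, map_zero])
  exact (coh_mk_eq_zero hf).2 ⟨0, by rw [map_zero, this]⟩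

/-- In degree zero the cohomology is the `a`-torsion. -/
lemma nonempty_equiv_torsion : Nonempty (𝒟.H 0 M ≃ₗ[R] torsionBySet R M a) := by
  have h1 : Unique (Fin (𝒟.n 1)) := by rw [𝒟.n_one]; infer_instance
  have h0 : IsEmpty (Fin (𝒟.n 0)) := by rw [𝒟.n_zero]; infer_instance
  have key (m : M) : m ∈ torsionBySet R M a ↔ ∀ j k, 𝒟.D 1 j k • m = 0 := by
    have hspan : torsionBySet R M a = torsionBySet R M {x | ∃ j k, x = 𝒟.D 1 j k} := by
      rw [torsionBySet_eq_torsionBySet_span (s := {x | ∃ j k, x = 𝒟.D 1 j k}), 𝒟.span_D]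
    rw [hspan, mem_torsionBySet_iff]
    constructor
    · intro h j k
      exact h ⟨_, j, k, rfl⟩
    · rintro h ⟨_, j, k, rfl⟩
      exact h j k
  have hker (f : Fin (𝒟.n 1) → M) :
      f ∈ LinearMap.ker (matAct (𝒟.D 1) M) ↔ f default ∈ torsionBySet R M a := by
    rw [key, LinearMap.mem_ker]
    constructor
    · intro h j k
      have := congrFun h j
      rw [matAct_apply, Fintype.sum_unique] at this
      rwa [Unique.eq_default k]
    · intro h
      ext j
      rw [matAct_apply, Fintype.sum_unique]
      exact h _ _
  let e : LinearMap.ker (matAct (𝒟.D 1) M) ≃ₗ[R] torsionBySet R M a :=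
    { toFun f := ⟨f.1 default, (hker _).1 f.2⟩
      invFun m := ⟨fun _ => m.1, (hker _).2 m.2⟩
      map_add' _ _ := rfl
      map_smul' _ _ := rfl
      left_inv f := by
        ext j
        simp [Unique.eq_default j]
      right_inv m := rfl }
  have hbot : (LinearMap.range (matAct (𝒟.D 0) M)).comap
      (LinearMap.ker (matAct (𝒟.D 1) M)).subtype = ⊥ := by
    rw [eq_bot_iff]
    rintro ⟨f, hf⟩ ⟨g, hg⟩
    rw [mem_bot, Subtype.ext_iff]
    change f = 0
    change matAct (𝒟.D 0) M g = f at hg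
    rw [← hg]; ext j; simp [matAct_apply]
  exact ⟨(quotEquivOfEqBot _ hbot).trans e⟩

end LES

section Fin

variable {R : Type*} [CommRing R] [IsNoetherianRing R] {a : Ideal R} (𝒟 : ResData a)
  {S : Submonoid R}
variable {M N P : Type*} [AddCommGroup M] [Module R M] [AddCommGroup N] [Module R N]
  [AddCommGroup P] [Module R P] {φ : M →ₗ[R] N} {ψ : N →ₗ[R] P}

omit [IsNoetherianRing R] in
lemma fgUpTo_congr (i : ℕ) (e : M ≃ₗ[R] N) (h : FGUpTo S (𝒟.H i M)) : FGUpTo S (𝒟.H i N) := by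
  refine h.of_surjective (𝒟.map i e.toLinearMap) fun z => ⟨𝒟.map i e.symm.toLinearMap z, ?_⟩
  rw [← LinearMap.comp_apply, ← map_comp]
  simp [map_id]

omit [IsNoetherianRing R] in
lemma fgUpTo_zero_iff : FGUpTo S (𝒟.H 0 M) ↔ FGUpTo S (torsionBySet R M a) := by
  obtain ⟨e⟩ := 𝒟.nonempty_equiv_torsion (M := M)
  exact ⟨fun h => h.congr e, fun h => h.congr e.symm⟩

lemma fgUpTo_of_fgUpTo (i : ℕ) (h : FGUpTo S M) : FGUpTo S (𝒟.H i M) :=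
  (h.pi.submodule _).of_surjective (mkQ _) (mkQ_surjective _)

lemma fgUpTo_middle (hφ : Function.Injective φ) (h : Function.Exact φ ψ)
    (hψ : Function.Surjective ψ) (i : ℕ) (hM : FGUpTo S (𝒟.H i M)) (hP : FGUpTo S (𝒟.H i P)) :
    FGUpTo S (𝒟.H i N) :=
  .of_exact _ _ (𝒟.map_exact hφ h hψ i) hM hP

lemma fgUpTo_right (hφ : Function.Injective φ) (h : Function.Exact φ ψ)
    (hψ : Function.Surjective ψ) (i : ℕ) (hN : FGUpTo S (𝒟.H i N))
    (hM : FGUpTo S (𝒟.H (i + 1) M)) : FGUpTo S (𝒟.H i P) := by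
  obtain ⟨δ, h1, -⟩ := 𝒟.exists_connecting hφ h hψ i
  exact .of_exact _ _ h1 hN hM

lemma fgUpTo_left_succ (hφ : Function.Injective φ) (h : Function.Exact φ ψ)
    (hψ : Function.Surjective ψ) (i : ℕ) (hP : FGUpTo S (𝒟.H i P))
    (hN : FGUpTo S (𝒟.H (i + 1) N)) : FGUpTo S (𝒟.H (i + 1) M) := by
  obtain ⟨δ, -, h1⟩ := 𝒟.exists_connecting hφ h hψ i
  exact .of_exact _ _ h1 hP hN

lemma fgUpTo_left_zero (hφ : Function.Injective φ) (hN : FGUpTo S (𝒟.H 0 N)) :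
    FGUpTo S (𝒟.H 0 M) :=
  hN.of_injective _ (𝒟.map_zero_injective hφ)

end Fin

section Mul

variable {R : Type*} [CommRing R] [IsNoetherianRing R] {a : Ideal R} (𝒟 : ResData a)
  {S : Submonoid R} {M : Type*} [AddCommGroup M] [Module R M] (x : R)

/-- The submodule `xM` of `M`. -/
abbrev mulRange {R : Type*} [CommRing R] (x : R) (M : Type*) [AddCommGroup M] [Module R M] :
    Submodule R M := LinearMap.range (LinearMap.lsmul R M x)

/-- Multiplication by `x` as a map onto `xM`. -/
abbrev toMulRange {R : Type*} [CommRing R] (x : R) (M : Type*) [AddCommGroup M] [Module R M] :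
    M →ₗ[R] mulRange x M := (LinearMap.lsmul R M x).rangeRestrict

omit [IsNoetherianRing R] in
lemma torsion_exact : Function.Exact (torsionBy R M x).subtype (toMulRange x M) := by
  intro m
  simp [Subtype.ext_iff, mem_torsionBy_iff]

omit [IsNoetherianRing R] in
lemma mulRange_exact :
    Function.Exact (mulRange x M).subtype (mulRange x M).mkQ := by
  intro m
  simp

lemma fgUpTo_mulRange (i : ℕ) (hM : FGUpTo S (𝒟.H i M))
    (hL : FGUpTo S (𝒟.H (i + 1) (torsionBy R M x))) : FGUpTo S (𝒟.H i (mulRange x M)) :=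
  𝒟.fgUpTo_right (injective_subtype _) (torsion_exact x)
    (LinearMap.surjective_rangeRestrict _) i hM hL

lemma fgUpTo_quotient (i : ℕ) (hM : FGUpTo S (𝒟.H i M)) (hM' : FGUpTo S (𝒟.H (i + 1) M))
    (hL : FGUpTo S (𝒟.H (i + 2) (torsionBy R M x))) : FGUpTo S (𝒟.H i (M ⧸ mulRange x M)) :=
  𝒟.fgUpTo_right (injective_subtype _) (mulRange_exact x) (mkQ_surjective _) i hM
    (𝒟.fgUpTo_mulRange x (i + 1) hM' hL)

lemma fgUpTo_torsion_zero (hM : FGUpTo S (𝒟.H 0 M)) : FGUpTo S (𝒟.H 0 (torsionBy R M x)) :=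
  𝒟.fgUpTo_left_zero (injective_subtype _) hM

lemma fgUpTo_torsion_one (hM : FGUpTo S (𝒟.H 0 M)) (hM' : FGUpTo S (𝒟.H 1 M)) :
    FGUpTo S (𝒟.H 1 (torsionBy R M x)) :=
  𝒟.fgUpTo_left_succ (injective_subtype _) (torsion_exact x)
    (LinearMap.surjective_rangeRestrict _) 0
    (𝒟.fgUpTo_left_zero (injective_subtype _) hM) hM'

omit [IsNoetherianRing R] in
lemma map_subtype_comp (i : ℕ) :
    𝒟.map i (mulRange x M).subtype ∘ₗ 𝒟.map i (toMulRange x M) =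
      LinearMap.lsmul R (𝒟.H i M) x := by
  rw [← map_comp]
  ext z
  rfl

/-- If `x` acts with finitely generated kernel cohomology, the `x`-torsion of the cohomology of `M`
is finitely generated. -/
lemma fgUpTo_H_torsionBy (i : ℕ) (hL : FGUpTo S (𝒟.H i (torsionBy R M x)))
    (hN : ∀ j, i = j + 1 → FGUpTo S (𝒟.H j (M ⧸ mulRange x M))) :
    FGUpTo S (torsionBy R (𝒟.H i M) x) := by
  have h1 : torsionBy R (𝒟.H i M) x = LinearMap.ker (LinearMap.lsmul R (𝒟.H i M) x) := by
    ext z; simp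
  rw [h1, ← map_subtype_comp]
  refine .ker_comp _ _ ?_ ?_
  · have := 𝒟.map_exact (injective_subtype _) (torsion_exact (M := M) x)
      (LinearMap.surjective_rangeRestrict _) i
    rw [LinearMap.exact_iff.1 this]
    exact hL.of_surjective _ (LinearMap.surjective_rangeRestrict _)
  · cases i with
    | zero =>
      have h0 : LinearMap.ker (𝒟.map 0 (mulRange x M).subtype) = ⊥ :=
        LinearMap.ker_eq_bot.2 (𝒟.map_zero_injective (injective_subtype _))
      rw [h0]
      exact .of_finite
    | succ j =>
      obtain ⟨δ, -, h2⟩ := 𝒟.exists_connecting (φ := (mulRange x M).subtype)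
        (ψ := (mulRange x M).mkQ) (injective_subtype _) (mulRange_exact x) (mkQ_surjective _) j
      rw [LinearMap.exact_iff.1 h2]
      exact (hN j rfl).of_surjective _ (LinearMap.surjective_rangeRestrict _)

lemma fgUpTo_of_torsion_of_quotient {x : R} (hx : x ∈ a) (i : ℕ)
    (hL : FGUpTo S (𝒟.H i (torsionBy R M x)))
    (hN : ∀ j, i = j + 1 → FGUpTo S (𝒟.H j (M ⧸ mulRange x M))) :
    FGUpTo S (𝒟.H i M) := by
  refine (𝒟.fgUpTo_H_torsionBy x i hL hN).of_surjective (Submodule.subtype _)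
    fun z => ⟨⟨z, ?_⟩, rfl⟩
  rw [mem_torsionBy_iff]
  exact 𝒟.smul_eq_zero hx i z

end Mul

end ResData
end Cofinite

namespace Cofinite

open Submodule

section Exist

variable {R : Type*} [CommRing R] [IsNoetherianRing R]

lemma exists_matrix_range_eq {p : ℕ} (K : Submodule R (Fin p → R)) :
    ∃ (q : ℕ) (D : Matrix (Fin q) (Fin p) R), LinearMap.range D.vecMulLinear = K := by
  obtain ⟨q, v, hv⟩ := fg_iff_exists_fin_generating_family.1 (IsNoetherian.noetherian K)
  exact ⟨q, Matrix.of v, by rw [range_vecMulLinear, ← hv]; rfl⟩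

/-- The submodules of relations of successive syzygies of `R ⧸ a`. -/
noncomputable def syzygy (a : Ideal R) : ℕ → Σ p : ℕ, Submodule R (Fin p → R)
  | 0 => ⟨1, Submodule.comap (LinearMap.proj (R := R) (φ := fun _ : Fin 1 => R) 0) a⟩
  | i + 1 => ⟨(exists_matrix_range_eq (syzygy a i).2).choose,
      LinearMap.ker (exists_matrix_range_eq (syzygy a i).2).choose_spec.choose.vecMulLinear⟩

/-- The ranks of a free resolution of `R ⧸ a`, shifted by one. -/
noncomputable def syzygyRank (a : Ideal R) : ℕ → ℕ
  | 0 => 0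
  | i + 1 => (syzygy a i).1

/-- The matrices of a free resolution of `R ⧸ a`. -/
noncomputable def syzygyMatrix (a : Ideal R) :
    ∀ i, Matrix (Fin (syzygyRank a (i + 1))) (Fin (syzygyRank a i)) R
  | 0 => 0
  | i + 1 => (exists_matrix_range_eq (syzygy a i).2).choose_spec.choose

/-- The `i`-th syzygy module of `R ⧸ a`. -/
noncomputable def syzygyModule (a : Ideal R) (i : ℕ) :
    Submodule R (Fin (syzygyRank a (i + 1)) → R) := (syzygy a i).2

lemma mem_syzygyModule_zero (a : Ideal R) (v : Fin (syzygyRank a 1) → R) :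
    v ∈ syzygyModule a 0 ↔ ∀ j, v j ∈ a := by
  have h : v ∈ syzygyModule a 0 ↔ v (0 : Fin 1) ∈ a := by
    change (v : Fin 1 → R) ∈
      Submodule.comap (LinearMap.proj (R := R) (φ := fun _ : Fin 1 => R) 0) a ↔ _
    exact Iff.rfl
  rw [h]
  exact ⟨fun h j => by rwa [Subsingleton.elim (α := Fin 1) j 0], fun h => h _⟩

lemma range_syzygyMatrix (a : Ideal R) (i : ℕ) :
    LinearMap.range (syzygyMatrix a (i + 1)).vecMulLinear = syzygyModule a i :=
  (exists_matrix_range_eq (syzygy a i).2).choose_spec.choose_spec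

lemma ker_syzygyMatrix (a : Ideal R) (i : ℕ) :
    LinearMap.ker (syzygyMatrix a (i + 1)).vecMulLinear = syzygyModule a (i + 1) := rfl

omit [IsNoetherianRing R] in
lemma exists_mul_eq_of_rows {p q r : ℕ} (D : Matrix (Fin q) (Fin p) R)
    (E : Matrix (Fin r) (Fin p) R)
    (h : ∀ j, E j ∈ LinearMap.range D.vecMulLinear) :
    ∃ F : Matrix (Fin r) (Fin q) R, F * D = E := by
  choose F hF using h
  refine ⟨Matrix.of F, ?_⟩
  ext j k
  rw [Matrix.mul_apply_eq_vecMul]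
  exact congrFun (hF j) k

lemma syzygyMatrix_mul (a : Ideal R) (i : ℕ) : syzygyMatrix a (i + 1) * syzygyMatrix a i = 0 := by
  cases i with
  | zero => ext j k; exact k.elim0
  | succ i =>
    ext j k
    rw [Matrix.mul_apply_eq_vecMul]
    have h : syzygyMatrix a (i + 2) j ∈ LinearMap.range (syzygyMatrix a (i + 2)).vecMulLinear :=
      ⟨Pi.single j 1, by simp; rfl⟩
    rw [range_syzygyMatrix, ← ker_syzygyMatrix] at h
    exact congrFun (LinearMap.mem_ker.1 h) k

lemma exists_homotopy (a : Ideal R) {x : R} (hx : x ∈ a) :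
    ∃ h : ∀ i, Matrix (Fin (syzygyRank a i)) (Fin (syzygyRank a (i + 1))) R,
    ∀ i, x • (1 : Matrix (Fin (syzygyRank a (i + 1))) (Fin (syzygyRank a (i + 1))) R) =
      h (i + 1) * syzygyMatrix a (i + 1) + syzygyMatrix a i * h i := by
  let E (i : ℕ) (h : Matrix (Fin (syzygyRank a i)) (Fin (syzygyRank a (i + 1))) R) :
      Matrix (Fin (syzygyRank a (i + 1))) (Fin (syzygyRank a (i + 1))) R :=
    x • 1 - syzygyMatrix a i * h
  let P (i : ℕ) (h : Matrix (Fin (syzygyRank a i)) (Fin (syzygyRank a (i + 1))) R) : Prop :=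
    ∀ j, E i h j ∈ syzygyModule a i
  have step (i : ℕ) (h : {h // P i h}) : ∃ h' : {h // P (i + 1) h},
      h'.1 * syzygyMatrix a (i + 1) = E i h.1 := by
    obtain ⟨F, hF⟩ := exists_mul_eq_of_rows (syzygyMatrix a (i + 1)) (E i h.1) (by
      rw [range_syzygyMatrix]; exact h.2)
    refine ⟨⟨F, fun j => ?_⟩, hF⟩
    have h2 : E (i + 1) F * syzygyMatrix a (i + 1) = 0 := by
      simp only [E, Matrix.sub_mul, Matrix.mul_assoc, hF, Matrix.mul_sub]
      rw [← Matrix.mul_assoc, syzygyMatrix_mul]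
      simp
    rw [← ker_syzygyMatrix, LinearMap.mem_ker]
    ext k
    have := congrFun (congrFun h2 j) k
    rwa [Matrix.mul_apply_eq_vecMul] at this
  choose next hnext using step
  have hstart : P 0 0 := by
    intro j
    rw [mem_syzygyModule_zero]
    intro k
    simp only [E, Matrix.mul_zero, sub_zero, Matrix.smul_apply, smul_eq_mul]
    exact a.mul_mem_right _ hx
  let h : ∀ i, {h // P i h} := fun i => Nat.rec ⟨0, hstart⟩ (fun i h => next i h) i
  refine ⟨fun i => (h i).1, fun i => ?_⟩
  have : (h (i + 1)).1 * syzygyMatrix a (i + 1) = E i (h i).1 := hnext i (h i)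
  rw [this]
  simp [E]

/-- The data attached to a resolution of `R ⧸ a` by finite free modules. -/
noncomputable def resData (a : Ideal R) : ResData a where
  n := syzygyRank a
  n_zero := rfl
  n_one := rfl
  D := syzygyMatrix a
  D_mul := syzygyMatrix_mul a
  span_D := by
    refine le_antisymm (Ideal.span_le.2 ?_) fun x hx => ?_
    · rintro _ ⟨j, k, rfl⟩
      have h : syzygyMatrix a 1 j ∈ LinearMap.range (syzygyMatrix a 1).vecMulLinear :=
        ⟨Pi.single j 1, by simp; rfl⟩
      rw [range_syzygyMatrix, mem_syzygyModule_zero] at h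
      exact h k
    · have h : (fun _ => x) ∈ syzygyModule a 0 := (mem_syzygyModule_zero _ _).2 fun _ => hx
      rw [← range_syzygyMatrix] at h
      obtain ⟨v, hv⟩ := h
      have := congrFun hv (0 : Fin 1)
      rw [← this]
      change ∑ j, v j * syzygyMatrix a 1 j (0 : Fin 1) ∈ _
      exact sum_mem fun j _ => Ideal.mul_mem_left _ _ (Ideal.subset_span ⟨j, _, rfl⟩)
  homotopy _ := exists_homotopy a

end Exist

section Ext

variable {R : Type u} [CommRing R] [IsNoetherianRing R] (a : Ideal R)

lemma vecMulLinear_comp_syzygyMatrix (i : ℕ) :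
    (syzygyMatrix a i).vecMulLinear ∘ₗ (syzygyMatrix a (i + 1)).vecMulLinear = 0 := by
  apply LinearMap.ext
  intro w
  rw [LinearMap.comp_apply, Matrix.vecMulLinear_apply, Matrix.vecMulLinear_apply,
    Matrix.vecMul_vecMul, syzygyMatrix_mul]
  simp

instance : Unique (Fin (syzygyRank a 1)) := inferInstanceAs (Unique (Fin 1))

/-- The augmentation of the free resolution of `R ⧸ a`. -/
noncomputable def syzygyAug : (Fin (syzygyRank a 1) → R) →ₗ[R] R ⧸ a :=
  a.mkQ ∘ₗ LinearMap.proj default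

lemma ker_syzygyAug : LinearMap.ker (syzygyAug a) = syzygyModule a 0 := by
  rw [syzygyAug, LinearMap.ker_comp, ker_mkQ]
  ext v
  rw [mem_syzygyModule_zero]
  exact ⟨fun h j => by rwa [Unique.eq_default j], fun h => h _⟩

lemma syzygyAug_surjective : Function.Surjective (syzygyAug a) := by
  intro y
  obtain ⟨x, rfl⟩ := mkQ_surjective _ y
  exact ⟨fun _ => x, rfl⟩

section Generic

variable {R : Type u} [CommRing R] (X : ℕ → ModuleCat.{u} R) (d : ∀ i, X (i + 1) ⟶ X i)
  (Z : ModuleCat.{u} R) (ε : X 0 ⟶ Z) [∀ i, Projective (X i)]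

omit [∀ i, Projective (X i)] in
lemma of_d_comp_eq_zero (w : ∀ i, d (i + 1) ≫ d i = 0) (w₀ : d 0 ≫ ε = 0) :
    (ChainComplex.of X d w).d 1 0 ≫ ε = 0 := by
  rw [← w₀]
  congr 1

/-- A projective resolution built from an exact sequence of modules. -/
noncomputable def resolutionOfExact (w : ∀ i, d (i + 1) ≫ d i = 0)
    (h : ∀ i, LinearMap.range (d (i + 1)).hom = LinearMap.ker (d i).hom) (w₀ : d 0 ≫ ε = 0)
    (h₀ : LinearMap.range (d 0).hom = LinearMap.ker ε.hom) (hε : Function.Surjective ε) :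
    ProjectiveResolution Z where
  complex := ChainComplex.of X d w
  projective i := by
    change Projective (X i)
    infer_instance
  π := (ChainComplex.toSingle₀Equiv _ _).symm ⟨ε, of_d_comp_eq_zero X d Z ε w w₀⟩
  quasiIso := ⟨fun n => by
    cases n
    · rw [ChainComplex.quasiIsoAt₀_iff, ShortComplex.quasiIso_iff_of_zeros']
      · refine (ShortComplex.exact_and_epi_g_iff_of_iso (S₂ := ShortComplex.mk (d 0) ε w₀) ?_).2
          ⟨?_, ?_⟩
        · exact ShortComplex.isoMk (Iso.refl _) (Iso.refl _) (Iso.refl _)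
            ((Category.id_comp _).trans (Category.comp_id _).symm)
            ((Category.id_comp _).trans
              (Eq.trans (b := ε) (ChainComplex.toSingle₀Equiv_symm_apply_f_zero
                (C := ChainComplex.of X d w) ε
                (of_d_comp_eq_zero X d Z ε w w₀)).symm (Category.comp_id _).symm))
        · rw [ShortComplex.moduleCat_exact_iff_range_eq_ker]
          exact h₀
        · exact (ModuleCat.epi_iff_surjective _).2 hε
      all_goals rfl
    · rw [quasiIsoAt_iff_exactAt']
      · rename_i n
        rw [HomologicalComplex.exactAt_iff' _ (n + 1 + 1) (n + 1) n (by simp) (by simp),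
          ShortComplex.moduleCat_exact_iff_range_eq_ker]
        have h1 : (ChainComplex.of X d w).d (n + 1 + 1) (n + 1) = d (n + 1) :=
          ChainComplex.of_d X d (n + 1)
        have h2 : (ChainComplex.of X d w).d (n + 1) n = d n := ChainComplex.of_d X d n
        change LinearMap.range ((ChainComplex.of X d w).d (n + 1 + 1) (n + 1)).hom =
          LinearMap.ker ((ChainComplex.of X d w).d (n + 1) n).hom
        rw [h1, h2]
        exact h n
      · apply ChainComplex.exactAt_succ_single_obj⟩

lemma resolutionOfExact_d (w : ∀ i, d (i + 1) ≫ d i = 0)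
    (h : ∀ i, LinearMap.range (d (i + 1)).hom = LinearMap.ker (d i).hom) (w₀ : d 0 ≫ ε = 0)
    (h₀ : LinearMap.range (d 0).hom = LinearMap.ker ε.hom) (hε : Function.Surjective ε) (i : ℕ) :
    (resolutionOfExact X d Z ε w h w₀ h₀ hε).complex.d (i + 1) i = d i :=
  ChainComplex.of_d X d i

end Generic

instance (i : ℕ) : Projective (ModuleCat.of R (Fin (syzygyRank a (i + 1)) → R)) :=
  (IsProjective.iff_projective _).1 inferInstance

/-- The projective resolution of `R ⧸ a`. -/
noncomputable def syzygyResolution : ProjectiveResolution (ModuleCat.of R (R ⧸ a)) :=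
  resolutionOfExact (fun i => ModuleCat.of R (Fin (syzygyRank a (i + 1)) → R))
    (fun i => ModuleCat.ofHom (syzygyMatrix a (i + 1)).vecMulLinear) _
    (ModuleCat.ofHom (syzygyAug a))
    (fun i => by
      rw [← ModuleCat.ofHom_comp, vecMulLinear_comp_syzygyMatrix]
      rfl)
    (fun i => by
      simp only [ModuleCat.hom_ofHom, range_syzygyMatrix, ker_syzygyMatrix])
    (by
      rw [← ModuleCat.ofHom_comp]
      rw [LinearMap.range_le_ker_iff.1 (by rw [range_syzygyMatrix, ker_syzygyAug])]
      rfl)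
    ((range_syzygyMatrix a 0).trans (ker_syzygyAug a).symm)
    (syzygyAug_surjective a)

lemma finite_homology_iff {R : Type u} [CommRing R] (S : ShortComplex (ModuleCat.{u} R))
    {A₀ A₁ A₂ : Type*} [AddCommGroup A₀] [Module R A₀] [AddCommGroup A₁] [Module R A₁]
    [AddCommGroup A₂] [Module R A₂] (f : A₀ →ₗ[R] A₁) (g : A₁ →ₗ[R] A₂) (e : S.X₂ ≃ₗ[R] A₁)
    (hf : ∀ y, y ∈ LinearMap.range S.f.hom ↔ e y ∈ LinearMap.range f)
    (hg : ∀ y, S.g.hom y = 0 ↔ g (e y) = 0) :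
    Module.Finite R S.homology ↔ Module.Finite R (Coh f g) := by
  let e₁ : LinearMap.ker S.g.hom ≃ₗ[R] LinearMap.ker g :=
    e.ofSubmodules _ _ (by
      ext z
      constructor
      · rintro ⟨y, hy, rfl⟩
        exact (hg y).1 hy
      · intro hz
        exact ⟨e.symm z, (hg _).2 (by simpa using hz), by simp⟩)
  let e₂ : (LinearMap.ker S.g.hom ⧸ LinearMap.range S.moduleCatToCycles) ≃ₗ[R] Coh f g :=
    Submodule.Quotient.equiv _ _ e₁ (by
      ext z
      constructor
      · rintro ⟨_, ⟨y, rfl⟩, rfl⟩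
        exact (hf _).1 ⟨y, rfl⟩
      · intro hz
        obtain ⟨y, rfl⟩ := e₁.surjective z
        obtain ⟨w, hw⟩ := (hf y.1).2 hz
        exact ⟨y, ⟨w, Subtype.ext hw⟩, rfl⟩)
  exact Module.Finite.equiv_iff (S.moduleCatHomologyIso.toLinearEquiv.trans e₂)

/-- Morphisms from a finite free module. -/
noncomputable def homPiEquiv {R : Type u} [CommRing R] (n : ℕ) (M : ModuleCat.{u} R) :
    (ModuleCat.of R (Fin n → R) ⟶ M) ≃ₗ[R] (Fin n → M) :=
  (ModuleCat.homLinearEquiv (S := R)).trans ((Pi.basisFun R (Fin n)).constr R).symm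

lemma homPiEquiv_apply {R : Type u} [CommRing R] (n : ℕ) (M : ModuleCat.{u} R)
    (φ : ModuleCat.of R (Fin n → R) ⟶ M) (j : Fin n) :
    homPiEquiv n M φ j = φ.hom (Pi.single j 1) := by
  simp [homPiEquiv, Module.Basis.constr]
  rfl

lemma homPiEquiv_comp {R : Type u} [CommRing R] {p q : ℕ} (M : ModuleCat.{u} R)
    (D : Matrix (Fin p) (Fin q) R) (φ : ModuleCat.of R (Fin q → R) ⟶ M) :
    homPiEquiv p M (ModuleCat.ofHom D.vecMulLinear ≫ φ) = matAct D M (homPiEquiv q M φ) := by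
  ext j
  rw [homPiEquiv_apply, matAct_apply]
  simp only [homPiEquiv_apply, ModuleCat.hom_comp, ModuleCat.hom_ofHom, LinearMap.comp_apply,
    Matrix.vecMulLinear_apply, Matrix.single_one_vecMul]
  simp_rw [← map_smul]
  rw [← map_sum]
  congr 1
  ext k
  simp [Finset.sum_apply, Pi.single_apply]

/-- The complex of homomorphisms from the resolution. -/
noncomputable abbrev homComplex (M : ModuleCat.{u} R) : CochainComplex (ModuleCat.{u} R) ℕ :=
  (syzygyResolution a).complex.linearYonedaObj R M

/-- The terms of the complex of homomorphisms are products. -/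
noncomputable def homEquiv (M : ModuleCat.{u} R) (i : ℕ) :
    (homComplex a M).X i ≃ₗ[R] (Fin ((resData a).n (i + 1)) → M) :=
  homPiEquiv (syzygyRank a (i + 1)) M

lemma homEquiv_d (M : ModuleCat.{u} R) (i : ℕ) (y : (homComplex a M).X i) :
    homEquiv a M (i + 1) (((homComplex a M).d i (i + 1)).hom y) =
      matAct ((resData a).D (i + 1)) M (homEquiv a M i y) := by
  refine Eq.trans ?_ (homPiEquiv_comp M (syzygyMatrix a (i + 1)) y)
  have h : (syzygyResolution a).complex.d (i + 1) i =
    ModuleCat.ofHom (syzygyMatrix a (i + 1)).vecMulLinear :=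
    resolutionOfExact_d ..
  rw [← h]
  rfl

lemma finite_ext_iff (M : ModuleCat.{u} R) (i : ℕ) :
    Module.Finite R (((Ext R (ModuleCat.{u} R) i).obj
      (Opposite.op (ModuleCat.of R (R ⧸ a)))).obj M) ↔ Module.Finite R ((resData a).H i M) := by
  rw [Module.Finite.equiv_iff ((syzygyResolution a).isoExt (R := R) i M).toLinearEquiv]
  refine finite_homology_iff (HomologicalComplex.sc _ _) _ _ (homEquiv a M i) ?_ ?_
  · cases i with
    | zero =>
      have h1 (j : ℕ) (y : (homComplex a M).X 0) :
          y ∈ LinearMap.range ((homComplex a M).d j 0).hom ↔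
          homEquiv a M 0 y ∈ LinearMap.range (matAct ((resData a).D 0) M) := by
        have h2 : LinearMap.range (matAct ((resData a).D 0) M) = ⊥ := by
          rw [LinearMap.range_eq_bot]
          refine LinearMap.ext fun f => funext fun j => ?_
          have : IsEmpty (Fin ((resData a).n 0)) := by rw [(resData a).n_zero]; infer_instance
          simp [matAct_apply]
        rw [(homComplex a M).shape _ _ (by simp), h2]
        simp
      exact h1 _
    | succ i =>
      have h1 (y : (homComplex a M).X (i + 1)) :
          ∀ j, j = i → (y ∈ LinearMap.range ((homComplex a M).d j (i + 1)).hom ↔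
          homEquiv a M _ y ∈ LinearMap.range (matAct ((resData a).D (i + 1)) M)) := by
        rintro j rfl
        constructor
        · rintro ⟨z, rfl⟩
          exact ⟨_, (homEquiv_d a M j z).symm⟩
        · rintro ⟨z, hz⟩
          obtain ⟨w, rfl⟩ := (homEquiv a M j).surjective z
          refine ⟨w, ?_⟩
          apply (homEquiv a M (j + 1)).injective
          rw [← hz]
          exact homEquiv_d a M j w
      exact fun y => h1 y _ (by simp)
  · have h1 (y : (homComplex a M).X i) : ∀ j, j = i + 1 → (((homComplex a M).d i j).hom y = 0 ↔
          matAct ((resData a).D (i + 1)) M (homEquiv a M i y) = 0) := by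
      rintro j rfl
      rw [← homEquiv_d a M i y]
      exact (LinearEquiv.map_eq_zero_iff _).symm
    exact fun y => h1 y _ (by simp)

end Ext
end Cofinite

namespace Cofinite

open Submodule TensorProduct

section CohEquiv

variable {R : Type*} [CommRing R] {A₀ A₁ A₂ B₀ B₁ B₂ : Type*}
  [AddCommGroup A₀] [Module R A₀] [AddCommGroup A₁] [Module R A₁] [AddCommGroup A₂] [Module R A₂]
  [AddCommGroup B₀] [Module R B₀] [AddCommGroup B₁] [Module R B₁] [AddCommGroup B₂] [Module R B₂]

/-- Isomorphic complexes have isomorphic homology. -/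
def cohEquiv {f : A₀ →ₗ[R] A₁} {g : A₁ →ₗ[R] A₂} {f' : B₀ →ₗ[R] B₁} {g' : B₁ →ₗ[R] B₂}
    (e₀ : A₀ ≃ₗ[R] B₀) (e₁ : A₁ ≃ₗ[R] B₁) (e₂ : A₂ ≃ₗ[R] B₂)
    (h₀ : e₁.toLinearMap ∘ₗ f = f' ∘ₗ e₀.toLinearMap)
    (h₁ : e₂.toLinearMap ∘ₗ g = g' ∘ₗ e₁.toLinearMap) : Coh f g ≃ₗ[R] Coh f' g' :=
  LinearEquiv.ofLinearMap (cohMap e₀.toLinearMap e₁.toLinearMap e₂.toLinearMap h₀ h₁)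
    (cohMap e₀.symm.toLinearMap e₁.symm.toLinearMap e₂.symm.toLinearMap
      (LinearMap.ext fun x => by
        have := LinearMap.congr_fun h₀ (e₀.symm x)
        simp at this ⊢
        rw [← this]; simp)
      (LinearMap.ext fun x => by
        have := LinearMap.congr_fun h₁ (e₁.symm x)
        simp at this ⊢
        rw [← this]; simp))
    (LinearMap.ext fun z => by
      induction z using coh_ind with | h b hb => ?_
      simp [cohMap, LinearMap.restrict_apply])
    (LinearMap.ext fun z => by
      induction z using coh_ind with | h b hb => ?_
      simp [cohMap, LinearMap.restrict_apply])

end CohEquiv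

section BaseChange

variable {R : Type*} [CommRing R] (A : Type*) [CommRing A] [Algebra R A]

lemma nonempty_coh_baseChange [Module.Flat R A] {X Y Z : Type*} [AddCommGroup X] [Module R X]
    [AddCommGroup Y] [Module R Y] [AddCommGroup Z] [Module R Z]
    (f : X →ₗ[R] Y) (g : Y →ₗ[R] Z) (hfg : g ∘ₗ f = 0) :
    Nonempty (A ⊗[R] Coh f g ≃ₗ[A] Coh (f.baseChange A) (g.baseChange A)) := by
  let i : LinearMap.ker g →ₗ[R] Y := (LinearMap.ker g).subtype
  let f₀ : X →ₗ[R] LinearMap.ker g := f.codRestrict _ (LinearMap.congr_fun hfg)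
  have hf₀ : i ∘ₗ f₀ = f := rfl
  have hi : Function.Injective (i.baseChange A) :=
    Module.Flat.lTensor_preserves_injective_linearMap (M := A) i (injective_subtype _)
  have hex : Function.Exact (i.baseChange A) (g.baseChange A) :=
    Module.Flat.lTensor_exact A (f := i) (g := g) (LinearMap.exact_subtype_ker_map g)
  let α : A ⊗[R] LinearMap.ker g →ₗ[A] A ⊗[R] Coh f g := (mkQ _).baseChange A
  have hα : Function.Surjective α := LinearMap.lTensor_surjective A (mkQ_surjective _)
  have hαex : Function.Exact (f₀.baseChange A) α := by
    refine lTensor_exact A (f := f₀)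
      (g := mkQ ((LinearMap.range f).comap (LinearMap.ker g).subtype))
      (LinearMap.exact_iff.2 ?_) (mkQ_surjective _)
    rw [ker_mkQ]
    ext ⟨y, hy⟩
    simp only [mem_comap, subtype_apply, LinearMap.mem_range, Subtype.ext_iff]
    rfl
  have hcomp (p) : g.baseChange A (i.baseChange A p) = 0 := hex.apply_apply_eq_zero p
  let β₀ : A ⊗[R] LinearMap.ker g →ₗ[A] LinearMap.ker (g.baseChange A) :=
    (i.baseChange A).codRestrict _ hcomp
  let β : A ⊗[R] LinearMap.ker g →ₗ[A] Coh (f.baseChange A) (g.baseChange A) := mkQ _ ∘ₗ β₀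
  have hβ : Function.Surjective β := by
    refine (mkQ_surjective _).comp fun y => ?_
    obtain ⟨p, hp⟩ := (hex y.1).1 y.2
    exact ⟨p, Subtype.ext hp⟩
  have hβ0 (p) : β p = 0 ↔ ∃ x, f.baseChange A x = i.baseChange A p := coh_mk_eq_zero (hcomp p)
  have hker : LinearMap.ker α = LinearMap.ker β := by
    ext p
    rw [LinearMap.mem_ker, LinearMap.mem_ker, hβ0, hαex p, Set.mem_range]
    refine exists_congr fun x => ?_
    rw [← hf₀, LinearMap.baseChange_comp, LinearMap.comp_apply, hi.eq_iff]
  exact ⟨(α.quotKerEquivOfSurjective hα).symm.trans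
    ((quotEquivOfEq _ _ hker).trans (β.quotKerEquivOfSurjective hβ))⟩

lemma piRight_matAct {p q : ℕ} (D : Matrix (Fin p) (Fin q) R) (M : Type*) [AddCommGroup M]
    [Module R M] :
    (TensorProduct.piRight R A A fun _ : Fin p => M).toLinearMap ∘ₗ (matAct D M).baseChange A =
      matAct (D.map (algebraMap R A)) (A ⊗[R] M) ∘ₗ
        (TensorProduct.piRight R A A fun _ : Fin q => M).toLinearMap := by
  ext f
  simp [matAct_apply, TensorProduct.tmul_sum, TensorProduct.tmul_smul]

namespace ResData

/-- Base change of a resolution. -/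
def baseChange {a : Ideal R} (𝒟 : ResData a) : ResData (a.map (algebraMap R A)) where
  n := 𝒟.n
  n_zero := 𝒟.n_zero
  n_one := 𝒟.n_one
  D i := (𝒟.D i).map (algebraMap R A)
  D_mul i := by rw [← Matrix.map_mul, 𝒟.D_mul]; simp
  span_D := by
    have h : a.map (algebraMap R A) =
        (Ideal.span {x | ∃ j k, x = 𝒟.D 1 j k}).map (algebraMap R A) := by rw [𝒟.span_D]
    rw [h, Ideal.map_span]
    congr 1
    ext x
    constructor
    · rintro ⟨j, k, rfl⟩; exact ⟨_, ⟨j, k, rfl⟩, rfl⟩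
    · rintro ⟨_, ⟨j, k, rfl⟩, rfl⟩; exact ⟨j, k, rfl⟩
  homotopy x hx := by
    induction hx using Submodule.span_induction with
    | mem x hx =>
      obtain ⟨r, hr, rfl⟩ := hx
      obtain ⟨h, hh⟩ := 𝒟.homotopy r hr
      refine ⟨fun i => (h i).map (algebraMap R A), fun i => ?_⟩
      rw [← Matrix.map_mul, ← Matrix.map_mul, ← Matrix.map_add _ (map_add _), ← hh i]
      ext j k
      simp [Matrix.one_apply, apply_ite (algebraMap R A)]
    | zero => exact ⟨fun i => 0, by simp⟩
    | add x y _ _ hx hy =>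
      obtain ⟨h, hh⟩ := hx
      obtain ⟨h', hh'⟩ := hy
      refine ⟨fun i => h i + h' i, fun i => ?_⟩
      rw [add_smul, hh, hh', Matrix.add_mul, Matrix.mul_add]
      abel
    | smul c x _ hx =>
      obtain ⟨h, hh⟩ := hx
      refine ⟨fun i => c • h i, fun i => ?_⟩
      rw [smul_assoc, hh, smul_add, Matrix.smul_mul, Matrix.mul_smul]

lemma nonempty_baseChange_H [Module.Flat R A] {a : Ideal R} (𝒟 : ResData a) (M : Type*)
    [AddCommGroup M] [Module R M] (i : ℕ) :
    Nonempty (A ⊗[R] 𝒟.H i M ≃ₗ[A] (𝒟.baseChange A).H i (A ⊗[R] M)) := by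
  obtain ⟨e⟩ := nonempty_coh_baseChange A _ _ (𝒟.matAct_D_comp (M := M) i)
  exact ⟨e.trans (cohEquiv _ _ _ (piRight_matAct A (𝒟.D i) M) (piRight_matAct A (𝒟.D (i + 1)) M))⟩

end ResData

lemma FGUpTo.finite_baseChange {S : Submonoid R} (hS : ∀ s ∈ S, IsUnit (algebraMap R A s))
    {X : Type*} [AddCommGroup X] [Module R X] (h : FGUpTo S X) : Module.Finite A (A ⊗[R] X) := by
  obtain ⟨N, hN, s, hs, h⟩ := h
  have : Module.Finite R N := .of_fg hN
  refine .of_surjective (N.subtype.baseChange A) fun z => ?_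
  induction z using TensorProduct.induction_on with
  | zero => exact ⟨0, map_zero _⟩
  | add x y hx hy =>
    obtain ⟨x, rfl⟩ := hx
    obtain ⟨y, rfl⟩ := hy
    exact ⟨x + y, map_add _ _ _⟩
  | tmul c x =>
    obtain ⟨k, hk⟩ := h x
    obtain ⟨v, hv⟩ := ((hS s hs).pow k).exists_left_inv
    refine ⟨(c * v) ⊗ₜ ⟨_, hk⟩, ?_⟩
    rw [LinearMap.baseChange_tmul]
    simp only [subtype_apply]
    rw [← TensorProduct.smul_tmul, Algebra.smul_def, map_pow]
    congr 1
    rw [mul_comm, mul_assoc, hv, mul_one]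

/-- Finite generation after base change is witnessed by a finitely generated submodule. -/
lemma exists_fg_of_finite_baseChange (X : Type*) [AddCommGroup X] [Module R X]
    [Module.Finite A (A ⊗[R] X)] :
    ∃ N : Submodule R X, N.FG ∧ Subsingleton (A ⊗[R] (X ⧸ N)) := by
  have h1 (z : A ⊗[R] X) : ∃ N : Submodule R X, N.FG ∧ N.mkQ.baseChange A z = 0 := by
    induction z using TensorProduct.induction_on with
    | zero => exact ⟨⊥, fg_bot, map_zero _⟩
    | add x y hx hy =>
      obtain ⟨N, hN, hx⟩ := hx
      obtain ⟨K, hK, hy⟩ := hy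
      refine ⟨N ⊔ K, hN.sup hK, ?_⟩
      have e1 : (N ⊔ K).mkQ = factor le_sup_left ∘ₗ N.mkQ := (factor_comp_mk _).symm
      have e2 : (N ⊔ K).mkQ = factor le_sup_right ∘ₗ K.mkQ := (factor_comp_mk _).symm
      rw [map_add]
      nth_rw 1 [e1]
      rw [e2, LinearMap.baseChange_comp, LinearMap.baseChange_comp, LinearMap.comp_apply,
        LinearMap.comp_apply, hx, hy]
      simp
    | tmul c x =>
      refine ⟨R ∙ x, fg_span_singleton x, ?_⟩
      have : (R ∙ x).mkQ x = 0 := by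
        rw [mkQ_apply, Submodule.Quotient.mk_eq_zero]; exact mem_span_singleton_self x
      rw [LinearMap.baseChange_tmul, this, tmul_zero]
  obtain ⟨n, v, hv⟩ := Module.Finite.exists_fin (R := A) (M := A ⊗[R] X)
  choose N hN hNz using fun i => h1 (v i)
  refine ⟨⨆ i, N i, Submodule.fg_iSup _ hN, ?_⟩
  have h2 : ((⨆ i, N i).mkQ).baseChange A = 0 := by
    refine LinearMap.ext_on_range hv fun i => ?_
    have e1 : (⨆ i, N i).mkQ = factor (le_iSup N i) ∘ₗ (N i).mkQ := (factor_comp_mk _).symm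
    rw [e1, LinearMap.baseChange_comp, LinearMap.comp_apply, hNz]
    simp
  refine subsingleton_of_forall_eq 0 fun z => ?_
  obtain ⟨w, rfl⟩ := LinearMap.lTensor_surjective A (mkQ_surjective (⨆ i, N i)) z
  exact LinearMap.congr_fun h2 w

end BaseChange
end Cofinite

namespace Cofinite

open Submodule

section Torsion

variable {R : Type u} [CommRing R] {a : Ideal R} {M N P : Type u} [AddCommGroup M] [Module R M]
  [AddCommGroup N] [Module R N] [AddCommGroup P] [Module R P] {S : Submonoid R}

lemma isTorsionIdeal_of_support [IsNoetherianRing R]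
    (h : Module.support R M ⊆ PrimeSpectrum.zeroLocus (a : Set R)) : IsTorsionIdeal a M := by
  intro m
  have hle : a ≤ (span R {m}).annihilator.radical := by
    rw [Ideal.radical_eq_sInf]
    refine le_sInf fun p hp => ?_
    have := h (Module.mem_support_iff_exists_annihilator (p := ⟨p, hp.2⟩) |>.2 ⟨m, hp.1⟩)
    exact this
  obtain ⟨n, hn⟩ := Ideal.exists_pow_le_of_le_radical_of_fg hle (IsNoetherian.noetherian a)
  exact ⟨n, fun x hx => (mem_annihilator_span_singleton m x).1 (hn hx)⟩

lemma support_subset_of_isTorsionIdeal (h : IsTorsionIdeal a M) :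
    Module.support R M ⊆ PrimeSpectrum.zeroLocus (a : Set R) := by
  intro p hp x hx
  obtain ⟨m, hm⟩ := Module.mem_support_iff_exists_annihilator.1 hp
  obtain ⟨n, hn⟩ := h m
  exact p.2.mem_of_pow_mem n
    (hm ((mem_annihilator_span_singleton m _).2 (hn _ (Ideal.pow_mem_pow hx n))))

lemma isTorsionIdeal_of_injective (f : M →ₗ[R] N) (hf : Function.Injective f)
    (h : IsTorsionIdeal a N) : IsTorsionIdeal a M := fun m => by
  obtain ⟨n, hn⟩ := h (f m)
  exact ⟨n, fun x hx => hf (by rw [map_smul, hn x hx, map_zero])⟩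

lemma isTorsionIdeal_submodule (L : Submodule R M) (h : IsTorsionIdeal a M) :
    IsTorsionIdeal a L := isTorsionIdeal_of_injective L.subtype L.injective_subtype h

lemma isTorsionIdeal_of_surjective (f : M →ₗ[R] N) (hf : Function.Surjective f)
    (h : IsTorsionIdeal a M) : IsTorsionIdeal a N := fun m => by
  obtain ⟨m, rfl⟩ := hf m
  obtain ⟨n, hn⟩ := h m
  exact ⟨n, fun x hx => by rw [← map_smul, hn x hx, map_zero]⟩

lemma isTorsionIdeal_quotient (L : Submodule R M) (h : IsTorsionIdeal a M) :
    IsTorsionIdeal a (M ⧸ L) := isTorsionIdeal_of_surjective L.mkQ L.mkQ_surjective h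

lemma fgUpTo_of_pow_smul_eq_zero [IsNoetherianRing R] (k : ℕ)
    (h : FGUpTo S (torsionBySet R M a)) (hk : ∀ x ∈ a ^ k, ∀ m : M, x • m = 0) : FGUpTo S M := by
  induction k generalizing M with
  | zero =>
    have : Subsingleton M := ⟨fun m n => by
      rw [← one_smul R m, ← one_smul R n, hk 1 (by simp), hk 1 (by simp)]⟩
    exact .of_finite
  | succ k ih =>
    obtain ⟨G, g, hg⟩ := (fg_iff_exists_fin_generating_family (N := a)).1
      (IsNoetherian.noetherian a)
    let L : Submodule R M := torsionBySet R M (a ^ k : Ideal R)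
    have hL : FGUpTo S L := by
      refine ih (h.of_injective (Y := torsionBySet R M a) (LinearMap.codRestrict _
        (L.subtype ∘ₗ (torsionBySet R L a).subtype) fun m => ?_) fun m n hmn => ?_) fun x hx m => ?_
      · rw [mem_torsionBySet_iff]
        exact fun x => congrArg L.subtype ((mem_torsionBySet_iff _ _).1 m.2 x)
      · exact Subtype.ext (Subtype.ext (Subtype.ext_iff.1 hmn :))
      · exact Subtype.ext ((mem_torsionBySet_iff _ _).1 m.2 ⟨x, hx⟩)
    have hmem (x : R) (hx : x ∈ a) (m : M) : x • m ∈ L := by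
      rw [mem_torsionBySet_iff]
      rintro ⟨y, hy⟩
      rw [← mul_smul]
      exact hk _ (by rw [pow_succ]; exact Ideal.mul_mem_mul hy hx) m
    have hga (i : Fin G) : g i ∈ a := hg ▸ subset_span ⟨i, rfl⟩
    let f : M →ₗ[R] (Fin G → L) := LinearMap.pi fun i =>
      LinearMap.codRestrict L (LinearMap.lsmul R M (g i)) fun m => hmem _ (hga i) m
    refine .of_exact (torsionBySet R M a).subtype f ?_ h hL.pi
    intro m
    constructor
    · intro hm
      refine ⟨⟨m, ?_⟩, rfl⟩
      have : a ≤ (span R {m}).annihilator := by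
        rw [← hg, span_le]
        rintro _ ⟨i, rfl⟩
        exact (mem_annihilator_span_singleton _ _).2 (congrArg Subtype.val (congrFun hm i))
      rw [mem_torsionBySet_iff]
      exact fun x => (mem_annihilator_span_singleton _ _).1 (this x.2)
    · rintro ⟨m, rfl⟩
      funext i
      exact Subtype.ext ((mem_torsionBySet_iff _ _).1 m.2 ⟨g i, hga i⟩)

/-- If the `a`-torsion of an `a`-power torsion module is `t`-power torsion, so is the module. -/
lemma exists_pow_smul_eq_zero [IsNoetherianRing R] (t : R) (hM : IsTorsionIdeal a M)
    (h : ∀ m ∈ torsionBySet R M a, ∃ n : ℕ, t ^ n • m = 0) (m : M) : ∃ n : ℕ, t ^ n • m = 0 := by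
  obtain ⟨k, hk⟩ := hM m
  induction k generalizing m with
  | zero => exact ⟨0, by rw [pow_zero, hk 1 (by simp)]⟩
  | succ k ih =>
    obtain ⟨G, g, hg⟩ := (fg_iff_exists_fin_generating_family (N := a ^ k)).1
      (IsNoetherian.noetherian _)
    have hg' (i : Fin G) : g i ∈ a ^ k := hg ▸ subset_span ⟨i, rfl⟩
    choose n hn using fun i => h (g i • m) <| by
      rw [mem_torsionBySet_iff]
      rintro ⟨y, hy⟩
      rw [← mul_smul]
      exact hk _ (by rw [pow_succ']; exact Ideal.mul_mem_mul hy (hg' i))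
    obtain ⟨l, hl⟩ := ih (t ^ (∑ i, n i) • m) fun x hx => by
      have : a ^ k ≤ (span R {t ^ (∑ i, n i) • m}).annihilator := by
        rw [← hg, span_le]
        rintro _ ⟨i, rfl⟩
        refine (mem_annihilator_span_singleton _ _).2 ?_
        rw [smul_comm, ← Nat.sub_add_cancel
          (Finset.single_le_sum (f := n) (fun _ _ => Nat.zero_le _) (Finset.mem_univ i)), pow_add,
          mul_smul, hn, smul_zero]
      exact (mem_annihilator_span_singleton _ _).1 (this hx)
    exact ⟨l + ∑ i, n i, by rw [pow_add, mul_smul, hl]⟩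

lemma fgUpTo_torsionBy_of_surjective [IsNoetherianRing R] (s : R) (f : M →ₗ[R] N)
    (hf : Function.Surjective f) (hK : (LinearMap.ker f).FG)
    (h : FGUpTo S (torsionBy R M s)) : FGUpTo S (torsionBy R N s) := by
  have : Module.Finite R (LinearMap.ker f) := Module.Finite.iff_fg.2 hK
  let L : Submodule R M := (LinearMap.ker f).comap (LinearMap.lsmul R M s)
  have hL : FGUpTo S L := by
    refine .of_exact (X := torsionBy R M s) (Z := LinearMap.ker f)
      (inclusion fun m hm => ?_)
      ((LinearMap.lsmul R M s).restrict (q := LinearMap.ker f) fun m hm => hm) ?_ h .of_finite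
    · have : s • m = 0 := hm
      change f (s • m) = 0
      rw [this, map_zero]
    · intro m
      constructor
      · exact fun hm => ⟨⟨m.1, congrArg Subtype.val hm⟩, rfl⟩
      · rintro ⟨m, rfl⟩
        exact Subtype.ext m.2
  refine hL.of_surjective (f.restrict (q := torsionBy R N s) fun m hm => ?_) fun n => ?_
  · have : f (s • m) = 0 := hm
    rw [mem_torsionBy_iff, ← map_smul, this]
  · obtain ⟨m, hm⟩ := hf n
    refine ⟨⟨m, ?_⟩, Subtype.ext hm⟩
    change f (s • m) = 0
    rw [map_smul, hm]
    exact n.2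

end Torsion

section Artinian

variable {R : Type u} [CommRing R]

lemma isArtinian_of_torsionBy {M : Type u} [AddCommGroup M] [Module R M] (x : R)
    (h : ∀ m : M, ∃ n : ℕ, x ^ n • m = 0) [IsArtinian R (torsionBy R M x)] : IsArtinian R M := by
  refine monotone_stabilizes_iff_artinian.1 fun N => ?_
  have hN {i j : ℕ} (hij : i ≤ j) : OrderDual.ofDual (N j) ≤ OrderDual.ofDual (N i) := N.2 hij
  let T (k n : ℕ) : Submodule R (torsionBy R M x) :=
    ((OrderDual.ofDual (N n) ⊓ torsionBy R M (x ^ (k + 1))).map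
      (LinearMap.lsmul R M (x ^ k))).comap (torsionBy R M x).subtype
  have hT1 (k : ℕ) {n n' : ℕ} (hn : n ≤ n') : T k n' ≤ T k n :=
    comap_mono (Submodule.map_mono (inf_le_inf_right _ (hN hn)))
  have hT2 (k n : ℕ) : T (k + 1) n ≤ T k n := by
    rintro m ⟨y, ⟨hy1, hy2⟩, hy⟩
    refine ⟨x • y, ⟨smul_mem _ _ hy1, ?_⟩, ?_⟩
    · change x ^ (k + 1) • x • y = 0
      rw [← mul_smul, ← pow_succ]
      exact hy2
    · change x ^ k • x • y = m.1
      rw [← mul_smul, ← pow_succ]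
      exact hy
  have hT (k k' n n' : ℕ) (hk : k ≤ k') (hn : n ≤ n') : T k' n' ≤ T k n :=
    (antitone_nat_of_succ_le (f := fun k => T k n') (fun k => hT2 k n') hk).trans (hT1 k hn)
  have stab (f : ℕ → Submodule R (torsionBy R M x)) (hf : Antitone f) :
      ∃ n, ∀ m, n ≤ m → f n = f m :=
    monotone_stabilizes_iff_artinian.2 ‹_› ⟨fun n => OrderDual.toDual (f n), hf⟩
  obtain ⟨j, hj⟩ := stab (fun n => T n n) fun i j hij => hT _ _ _ _ hij hij
  choose c hc using fun k => stab (fun n => T k n) fun i j hij => hT1 k hij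
  have key : ∃ n0, ∀ n, n0 ≤ n → ∀ k, T k n0 = T k n := by
    refine ⟨j + ∑ k ∈ Finset.range j, c k, fun n hn k => ?_⟩
    rcases lt_or_ge k j with hk | hk
    · have : c k ≤ ∑ k ∈ Finset.range j, c k :=
        Finset.single_le_sum (f := c) (fun _ _ => Nat.zero_le _) (Finset.mem_range.2 hk)
      exact (hc k _ (by lia)).symm.trans (hc k n (by lia))
    · refine le_antisymm ?_ (hT1 k hn)
      calc T k _ ≤ T j j := hT _ _ _ _ hk (by lia)
        _ = T (max k n) (max k n) := hj _ (by lia)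
        _ ≤ T k n := hT _ _ _ _ (by lia) (by lia)
  obtain ⟨n0, h0⟩ := key
  refine ⟨n0, fun n hn => le_antisymm (N.2 hn) ?_⟩
  change OrderDual.ofDual (N n0) ≤ OrderDual.ofDual (N n)
  have main (k : ℕ) (m : M) (hm : m ∈ OrderDual.ofDual (N n0)) (hk : x ^ k • m = 0) :
      m ∈ OrderDual.ofDual (N n) := by
    induction k generalizing m with
    | zero => rw [pow_zero, one_smul] at hk; rw [hk]; exact zero_mem _
    | succ k ih =>
      have h1 : (⟨x ^ k • m, by
          rw [mem_torsionBy_iff, ← mul_smul, ← pow_succ', hk]⟩ : torsionBy R M x) ∈ T k n0 :=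
        ⟨m, ⟨hm, hk⟩, rfl⟩
      rw [h0 n hn k] at h1
      obtain ⟨m', ⟨hm', -⟩, h2⟩ := h1
      have h3 : x ^ k • m' = x ^ k • m := h2
      have := ih (m - m') (sub_mem hm (hN hn hm')) (by rw [smul_sub, h3, sub_self])
      simpa using add_mem this hm'
  intro m hm
  obtain ⟨k, hk⟩ := h m
  exact main k m hm hk

lemma isArtinian_of_torsionBySet [IsNoetherianRing R] (a : Ideal R) {M : Type u} [AddCommGroup M]
    [Module R M] (h : IsTorsionIdeal a M) (hM : IsArtinian R (torsionBySet R M a)) :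
    IsArtinian R M := by
  suffices ∀ (b : Ideal R) (hb : b.FG) (M : Type u) [AddCommGroup M] [Module R M],
      IsTorsionIdeal b M → IsArtinian R (torsionBySet R M b) → IsArtinian R M from
    this a (IsNoetherian.noetherian a) M h hM
  intro b hb
  induction b, hb using fg_induction with
  | singleton x =>
    intro M _ _ h hM
    have : torsionBySet R M (span R {x} : Ideal R) = torsionBy R M x :=
      torsionBySet_span_singleton_eq x
    rw [this] at hM
    refine isArtinian_of_torsionBy x fun m => ?_
    obtain ⟨n, hn⟩ := h m
    exact ⟨n, hn _ (Ideal.pow_mem_pow (mem_span_singleton_self x) n)⟩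
  | sup I J _ _ hI hJ =>
    intro M _ _ h hM
    refine hI M (fun m => ?_) (hJ _ ?_ ?_)
    · obtain ⟨n, hn⟩ := h m
      exact ⟨n, fun x hx => hn x (Ideal.pow_right_mono le_sup_left n hx)⟩
    · refine isTorsionIdeal_submodule _ fun m => ?_
      obtain ⟨n, hn⟩ := h m
      exact ⟨n, fun x hx => hn x (Ideal.pow_right_mono le_sup_right n hx)⟩
    · let L := torsionBySet R M (I : Set R)
      refine isArtinian_of_injective (P := torsionBySet R M (I ⊔ J : Ideal R))
        (LinearMap.codRestrict _ (L.subtype ∘ₗ (torsionBySet R L (J : Set R)).subtype) fun m => ?_)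
        fun m n hmn => Subtype.ext (Subtype.ext (Subtype.ext_iff.1 hmn :))
      rw [mem_torsionBySet_iff]
      rintro ⟨z, hz⟩
      obtain ⟨y, hy, w, hw, rfl⟩ := mem_sup.1 hz
      have h1 : y • (m.1.1) = 0 := (mem_torsionBySet_iff _ _).1 m.1.2 ⟨y, hy⟩
      have h2 : w • (m.1.1) = 0 := congrArg L.subtype ((mem_torsionBySet_iff _ _).1 m.2 ⟨w, hw⟩)
      change (y + w) • (m.1.1) = 0
      rw [add_smul, h1, h2, add_zero]

lemma isArtinian_of_support [IsNoetherianRing R] (M : Type u) [AddCommGroup M] [Module R M]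
    [Module.Finite R M] (h : ∀ p ∈ Module.support R M, p.asIdeal.IsMaximal) : IsArtinian R M := by
  let J := Module.annihilator R M
  have : IsArtinianRing (R ⧸ J) := by
    rw [isArtinianRing_iff_isNoetherianRing_krullDimLE_zero]
    refine ⟨inferInstance, Ring.krullDimLE_zero_iff.2 fun I hI => ?_⟩
    have hm := h ⟨I.comap (Ideal.Quotient.mk J), inferInstance⟩
      (Module.mem_support_iff_of_finite.2 fun x hx => by
        rw [Ideal.mem_comap, Ideal.Quotient.eq_zero_iff_mem.2 hx]; exact zero_mem _)
    have := Ideal.map_eq_top_or_isMaximal_of_surjective (Ideal.Quotient.mk J)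
      Ideal.Quotient.mk_surjective hm
    rw [Ideal.map_comap_of_surjective _ Ideal.Quotient.mk_surjective] at this
    exact this.resolve_left hI.ne_top
  let : Module (R ⧸ J) M := Module.IsTorsionBySet.module fun m x =>
    Module.mem_annihilator.1 x.2 m
  have : IsScalarTower R (R ⧸ J) M := ⟨fun r s m => by
    obtain ⟨s, rfl⟩ := Ideal.Quotient.mk_surjective s
    exact mul_smul r s m⟩
  have : Module.Finite (R ⧸ J) M := Module.Finite.of_restrictScalars_finite R _ _
  have hA : IsArtinian (R ⧸ J) M := inferInstance
  have hs : Function.Surjective (algebraMap R (R ⧸ J)) := Ideal.Quotient.mk_surjective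
  exact isArtinian_of_surjective_algebraMap hs

end Artinian

end Cofinite

namespace Cofinite

open Submodule TensorProduct

section BaseChange

variable {R : Type u} [CommRing R] {a : Ideal R} (A : Type u) [CommRing A] [Algebra R A]
  {M : Type u} [AddCommGroup M] [Module R M]

lemma isTorsionIdeal_baseChange (h : IsTorsionIdeal a M) :
    IsTorsionIdeal (a.map (algebraMap R A)) (A ⊗[R] M) := by
  intro z
  induction z using TensorProduct.induction_on with
  | zero => exact ⟨0, fun _ _ => smul_zero _⟩
  | tmul c m =>
    obtain ⟨n, hn⟩ := h m
    refine ⟨n, fun x hx => ?_⟩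
    have : a.map (algebraMap R A) ^ n ≤ (span A {c ⊗ₜ[R] m}).annihilator := by
      rw [← Ideal.map_pow, Ideal.map_le_iff_le_comap]
      intro y hy
      rw [Ideal.mem_comap, mem_annihilator_span_singleton, algebraMap_smul, ← tmul_smul, hn y hy,
        tmul_zero]
    exact (mem_annihilator_span_singleton _ _).1 (this hx)
  | add z w hz hw =>
    obtain ⟨n, hn⟩ := hz
    obtain ⟨k, hk⟩ := hw
    refine ⟨n + k, fun x hx => ?_⟩
    rw [smul_add, hn x (Ideal.pow_le_pow_right (by lia) hx),
      hk x (Ideal.pow_le_pow_right (by lia) hx), add_zero]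

lemma comap_mem_support {P : PrimeSpectrum A} (hP : P ∈ Module.support A (A ⊗[R] M)) :
    PrimeSpectrum.comap (algebraMap R A) P ∈ Module.support R M := by
  by_contra hp
  rw [Module.notMem_support_iff'] at hp
  obtain ⟨z, hz⟩ := Module.mem_support_iff_exists_annihilator.1 hP
  suffices ∃ s : R, algebraMap R A s ∉ P.asIdeal ∧ algebraMap R A s • z = 0 by
    obtain ⟨s, hs, h⟩ := this
    exact hs (hz ((mem_annihilator_span_singleton _ _).2 h))
  clear hz
  induction z using TensorProduct.induction_on with
  | zero => exact ⟨1, by rw [map_one]; exact P.2.one_notMem, smul_zero _⟩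
  | tmul c m =>
    obtain ⟨s, hs, h⟩ := hp m
    exact ⟨s, hs, by rw [algebraMap_smul, ← tmul_smul, h, tmul_zero]⟩
  | add z w hz hw =>
    obtain ⟨s, hs, h⟩ := hz
    obtain ⟨t, ht, h'⟩ := hw
    refine ⟨s * t, by rw [map_mul]; exact P.2.mul_notMem hs ht, ?_⟩
    rw [map_mul, smul_add, mul_comm, mul_smul, h, mul_comm, mul_smul, h', smul_zero, smul_zero,
      add_zero]

lemma finite_quotient_mulRange_baseChange (x : R)
    [Module.Finite A ((A ⊗[R] M) ⧸ ResData.mulRange (algebraMap R A x) (A ⊗[R] M))] :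
    Module.Finite A (A ⊗[R] (M ⧸ ResData.mulRange x M)) := by
  let f : A ⊗[R] M →ₗ[A] A ⊗[R] (M ⧸ ResData.mulRange x M) :=
    (ResData.mulRange x M).mkQ.baseChange A
  have hf : Function.Surjective f :=
    LinearMap.lTensor_surjective A (ResData.mulRange x M).mkQ_surjective
  refine Module.Finite.of_surjective
    (liftQ (ResData.mulRange (algebraMap R A x) (A ⊗[R] M)) f ?_) fun y => ?_
  · rintro _ ⟨z, rfl⟩
    change f (algebraMap R A x • z) = 0
    rw [map_smul]
    generalize f z = w
    induction w using TensorProduct.induction_on with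
    | zero => exact smul_zero _
    | tmul c m =>
      obtain ⟨m, rfl⟩ := (ResData.mulRange x M).mkQ_surjective m
      rw [algebraMap_smul, ← tmul_smul, ← map_smul]
      have : (ResData.mulRange x M).mkQ (x • m) = 0 := by
        rw [mkQ_apply, Quotient.mk_eq_zero]
        exact ⟨m, rfl⟩
      rw [this, tmul_zero]
    | add _ _ h1 h2 => rw [smul_add, h1, h2, add_zero]
  · obtain ⟨z, rfl⟩ := hf y
    exact ⟨mkQ _ z, by simp⟩

lemma finite_torsion_baseChange [IsNoetherianRing R] [Module.Flat R A] {S : Submonoid R}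
    (hS : ∀ s ∈ S, IsUnit (algebraMap R A s)) (h : FGUpTo S (torsionBySet R M a)) :
    Module.Finite A (torsionBySet A (A ⊗[R] M) (a.map (algebraMap R A) : Ideal A)) := by
  have h1 := ((resData a).fgUpTo_zero_iff (M := M)).2 h
  have h2 := h1.finite_baseChange A hS
  obtain ⟨e⟩ := ResData.nonempty_baseChange_H A (resData a) M 0
  obtain ⟨e'⟩ := ((resData a).baseChange A).nonempty_equiv_torsion (M := A ⊗[R] M)
  exact Module.Finite.equiv (e.trans e')

end BaseChange

section Quotient

variable {R : Type u} [CommRing R] [IsNoetherianRing R]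

/-- A quotient `M ⧸ xM` of an Artinian module with finitely generated `a`-torsion is finitely
generated as soon as `x ∈ a` avoids finitely many primes. -/
lemma exists_finset_finite_quotient (a : Ideal R) (M : Type u) [AddCommGroup M] [Module R M]
    [IsArtinian R M] (h : Module.Finite R (torsionBySet R M a)) :
    ∃ s : Finset (Ideal R), (∀ P ∈ s, P.IsPrime ∧ ¬ a ≤ P) ∧
      ∀ x ∈ a, (∀ P ∈ s, x ∉ P) → Module.Finite R (M ⧸ ResData.mulRange x M) := by
  classical
  suffices ∀ N : Submodule R M, ∃ s : Finset (Ideal R), (∀ P ∈ s, P.IsPrime ∧ ¬ a ≤ P) ∧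
      ∀ x ∈ a, (∀ P ∈ s, x ∉ P) → ∃ L : Submodule R M, L.FG ∧
        N ≤ L ⊔ N.map (LinearMap.lsmul R M x) by
    obtain ⟨s, hs, hs'⟩ := this ⊤
    refine ⟨s, hs, fun x hx hxs => ?_⟩
    obtain ⟨L, hL, hL'⟩ := hs' x hx hxs
    refine ⟨(hL.map (ResData.mulRange x M).mkQ).of_le fun z _ => ?_⟩
    obtain ⟨z, rfl⟩ := mkQ_surjective _ z
    obtain ⟨l, hl, n, ⟨m, -, rfl⟩, rfl⟩ := mem_sup.1 (hL' (mem_top (x := z)))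
    refine ⟨l, hl, ?_⟩
    have : (ResData.mulRange x M).mkQ (LinearMap.lsmul R M x m) = 0 := by
      rw [mkQ_apply, Quotient.mk_eq_zero]
      exact ⟨m, rfl⟩
    rw [map_add, this, add_zero]
  intro N
  induction N using IsArtinian.induction with | hgt N ih => ?_
  by_cases hsum : ∃ B C : Submodule R M, B < N ∧ C < N ∧ N ≤ B ⊔ C
  · obtain ⟨B, C, hB, hC, hN⟩ := hsum
    obtain ⟨s, hs, hs'⟩ := ih B hB
    obtain ⟨t, ht, ht'⟩ := ih C hC
    refine ⟨s ∪ t, fun P hP => (Finset.mem_union.1 hP).elim (hs P) (ht P), fun x hx hxs => ?_⟩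
    obtain ⟨L, hL, hL'⟩ := hs' x hx fun P hP => hxs P (Finset.mem_union_left _ hP)
    obtain ⟨K, hK, hK'⟩ := ht' x hx fun P hP => hxs P (Finset.mem_union_right _ hP)
    refine ⟨L ⊔ K, hL.sup hK, hN.trans (sup_le (hL'.trans ?_) (hK'.trans ?_))⟩
    · exact sup_le_sup le_sup_left (Submodule.map_mono hB.le)
    · exact sup_le_sup le_sup_right (Submodule.map_mono hC.le)
  by_cases hbot : N = ⊥
  · exact ⟨∅, by simp, fun x _ _ => ⟨⊥, fg_bot, by simp [hbot]⟩⟩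
  push Not at hsum
  have dich (r : R) : (∃ n : ℕ, ∀ m ∈ N, r ^ n • m = 0) ∨
      ∀ m ∈ N, ∃ m' ∈ N, r • m' = m := by
    obtain ⟨n, hn0, hn⟩ := ((LinearMap.eventually_codisjoint_ker_pow_range_pow
      (LinearMap.lsmul R N r)).and (Filter.eventually_ge_atTop 1)).exists
    have hpow (m : N) : (LinearMap.lsmul R N r ^ n) m = r ^ n • m := by
      clear hn0 hn
      induction n generalizing m with
      | zero => simp
      | succ n ih =>
        rw [pow_succ, Module.End.mul_apply, ih, LinearMap.lsmul_apply, ← mul_smul, ← pow_succ]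
    have hcod := codisjoint_iff.1 hn0
    let B := (LinearMap.ker (LinearMap.lsmul R N r ^ n)).map N.subtype
    let C := (LinearMap.range (LinearMap.lsmul R N r ^ n)).map N.subtype
    have hBC : N ≤ B ⊔ C := by
      rw [← Submodule.map_sup, hcod, Submodule.map_top, range_subtype]
    by_cases hB : B < N
    · have hC : N ≤ C := by
        by_contra hC
        exact hsum B C hB (lt_of_le_not_ge (map_subtype_le _ _) hC) hBC
      right
      intro m hm
      obtain ⟨_, ⟨k, rfl⟩, hk⟩ := hC hm
      refine ⟨r ^ (n - 1) • k.1, smul_mem _ _ k.2, ?_⟩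
      rw [← hk, hpow, ← mul_smul, ← pow_succ', Nat.sub_add_cancel hn]
      rfl
    · left
      refine ⟨n, fun m hm => ?_⟩
      have : N ≤ B := by
        by_contra h
        exact hB (lt_of_le_not_ge (map_subtype_le _ _) h)
      obtain ⟨k, hk, rfl⟩ := this hm
      rw [SetLike.mem_coe, LinearMap.mem_ker, hpow] at hk
      exact congrArg N.subtype hk
  let J : Ideal R := N.annihilator.radical
  have hJ (r : R) : r ∈ J ↔ ∃ n : ℕ, ∀ m ∈ N, r ^ n • m = 0 := by
    simp only [J, Ideal.mem_radical_iff, mem_annihilator]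
  by_cases haJ : a ≤ J
  · obtain ⟨k, hk⟩ := Ideal.exists_pow_le_of_le_radical_of_fg haJ (IsNoetherian.noetherian a)
    have h1 : FGUpTo (⊥ : Submonoid R) (torsionBySet R N (a : Set R)) := by
      refine (fgUpTo_bot_iff.2 h).of_injective (LinearMap.codRestrict _
        (N.subtype ∘ₗ (torsionBySet R N (a : Set R)).subtype) fun m => ?_) fun m n hmn => ?_
      · rw [mem_torsionBySet_iff]
        exact fun x => congrArg N.subtype ((mem_torsionBySet_iff _ _).1 m.2 x)
      · exact Subtype.ext (Subtype.ext (Subtype.ext_iff.1 hmn :))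
    have := fgUpTo_bot_iff.1 (fgUpTo_of_pow_smul_eq_zero k h1 fun x hx m =>
      Subtype.ext (mem_annihilator.1 (hk hx) m.1 m.2))
    exact ⟨∅, by simp, fun x _ _ => ⟨N, Module.Finite.iff_fg.1 this, le_sup_left⟩⟩
  · have hprime : J.IsPrime := by
      refine ⟨fun htop => hbot ?_, fun {x y} hxy => ?_⟩
      · have : (1 : R) ∈ J := htop ▸ mem_top
        obtain ⟨n, hn⟩ := (hJ 1).1 this
        exact (Submodule.eq_bot_iff _).2 fun m hm => by simpa using hn m hm
      · by_contra hcon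
        push Not at hcon
        have hx := (dich x).resolve_left fun h => hcon.1 ((hJ x).2 h)
        have hy := (dich y).resolve_left fun h => hcon.2 ((hJ y).2 h)
        obtain ⟨n, hn⟩ := (hJ _).1 hxy
        have hall (n : ℕ) : ∀ m ∈ N, ∃ m' ∈ N, (x * y) ^ n • m' = m := by
          induction n with
          | zero => exact fun m hm => ⟨m, hm, by simp⟩
          | succ n ih =>
            intro m hm
            obtain ⟨m1, h1, rfl⟩ := ih m hm
            obtain ⟨m2, h2, rfl⟩ := hx m1 h1
            obtain ⟨m3, h3, rfl⟩ := hy m2 h2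
            exact ⟨m3, h3, by rw [pow_succ, mul_smul, mul_smul]⟩
        refine hbot ((Submodule.eq_bot_iff _).2 fun m hm => ?_)
        obtain ⟨m', hm', rfl⟩ := hall n m hm
        exact hn m' hm'
    refine ⟨{J}, by simpa using ⟨hprime, haJ⟩, fun x _ hxJ => ⟨⊥, fg_bot, ?_⟩⟩
    have hx := (dich x).resolve_left fun h => hxJ J (by simp) ((hJ x).2 h)
    rw [bot_sup_eq]
    exact fun m hm => hx m hm

end Quotient

section Coheight

variable {R : Type u} [CommRing R] [IsNoetherianRing R] {a : Ideal R} {M : Type u}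
  [AddCommGroup M] [Module R M] {S : Submonoid R}

omit [IsNoetherianRing R] in
lemma disjoint_comap (P : PrimeSpectrum (Localization S)) :
    Disjoint (S : Set R) (PrimeSpectrum.comap (algebraMap R (Localization S)) P).asIdeal :=
  (IsLocalization.isPrime_iff_isPrime_disjoint S (Localization S) P.asIdeal).1 P.2 |>.2

lemma exists_quotient_isTorsion (d : ℕ)
    (hS : ∀ p : PrimeSpectrum R, Disjoint (S : Set R) p.asIdeal → (d : ℕ∞) ≤ Order.coheight p)
    (hd : ∀ p ∈ Module.support R M, Order.coheight p ≤ d) (hM : IsTorsionIdeal a M)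
    (h : FGUpTo S (torsionBySet R M a)) :
    ∃ x ∈ a, ∃ N : Submodule R (M ⧸ ResData.mulRange x M), N.FG ∧
      ∀ z : M ⧸ ResData.mulRange x M, ∃ s ∈ S, s • z ∈ N := by
  let A := Localization S
  have hSA : ∀ s ∈ S, IsUnit (algebraMap R A s) := fun s hs => IsLocalization.map_units A ⟨s, hs⟩
  have : IsNoetherianRing A := IsLocalization.isNoetherianRing S A inferInstance
  have : Module.Flat R A := IsLocalization.flat A S
  have hfin := finite_torsion_baseChange A hSA h
  have hmax (P : PrimeSpectrum A) (hP : P ∈ Module.support A (A ⊗[R] M)) :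
      P.asIdeal.IsMaximal := by
    by_contra hnm
    obtain ⟨Q, hQ, hle⟩ := Ideal.exists_le_maximal P.asIdeal P.2.ne_top
    have hlt : P < ⟨Q, hQ.isPrime⟩ := by
      refine lt_of_le_of_ne hle fun heq => hnm ?_
      rw [heq]
      exact hQ
    have hlt' : PrimeSpectrum.comap (algebraMap R A) P <
        PrimeSpectrum.comap (algebraMap R A) ⟨Q, hQ.isPrime⟩ := by
      refine lt_of_le_of_ne (Ideal.comap_mono hle) fun heq => hlt.ne ?_
      exact PrimeSpectrum.localization_comap_injective A S heq
    have h1 := hd _ (comap_mem_support A hP)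
    have h2 := hS _ (disjoint_comap ⟨Q, hQ.isPrime⟩)
    exact (h2.trans_lt (Order.coheight_le_coe_iff.1 h1 _ hlt')).false
  have hart : IsArtinian A (A ⊗[R] M) :=
    isArtinian_of_torsionBySet _ (isTorsionIdeal_baseChange A hM)
      (isArtinian_of_support _ fun P hP => hmax P
        (Module.support_subset_of_injective _ (injective_subtype _) hP))
  obtain ⟨s, hs, hs'⟩ := exists_finset_finite_quotient (a.map (algebraMap R A)) (A ⊗[R] M) hfin
  obtain ⟨x, hxa, hxs⟩ : ∃ x ∈ a, ∀ P ∈ s, algebraMap R A x ∉ P := by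
    by_contra! hcon
    have : (a : Set R) ⊆ ⋃ P ∈ (s : Set (Ideal A)), (P.comap (algebraMap R A) : Ideal R) := by
      intro x hx
      obtain ⟨P, hP, hxP⟩ := hcon x hx
      exact Set.mem_biUnion hP hxP
    obtain ⟨P, hP, hle⟩ := (Ideal.subset_union_prime (⊥ : Ideal A) ⊥ fun P hP _ _ => by
      have := (hs P hP).1
      infer_instance).1 this
    exact (hs P hP).2 (Ideal.map_le_iff_le_comap.2 hle)
  have := hs' (algebraMap R A x) (Ideal.mem_map_of_mem _ hxa) hxs
  have := finite_quotient_mulRange_baseChange (R := R) A (M := M) x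
  obtain ⟨N, hN, hsub⟩ := exists_fg_of_finite_baseChange (R := R) A (M ⧸ ResData.mulRange x M)
  refine ⟨x, hxa, N, hN, fun z => ?_⟩
  have h0 : TensorProduct.mk R A _ 1 (N.mkQ z) = 0 := Subsingleton.elim _ _
  obtain ⟨t, ht⟩ := (IsLocalizedModule.eq_zero_iff S (TensorProduct.mk R A _ 1)).1 h0
  refine ⟨t, t.2, ?_⟩
  rw [← Quotient.mk_eq_zero]
  exact ht

end Coheight

end Cofinite

namespace Cofinite

open Submodule ResData

variable {R : Type u} [CommRing R] [IsNoetherianRing R] {a : Ideal R} (𝒟 : ResData a)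
  {S : Submonoid R}

/-- Noetherian induction on the annihilator for the finiteness of the cohomology modules. -/
lemma fgUpTo_H_of_forall_exists (Q : ∀ (M : Type u) [AddCommGroup M] [Module R M], Prop)
    (h : ∀ (M : Type u) [AddCommGroup M] [Module R M], Q M → ∃ x ∈ a, Q (torsionBy R M x) ∧
      ((∀ i, FGUpTo S (𝒟.H i (M ⧸ mulRange x M))) ∨
        (FGUpTo S (𝒟.H 0 M) ∧ FGUpTo S (𝒟.H 1 M) ∧
          (FGUpTo S (𝒟.H 0 (M ⧸ mulRange x M)) → ∀ i, FGUpTo S (𝒟.H i (M ⧸ mulRange x M))))))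
    (M : Type u) [AddCommGroup M] [Module R M] (hM : Q M) (i : ℕ) : FGUpTo S (𝒟.H i M) := by
  suffices ∀ (b : Ideal R) (M : Type u) [AddCommGroup M] [Module R M], Q M →
      (∀ x ∈ b, ∀ m : M, x • m = 0) → ∀ i, FGUpTo S (𝒟.H i M) from
    this ⊥ M hM (fun x hx m => by rw [(mem_bot R).1 hx, zero_smul]) i
  intro b
  induction b using WellFoundedGT.induction with | ind b ih => ?_
  intro M _ _ hM hb i
  obtain ⟨x, hxa, hQ, hx⟩ := h M hM
  by_cases hxb : x ∈ b
  · have hbot : mulRange x M = ⊥ := by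
      rw [LinearMap.range_eq_bot]
      exact LinearMap.ext fun m => hb x hxb m
    let e : (M ⧸ mulRange x M) ≃ₗ[R] M := quotEquivOfEqBot _ hbot
    rcases hx with hx | ⟨h0, -, hx⟩
    · exact 𝒟.fgUpTo_congr i e (hx i)
    · exact 𝒟.fgUpTo_congr i e (hx (𝒟.fgUpTo_congr 0 e.symm h0) i)
  · have hL : ∀ i, FGUpTo S (𝒟.H i (torsionBy R M x)) := by
      refine ih (b ⊔ span R {x}) ?_ _ hQ fun y hy m => ?_
      · exact lt_of_le_of_ne le_sup_left fun heq =>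
          hxb (heq ▸ (le_sup_right : span R {x} ≤ b ⊔ span R {x}) (mem_span_singleton_self x))
      · obtain ⟨z, hz, w, hw, rfl⟩ := mem_sup.1 hy
        obtain ⟨c, rfl⟩ := mem_span_singleton.1 hw
        refine Subtype.ext ?_
        have : x • m.1 = 0 := m.2
        change (z + c * x) • m.1 = 0
        rw [add_smul, mul_smul, this, smul_zero, hb z hz, add_zero]
    rcases hx with hx | ⟨h0, h1, hx⟩
    · exact 𝒟.fgUpTo_of_torsion_of_quotient hxa i (hL i) fun j _ => hx j
    · exact 𝒟.fgUpTo_of_torsion_of_quotient hxa i (hL i) fun j _ =>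
        hx (𝒟.fgUpTo_quotient x 0 h0 h1 (hL 2)) j

lemma fgUpTo_H_of_submodule_quotient {M : Type u} [AddCommGroup M] [Module R M]
    (N : Submodule R M) (i : ℕ) (h1 : FGUpTo S (𝒟.H i N)) (h2 : FGUpTo S (𝒟.H i (M ⧸ N))) :
    FGUpTo S (𝒟.H i M) :=
  𝒟.fgUpTo_middle N.injective_subtype (LinearMap.exact_subtype_mkQ N) N.mkQ_surjective i h1 h2

lemma fgUpTo_H_quotient_of_finite {M : Type u} [AddCommGroup M] [Module R M]
    (N : Submodule R M) (hN : N.FG) (i : ℕ) (h : FGUpTo S (𝒟.H i M)) :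
    FGUpTo S (𝒟.H i (M ⧸ N)) := by
  have : Module.Finite R N := Module.Finite.iff_fg.2 hN
  exact 𝒟.fgUpTo_right N.injective_subtype (LinearMap.exact_subtype_mkQ N) N.mkQ_surjective i h
    (𝒟.fgUpTo_of_fgUpTo _ .of_finite)

omit [IsNoetherianRing R] in
lemma exists_submonoid_of_finite (d : ℕ∞) {T : Set (PrimeSpectrum R)} (hT : T.Finite)
    (hd : ∀ p ∈ T, d ≤ Order.coheight p) :
    ∃ S : Submonoid R, (∀ s, s ∈ S ↔ ∀ p ∈ T, s ∉ p.asIdeal) ∧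
      ∀ p : PrimeSpectrum R, Disjoint (S : Set R) p.asIdeal → d ≤ Order.coheight p := by
  have hmem (s : R) : s ∈ (⨅ p ∈ T, p.asIdeal.primeCompl : Submonoid R) ↔
      ∀ p ∈ T, s ∉ p.asIdeal := by
    simp [Submonoid.mem_iInf, Ideal.mem_primeCompl_iff]
  refine ⟨_, hmem, fun p hp => ?_⟩
  have : (p.asIdeal : Set R) ⊆ ⋃ q ∈ (hT.toFinset : Set (PrimeSpectrum R)), q.asIdeal := by
    intro x hx
    by_contra hcon
    simp only [Set.mem_iUnion, not_exists] at hcon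
    refine Set.disjoint_left.1 hp ((hmem x).2 fun q hq => hcon q (by simpa using hq)) hx
  obtain ⟨q, hq, hle⟩ := (Ideal.subset_union_prime p p fun q _ _ _ => q.2).1 this
  exact (hd q (by simpa using hq)).trans (Order.coheight_anti hle)

lemma finite_setOf_coheight_eq {M : Type u} [AddCommGroup M] [Module R M]
    (hM : IsTorsionIdeal a M) (h : Module.Finite R (torsionBySet R M a)) (d : ℕ)
    (hd : ∀ p ∈ Module.support R M, Order.coheight p ≤ d) :
    {p ∈ Module.support R M | Order.coheight p = d}.Finite := by
  let J := Module.annihilator R (torsionBySet R M (a : Set R))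
  refine Set.Finite.of_finite_image (f := PrimeSpectrum.asIdeal)
    ((Ideal.finite_minimalPrimes_of_isNoetherianRing R J).subset ?_)
    (fun p _ q _ => PrimeSpectrum.ext)
  rintro _ ⟨p, ⟨hp, hpd⟩, rfl⟩
  refine ⟨⟨p.2, fun t ht => ?_⟩, fun q hq hle => ?_⟩
  · obtain ⟨m, hm⟩ := Module.mem_support_iff_exists_annihilator.1 hp
    obtain ⟨n, hn⟩ := exists_pow_smul_eq_zero t hM (fun m hm => ⟨1, by
      rw [pow_one]
      exact congrArg Subtype.val (Module.mem_annihilator.1 ht ⟨m, hm⟩)⟩) m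
    exact p.2.mem_of_pow_mem n (hm ((mem_annihilator_span_singleton _ _).2 hn))
  · by_contra hnot
    have hlt : (⟨q, hq.1⟩ : PrimeSpectrum R) < p := lt_of_le_not_ge hle hnot
    have hq' : (⟨q, hq.1⟩ : PrimeSpectrum R) ∈ Module.support R M :=
      Module.support_subset_of_injective _ (torsionBySet R M (a : Set R)).injective_subtype
        (Module.mem_support_iff_of_finite.2 hq.2)
    exact (Order.coheight_le_coe_iff.1 (hd _ hq') p hlt).ne hpd

omit [IsNoetherianRing R] in
lemma support_quotient_subset {M : Type u} [AddCommGroup M] [Module R M] (N : Submodule R M) :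
    Module.support R (M ⧸ N) ⊆ Module.support R M :=
  Module.support_subset_of_surjective _ N.mkQ_surjective

omit [IsNoetherianRing R] in
lemma support_submodule_subset {M : Type u} [AddCommGroup M] [Module R M] (N : Submodule R M) :
    Module.support R N ⊆ Module.support R M :=
  Module.support_subset_of_injective _ N.injective_subtype

theorem finite_H_of_coheight_le_zero {M : Type u} [AddCommGroup M] [Module R M]
    (hM : IsTorsionIdeal a M) (hd : ∀ p ∈ Module.support R M, Order.coheight p ≤ 0)
    (h0 : FGUpTo (⊥ : Submonoid R) (𝒟.H 0 M)) (i : ℕ) : FGUpTo (⊥ : Submonoid R) (𝒟.H i M) := by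
  refine fgUpTo_H_of_forall_exists 𝒟 (fun M _ _ => IsTorsionIdeal a M ∧
    (∀ p ∈ Module.support R M, Order.coheight p ≤ 0) ∧ FGUpTo (⊥ : Submonoid R) (𝒟.H 0 M))
    ?_ M ⟨hM, hd, h0⟩ i
  rintro M _ _ ⟨hM, hd, h0⟩
  obtain ⟨x, hx, N, hN, hz⟩ := exists_quotient_isTorsion (S := ⊥) 0 (fun p _ => by simp) hd hM
    (𝒟.fgUpTo_zero_iff.1 h0)
  refine ⟨x, hx, ⟨isTorsionIdeal_submodule _ hM,
    fun p hp => hd p (support_submodule_subset _ hp), 𝒟.fgUpTo_torsion_zero x h0⟩,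
    .inl fun i => 𝒟.fgUpTo_of_fgUpTo i (fgUpTo_bot_iff.2 ⟨hN.of_le fun z _ => ?_⟩)⟩
  obtain ⟨s, hs, h⟩ := hz z
  rwa [Submonoid.mem_bot.1 hs, one_smul] at h

omit [IsNoetherianRing R] in
/-- Every prime in the support of an `S`-torsion module meets `S`. -/
lemma exists_mem_of_mem_support {M : Type u} [AddCommGroup M] [Module R M]
    (h : ∀ z : M, ∃ s ∈ S, s • z = 0) {p : PrimeSpectrum R} (hp : p ∈ Module.support R M) :
    ∃ s ∈ S, s ∈ p.asIdeal := by
  obtain ⟨m, hm⟩ := Module.mem_support_iff_exists_annihilator.1 hp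
  obtain ⟨s, hs, h⟩ := h m
  exact ⟨s, hs, hm ((mem_annihilator_span_singleton _ _).2 h)⟩

omit [IsNoetherianRing R] in
lemma exists_smul_eq_zero_of_fg {X : Type u} [AddCommGroup X] [Module R X] {K : Submodule R X}
    (hK : K.FG) (h : ∀ z ∈ K, ∃ s ∈ S, s • z = 0) : ∃ t ∈ S, ∀ z ∈ K, t • z = 0 := by
  induction K, hK using fg_induction with
  | singleton z =>
    obtain ⟨t, ht, h⟩ := h z (mem_span_singleton_self z)
    refine ⟨t, ht, fun w hw => ?_⟩
    obtain ⟨c, rfl⟩ := mem_span_singleton.1 hw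
    rw [smul_comm, h, smul_zero]
  | sup K L _ _ hK hL =>
    obtain ⟨s, hs, h1⟩ := hK fun z hz => h z (mem_sup_left hz)
    obtain ⟨t, ht, h2⟩ := hL fun z hz => h z (mem_sup_right hz)
    refine ⟨s * t, mul_mem hs ht, fun z hz => ?_⟩
    obtain ⟨y, hy, w, hw, rfl⟩ := mem_sup.1 hz
    rw [smul_add, mul_smul s t w, h2 w hw, smul_zero, mul_comm, mul_smul, h1 y hy, smul_zero,
      add_zero]

theorem finite_H_of_coheight_le_one {M : Type u} [AddCommGroup M] [Module R M]
    (hM : IsTorsionIdeal a M) (hd : ∀ p ∈ Module.support R M, Order.coheight p ≤ 1)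
    (h0 : FGUpTo (⊥ : Submonoid R) (𝒟.H 0 M)) (h1 : FGUpTo (⊥ : Submonoid R) (𝒟.H 1 M)) (i : ℕ) :
    FGUpTo (⊥ : Submonoid R) (𝒟.H i M) := by
  refine fgUpTo_H_of_forall_exists 𝒟 (fun M _ _ => IsTorsionIdeal a M ∧
    (∀ p ∈ Module.support R M, Order.coheight p ≤ 1) ∧ FGUpTo (⊥ : Submonoid R) (𝒟.H 0 M) ∧
    FGUpTo (⊥ : Submonoid R) (𝒟.H 1 M)) ?_ M ⟨hM, hd, h0, h1⟩ i
  rintro M _ _ ⟨hM, hd, h0, h1⟩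
  have hfin := 𝒟.fgUpTo_zero_iff.1 h0
  obtain ⟨S, hS, hS1⟩ := exists_submonoid_of_finite 1
    (finite_setOf_coheight_eq hM (fgUpTo_bot_iff.1 hfin) 1 hd) (fun p hp => hp.2.ge)
  obtain ⟨x, hx, N, hN, hz⟩ := exists_quotient_isTorsion 1 hS1 hd hM (hfin.mono bot_le)
  refine ⟨x, hx, ⟨isTorsionIdeal_submodule _ hM,
    fun p hp => hd p (support_submodule_subset _ hp), 𝒟.fgUpTo_torsion_zero x h0,
    𝒟.fgUpTo_torsion_one x h0 h1⟩, .inr ⟨h0, h1, fun hN0 i => ?_⟩⟩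
  have : Module.Finite R N := Module.Finite.iff_fg.2 hN
  refine fgUpTo_H_of_submodule_quotient 𝒟 N i (𝒟.fgUpTo_of_fgUpTo i .of_finite)
    (finite_H_of_coheight_le_zero 𝒟 (isTorsionIdeal_quotient _ (isTorsionIdeal_quotient _ hM))
      (fun p hp => ?_) (fgUpTo_H_quotient_of_finite 𝒟 N hN 0 hN0) i)
  obtain ⟨s, hs, hsp⟩ := exists_mem_of_mem_support (S := S) (fun z => by
    obtain ⟨z, rfl⟩ := N.mkQ_surjective z
    obtain ⟨s, hs, h⟩ := hz z
    exact ⟨s, hs, by rwa [← map_smul, mkQ_apply, Quotient.mk_eq_zero]⟩) hp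
  have hpM := support_quotient_subset _ (support_quotient_subset _ hp)
  have hne : Order.coheight p ≠ 1 := fun h => (hS s).1 hs p ⟨hpM, h⟩ hsp
  exact Order.le_of_lt_add_one (by simpa using lt_of_le_of_ne (hd p hpM) hne)

theorem fgUpTo_H_of_coheight_le_two {M : Type u} [AddCommGroup M] [Module R M]
    (hS : ∀ p : PrimeSpectrum R, Disjoint (S : Set R) p.asIdeal → 2 ≤ Order.coheight p)
    (hM : IsTorsionIdeal a M) (hd : ∀ p ∈ Module.support R M, Order.coheight p ≤ 2)
    (h0 : FGUpTo S (𝒟.H 0 M)) (h1 : FGUpTo S (𝒟.H 1 M)) (i : ℕ) :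
    FGUpTo S (𝒟.H i M) := by
  refine fgUpTo_H_of_forall_exists 𝒟 (fun M _ _ => IsTorsionIdeal a M ∧
    (∀ p ∈ Module.support R M, Order.coheight p ≤ 2) ∧ FGUpTo S (𝒟.H 0 M) ∧
    FGUpTo S (𝒟.H 1 M)) ?_ M ⟨hM, hd, h0, h1⟩ i
  rintro M _ _ ⟨hM, hd, h0, h1⟩
  obtain ⟨x, hx, N, hN, hz⟩ := exists_quotient_isTorsion 2 hS hd hM (𝒟.fgUpTo_zero_iff.1 h0)
  refine ⟨x, hx, ⟨isTorsionIdeal_submodule _ hM,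
    fun p hp => hd p (support_submodule_subset _ hp), 𝒟.fgUpTo_torsion_zero x h0,
    𝒟.fgUpTo_torsion_one x h0 h1⟩, .inr ⟨h0, h1, fun hN0 i => 𝒟.fgUpTo_of_fgUpTo i ?_⟩⟩
  have hz' (z : (M ⧸ mulRange x M) ⧸ N) : ∃ s ∈ S, s • z = 0 := by
    obtain ⟨z, rfl⟩ := N.mkQ_surjective z
    obtain ⟨s, hs, h⟩ := hz z
    exact ⟨s, hs, by rwa [← map_smul, mkQ_apply, Quotient.mk_eq_zero]⟩
  obtain ⟨K, hK, s, hs, hsK⟩ := 𝒟.fgUpTo_zero_iff.1 (fgUpTo_H_quotient_of_finite 𝒟 N hN 0 hN0)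
  obtain ⟨t, ht, htK⟩ := exists_smul_eq_zero_of_fg hK fun z _ => by
    obtain ⟨t, ht, h⟩ := hz' z.1
    exact ⟨t, ht, Subtype.ext h⟩
  refine ⟨N, hN, t * s, mul_mem ht hs, fun z => ?_⟩
  obtain ⟨k, hk⟩ := exists_pow_smul_eq_zero (t * s)
    (isTorsionIdeal_quotient N (isTorsionIdeal_quotient (mulRange x M) hM)) (fun m hm => by
      obtain ⟨k, hk⟩ := hsK ⟨m, hm⟩
      refine ⟨k + 1, ?_⟩
      have h0 : t • s ^ k • m = 0 := congrArg Subtype.val (htK _ hk)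
      rw [mul_pow, mul_smul, pow_succ t, pow_succ' s, mul_smul, mul_smul,
        smul_comm t s (s ^ k • m), h0, smul_zero, smul_zero])
    (N.mkQ z)
  exact ⟨k, by rwa [← map_smul, mkQ_apply, Quotient.mk_eq_zero] at hk⟩

section Ara

/-- Cofiniteness from the first three cohomology modules, for ideals generated up to radical by
two elements. -/
theorem finite_H_of_pow_le_span_pair {x y : R} (hx : x ∈ a) (hy : y ∈ a) {k : ℕ}
    (hk : a ^ k ≤ span R {x, y}) {M : Type u} [AddCommGroup M] [Module R M]
    (h0 : FGUpTo S (𝒟.H 0 M)) (h1 : FGUpTo S (𝒟.H 1 M)) (h2 : FGUpTo S (𝒟.H 2 M)) (i : ℕ) :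
    FGUpTo S (𝒟.H i M) := by
  have key (L : Type u) [AddCommGroup L] [Module R L] (hL : ∀ m : L, x • m = 0)
      (h0 : FGUpTo S (𝒟.H 0 L)) (h1 : FGUpTo S (𝒟.H 1 L)) (i : ℕ) : FGUpTo S (𝒟.H i L) := by
    have hkill (K : Type u) [AddCommGroup K] [Module R K] (h1 : ∀ m : K, x • m = 0)
        (h2 : ∀ m : K, y • m = 0) (h0 : FGUpTo S (𝒟.H 0 K)) : FGUpTo S K := by
      refine fgUpTo_of_pow_smul_eq_zero k (𝒟.fgUpTo_zero_iff.1 h0) fun z hz m => ?_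
      obtain ⟨b, c, rfl⟩ := mem_span_pair.1 (hk hz)
      change (b * x + c * y) • m = 0
      rw [add_smul, mul_smul, mul_smul, h1, h2, smul_zero, smul_zero, add_zero]
    have hLy : FGUpTo S (torsionBy R L y) := hkill _ (fun m => Subtype.ext (hL m))
      (fun m => Subtype.ext m.2) (𝒟.fgUpTo_torsion_zero y h0)
    have hq := 𝒟.fgUpTo_quotient y 0 h0 h1 (𝒟.fgUpTo_of_fgUpTo 2 hLy)
    have hQ : FGUpTo S (L ⧸ mulRange y L) := hkill _
      (fun m => by
        obtain ⟨m, rfl⟩ := mkQ_surjective _ m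
        rw [← map_smul, hL, map_zero])
      (fun m => by
        obtain ⟨m, rfl⟩ := mkQ_surjective _ m
        rw [← map_smul, mkQ_apply, Quotient.mk_eq_zero]
        exact ⟨m, rfl⟩) hq
    exact 𝒟.fgUpTo_of_torsion_of_quotient hy i (𝒟.fgUpTo_of_fgUpTo i hLy)
      fun j _ => 𝒟.fgUpTo_of_fgUpTo j hQ
  have hL := key (torsionBy R M x) (fun m => Subtype.ext m.2) (𝒟.fgUpTo_torsion_zero x h0)
    (𝒟.fgUpTo_torsion_one x h0 h1)
  have hQ := key (M ⧸ mulRange x M)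
    (fun m => by
      obtain ⟨m, rfl⟩ := mkQ_surjective _ m
      rw [← map_smul, mkQ_apply, Quotient.mk_eq_zero]
      exact ⟨m, rfl⟩) (𝒟.fgUpTo_quotient x 0 h0 h1 (hL 2)) (𝒟.fgUpTo_quotient x 1 h1 h2 (hL 3))
  exact 𝒟.fgUpTo_of_torsion_of_quotient hx i (hL i) fun j _ => hQ j

end Ara

end Cofinite

namespace Cofinite

open Submodule ResData TensorProduct

section Support

variable {R : Type u} [CommRing R] {a : Ideal R} (𝒟 : ResData a)

lemma support_H_subset (M : Type u) [AddCommGroup M] [Module R M] (i : ℕ) :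
    Module.support R (𝒟.H i M) ⊆ Module.support R M := by
  intro p hp
  by_contra hpM
  rw [Module.notMem_support_iff'] at hpM
  obtain ⟨z, hz⟩ := Module.mem_support_iff_exists_annihilator.1 hp
  induction z using coh_ind with | h f hf => ?_
  choose s hs h using fun j => hpM (f j)
  refine p.2.prod_mem_iff.not.2 (fun ⟨j, _, hj⟩ => hs j hj)
    (hz ((mem_annihilator_span_singleton _ _).2 ?_) : ∏ j, s j ∈ p.asIdeal)
  have : (∏ j, s j) • f = 0 := funext fun j => by
    obtain ⟨c, hc⟩ := Finset.dvd_prod_of_mem s (Finset.mem_univ j)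
    rw [hc, mul_comm, Pi.smul_apply, mul_smul, h, smul_zero, Pi.zero_apply]
  have h0 : (∏ j, s j) • (⟨f, LinearMap.mem_ker.2 hf⟩ : LinearMap.ker (matAct (𝒟.D (i + 1)) M)) =
      0 := Subtype.ext this
  exact (map_smul (mkQ _) _ _).symm.trans ((congrArg _ h0).trans (map_zero _))

/-- Contraction to a ring where all primes meeting the localization have coheight at least one
drops the coheight. -/
lemma coheight_le_of_comap_le {S : Submonoid R}
    (hS : ∀ p : PrimeSpectrum R, Disjoint (S : Set R) p.asIdeal → 1 ≤ Order.coheight p) (n : ℕ)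
    (P : PrimeSpectrum (Localization S))
    (h : Order.coheight (PrimeSpectrum.comap (algebraMap R (Localization S)) P) ≤ (n + 1 : ℕ)) :
    Order.coheight P ≤ n := by
  induction n generalizing P with
  | zero =>
    refine Order.coheight_le_coe_iff.2 fun Q hQ => ?_
    have hlt : PrimeSpectrum.comap (algebraMap R (Localization S)) P <
        PrimeSpectrum.comap (algebraMap R (Localization S)) Q :=
      lt_of_le_of_ne (Ideal.comap_mono hQ.le) fun heq =>
        hQ.ne (PrimeSpectrum.localization_comap_injective _ S heq)
    have h1 := Order.coheight_le_coe_iff.1 h _ hlt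
    exact absurd ((hS _ (disjoint_comap Q)).trans_lt h1) (by simp)
  | succ n ih =>
    refine Order.coheight_le_coe_iff.2 fun Q hQ => ?_
    have hlt : PrimeSpectrum.comap (algebraMap R (Localization S)) P <
        PrimeSpectrum.comap (algebraMap R (Localization S)) Q :=
      lt_of_le_of_ne (Ideal.comap_mono hQ.le) fun heq =>
        hQ.ne (PrimeSpectrum.localization_comap_injective _ S heq)
    have h1 := Order.coheight_le_coe_iff.1 h _ hlt
    refine (ih Q ?_).trans_lt (by exact_mod_cast Nat.lt_succ_self n)
    exact Order.le_of_lt_add_one (by exact_mod_cast h1)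

end Support

variable {R : Type u} [CommRing R] [IsNoetherianRing R] {a : Ideal R} (𝒟 : ResData a)
  {M : Type u} [AddCommGroup M] [Module R M]

lemma finite_torsionBy_H (hM : IsTorsionIdeal a M)
    (h : ∀ i ≤ 2, FGUpTo (⊥ : Submonoid R) (𝒟.H i M)) (s : R)
    (hs : ∀ p ∈ Module.support R M, s ∈ p.asIdeal → Order.coheight p ≤ 1) (i : ℕ) :
    FGUpTo (⊥ : Submonoid R) (torsionBy R (𝒟.H i M) s) := by
  have hL := finite_H_of_coheight_le_one 𝒟 (M := torsionBy R M s) (isTorsionIdeal_submodule _ hM)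
    (fun p hp => by
      refine hs p (support_submodule_subset _ hp) ?_
      obtain ⟨t, ht, htp⟩ := exists_mem_of_mem_support (S := Submonoid.powers s)
        (fun z => ⟨s, Submonoid.mem_powers s, Subtype.ext z.2⟩) hp
      obtain ⟨n, rfl⟩ := ht
      exact p.2.mem_of_pow_mem n htp)
    (𝒟.fgUpTo_torsion_zero s (h 0 (by lia)))
    (𝒟.fgUpTo_torsion_one s (h 0 (by lia)) (h 1 (by lia)))
  have hN := finite_H_of_coheight_le_one 𝒟 (M := M ⧸ mulRange s M) (isTorsionIdeal_quotient _ hM)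
    (fun p hp => by
      refine hs p (support_quotient_subset _ hp) ?_
      obtain ⟨t, ht, htp⟩ := exists_mem_of_mem_support (S := Submonoid.powers s)
        (fun z => ⟨s, Submonoid.mem_powers s, by
          obtain ⟨m, rfl⟩ := mkQ_surjective _ z
          rw [← map_smul, mkQ_apply, Quotient.mk_eq_zero]
          exact ⟨m, rfl⟩⟩) hp
      obtain ⟨n, rfl⟩ := ht
      exact p.2.mem_of_pow_mem n htp)
    (𝒟.fgUpTo_quotient s 0 (h 0 (by lia)) (h 1 (by lia)) (hL 2))
    (𝒟.fgUpTo_quotient s 1 (h 1 (by lia)) (h 2 (by lia)) (hL 3))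
  exact 𝒟.fgUpTo_H_torsionBy s i (hL i) fun j _ => hN j

omit [IsNoetherianRing R] in
lemma isTorsionIdeal_span_singleton {s : R} (h : ∀ z : M, ∃ n : ℕ, s ^ n • z = 0) :
    IsTorsionIdeal (Ideal.span {s}) M := fun z => by
  obtain ⟨n, hn⟩ := h z
  refine ⟨n, fun x hx => ?_⟩
  rw [Ideal.span_singleton_pow] at hx
  obtain ⟨c, rfl⟩ := Ideal.mem_span_singleton'.1 hx
  rw [mul_smul, hn, smul_zero]

lemma finite_torsionBySet_H_quotient (hM : IsTorsionIdeal a M)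
    (h : ∀ i ≤ 2, FGUpTo (⊥ : Submonoid R) (𝒟.H i M)) (s : R)
    (hs : ∀ p ∈ Module.support R M, s ∈ p.asIdeal → Order.coheight p ≤ 1) (i : ℕ)
    (N : Submodule R (𝒟.H i M)) (hN : N.FG) :
    Module.Finite R (torsionBySet R (𝒟.H i M ⧸ N) (Ideal.span {s} : Ideal R)) := by
  have : torsionBySet R (𝒟.H i M ⧸ N) (Ideal.span {s} : Ideal R) = torsionBy R (𝒟.H i M ⧸ N) s :=
    torsionBySet_span_singleton_eq s
  rw [this, ← fgUpTo_bot_iff]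
  exact fgUpTo_torsionBy_of_surjective s N.mkQ N.mkQ_surjective (by rwa [ker_mkQ])
    (finite_torsionBy_H 𝒟 hM h s hs i)

omit [IsNoetherianRing R] in
/-- An element outside the primes of maximal coheight. -/
lemma coheight_le_of_notMem {d : ℕ} (hd : ∀ p ∈ Module.support R M, Order.coheight p ≤ (d + 1 : ℕ))
    {s : R} (hs : ∀ p ∈ {p ∈ Module.support R M | Order.coheight p = (d + 1 : ℕ)}, s ∉ p.asIdeal)
    {p : PrimeSpectrum R} (hp : p ∈ Module.support R M) (hsp : s ∈ p.asIdeal) :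
    Order.coheight p ≤ d := by
  refine Order.le_of_lt_add_one ?_
  exact_mod_cast lt_of_le_of_ne (hd p hp) fun h => hs p ⟨hp, h⟩ hsp

lemma exists_submodule_H (hM : IsTorsionIdeal a M)
    (hd : ∀ p ∈ Module.support R M, Order.coheight p ≤ 2)
    (h : ∀ i ≤ 2, FGUpTo (⊥ : Submonoid R) (𝒟.H i M)) (i : ℕ) :
    ∃ s : R, (∀ p ∈ Module.support R M, s ∈ p.asIdeal → Order.coheight p ≤ 1) ∧
      ∃ N : Submodule R (𝒟.H i M), N.FG ∧ (∀ z : 𝒟.H i M ⧸ N, ∃ n : ℕ, s ^ n • z = 0) ∧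
        ∀ p ∈ Module.support R (𝒟.H i M ⧸ N), Order.coheight p ≤ 0 := by
  obtain ⟨S, hS, hS2⟩ := exists_submonoid_of_finite 2
    (finite_setOf_coheight_eq hM (fgUpTo_bot_iff.1 (𝒟.fgUpTo_zero_iff.1 (h 0 (by lia)))) 2 hd)
    (fun p hp => hp.2.ge)
  obtain ⟨N, hN, s, hs, hsN⟩ := fgUpTo_H_of_coheight_le_two 𝒟 hS2 hM hd
    ((h 0 (by lia)).mono bot_le) ((h 1 (by lia)).mono bot_le) i
  have hs1 : ∀ p ∈ Module.support R M, s ∈ p.asIdeal → Order.coheight p ≤ 1 := fun p hp hsp =>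
    coheight_le_of_notMem (d := 1) hd ((hS s).1 hs) hp hsp
  refine ⟨s, hs1, ?_⟩
  have hsup (N : Submodule R (𝒟.H i M)) :
      Module.support R (𝒟.H i M ⧸ N) ⊆ Module.support R M :=
    (support_quotient_subset N).trans (support_H_subset 𝒟 M i)
  have hpow (z : 𝒟.H i M ⧸ N) : ∃ n : ℕ, s ^ n • z = 0 := by
    obtain ⟨z, rfl⟩ := N.mkQ_surjective z
    obtain ⟨n, hn⟩ := hsN z
    exact ⟨n, by rwa [← map_smul, mkQ_apply, Quotient.mk_eq_zero]⟩
  have hE1 : ∀ p ∈ Module.support R (𝒟.H i M ⧸ N), Order.coheight p ≤ 1 := by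
    intro p hp
    refine hs1 p (hsup N hp) ?_
    obtain ⟨t, ht, htp⟩ := exists_mem_of_mem_support (S := Submonoid.powers s) (fun z => by
      obtain ⟨n, hn⟩ := hpow z
      exact ⟨s ^ n, ⟨n, rfl⟩, hn⟩) hp
    obtain ⟨n, rfl⟩ := ht
    exact p.2.mem_of_pow_mem n htp
  have htor := isTorsionIdeal_span_singleton hpow
  have hfin := finite_torsionBySet_H_quotient 𝒟 hM h s hs1 i N hN
  obtain ⟨T, hT, hT1⟩ := exists_submonoid_of_finite 1
    (finite_setOf_coheight_eq htor hfin 1 hE1) (fun p hp => hp.2.ge)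
  let A := Localization T
  have hTA : ∀ s ∈ (⊥ : Submonoid R), IsUnit (algebraMap R A s) := fun s hs => by
    rw [Submonoid.mem_bot.1 hs, map_one]; exact isUnit_one
  have : IsNoetherianRing A := IsLocalization.isNoetherianRing T A inferInstance
  have : Module.Flat R A := IsLocalization.flat A T
  have hA (j : ℕ) (hj : j ≤ 2) : FGUpTo (⊥ : Submonoid A) ((𝒟.baseChange A).H j (A ⊗[R] M)) := by
    have := (h j hj).finite_baseChange A hTA
    obtain ⟨e⟩ := nonempty_baseChange_H A 𝒟 M j
    exact fgUpTo_bot_iff.2 (Module.Finite.equiv e)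
  have hAi := finite_H_of_coheight_le_one (𝒟.baseChange A) (isTorsionIdeal_baseChange A hM)
    (fun P hP => coheight_le_of_comap_le hT1 1 P (hd _ (comap_mem_support A hP)))
    (hA 0 (by lia)) (hA 1 (by lia)) i
  have : Module.Finite A (A ⊗[R] 𝒟.H i M) := by
    have := fgUpTo_bot_iff.1 hAi
    obtain ⟨e⟩ := nonempty_baseChange_H A 𝒟 M i
    exact Module.Finite.equiv e.symm
  obtain ⟨K, hK, hsub⟩ := exists_fg_of_finite_baseChange (R := R) A (𝒟.H i M)
  have hKT (z : 𝒟.H i M ⧸ K) : ∃ t ∈ T, t • z = 0 := by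
    have h0 : TensorProduct.mk R A _ 1 z = 0 := Subsingleton.elim _ _
    obtain ⟨t, ht⟩ := (IsLocalizedModule.eq_zero_iff T (TensorProduct.mk R A _ 1)).1 h0
    exact ⟨t, t.2, ht⟩
  refine ⟨N ⊔ K, hN.sup hK, fun z => ?_, fun p hp => ?_⟩
  · obtain ⟨z, rfl⟩ := mkQ_surjective _ z
    obtain ⟨n, hn⟩ := hsN z
    refine ⟨n, ?_⟩
    rw [← map_smul, mkQ_apply, Quotient.mk_eq_zero]
    exact mem_sup_left hn
  · have hpN : p ∈ Module.support R (𝒟.H i M ⧸ N) :=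
      Module.support_subset_of_surjective _ (factor_surjective (le_sup_left : N ≤ N ⊔ K)) hp
    have hpK : p ∈ Module.support R (𝒟.H i M ⧸ K) :=
      Module.support_subset_of_surjective _ (factor_surjective (le_sup_right : K ≤ N ⊔ K)) hp
    obtain ⟨t, ht, htp⟩ := exists_mem_of_mem_support hKT hpK
    exact coheight_le_of_notMem (d := 0) hE1 ((hT t).1 ht) hpN htp

end Cofinite

namespace Cofinite

section Completion

variable {R : Type u} [CommRing R] [IsNoetherianRing R]

/-- A ring that is complete with respect to an ideal generated by the image of a finite set of
variables, modulo which it is covered by the coefficient ring, is Noetherian. -/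
lemma isNoetherianRing_of_isAdicComplete {S : Type u} [CommRing S] [Algebra R S] (J : Ideal S)
    [IsAdicComplete J S] {n : ℕ} (g : Fin n → S) (hg : Ideal.span (Set.range g) = J)
    (hJ : ∀ y : S, ∃ r : R, y - algebraMap R S r ∈ J) : IsNoetherianRing S := by
  let K := MvPolynomial.idealOfVars (Fin n) R
  let φ : MvPolynomial (Fin n) R →+* S := (MvPolynomial.aeval g : _ →ₐ[R] S)
  have hK : K.map φ = J := by
    rw [← hg, Ideal.map_span, ← Set.range_comp]
    congr 2
    ext j
    simp [φ]
  have hKn (k : ℕ) : K ^ k ≤ (J ^ k).comap φ := by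
    rw [← Ideal.map_le_iff_le_comap, Ideal.map_pow, hK]
  let F (k : ℕ) : AdicCompletion K (MvPolynomial (Fin n) R) →+* S ⧸ J ^ k :=
    (Ideal.quotientMap (J ^ k) φ (hKn k)).comp (AdicCompletion.evalₐ K k : _ →+* _)
  have hF {k l : ℕ} (hle : k ≤ l) : (Ideal.Quotient.factorPow J hle).comp (F l) = F k := by
    ext x
    obtain ⟨x, rfl⟩ := AdicCompletion.mk_surjective _ _ x
    have h1 : Ideal.Quotient.mk (K ^ k) (x.val l) = Ideal.Quotient.mk (K ^ k) (x.val k) := by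
      have := x.2 hle
      rw [SModEq.comm] at this
      have h2 := SModEq.sub_mem.1 this
      refine Ideal.Quotient.eq.2 ?_
      simpa using h2
    have h2 := congrArg (Ideal.quotientMap (J ^ k) φ (hKn k)) h1
    simpa [F] using h2
  let f := IsAdicComplete.liftRingHom J F hF
  have hf (x : MvPolynomial (Fin n) R) : f (algebraMap _ _ x) = φ x := by
    have : IsHausdorff J S := inferInstance
    refine (IsHausdorff.eq_iff_smodEq (I := J)).2 fun k => ?_
    have h1 := IsAdicComplete.mk_liftRingHom J F hF k (algebraMap _ _ x)
    have h2 : F k (algebraMap _ _ x) = Ideal.Quotient.mk (J ^ k) (φ x) := by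
      simp [F]
    rw [SModEq.sub_mem]
    have := Ideal.Quotient.eq.1 (h1.trans h2)
    simpa using this
  let K' := K.map (algebraMap _ (AdicCompletion K (MvPolynomial (Fin n) R)))
  have hK' : K'.map f = J := by
    rw [Ideal.map_map, ← hK]
    congr 1
    exact RingHom.ext hf
  have : IsAdicComplete K' (AdicCompletion K (MvPolynomial (Fin n) R)) :=
    AdicCompletion.isAdicComplete_self _ (MvPolynomial.idealOfVars_fg _ _)
  have : IsHausdorff (K'.map f) S := by rw [hK']; infer_instance
  have hs : Function.Surjective f := by
    refine surjective_of_mk_map_comp_surjective (I := K') f fun y => ?_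
    obtain ⟨y, rfl⟩ := Ideal.Quotient.mk_surjective y
    obtain ⟨r, hr⟩ := hJ y
    refine ⟨algebraMap (MvPolynomial (Fin n) R) _ (MvPolynomial.C r), ?_⟩
    rw [RingHom.comp_apply, hf, Ideal.Quotient.eq, hK', ← neg_mem_iff]
    simpa [φ] using hr
  have : IsNoetherianRing (AdicCompletion K (MvPolynomial (Fin n) R)) :=
    isNoetherianRing_of_ringEquiv _
      (MvPowerSeries.toAdicCompletionAlgEquiv (Fin n) R).toRingEquiv
  exact isNoetherianRing_of_surjective _ _ f hs

lemma isNoetherianRing_adicCompletion (I : Ideal R) : IsNoetherianRing (AdicCompletion I R) := by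
  have := AdicCompletion.isAdicComplete_self I (IsNoetherian.noetherian I)
  obtain ⟨n, g, hg⟩ := Submodule.fg_iff_exists_fin_generating_family.1 (IsNoetherian.noetherian I)
  refine isNoetherianRing_of_isAdicComplete (R := R)
    (I.map (algebraMap R (AdicCompletion I R))) (fun j => algebraMap R _ (g j)) ?_ fun y => ?_
  · rw [← hg, Ideal.submodule_span_eq, Ideal.map_span, ← Set.range_comp]
    rfl
  · obtain ⟨r, hr⟩ := Ideal.Quotient.mk_surjective (AdicCompletion.evalOneₐ I y)
    refine ⟨r, ?_⟩
    rw [← AdicCompletion.ker_evalOneₐ_eq_map I (IsNoetherian.noetherian I),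
      RingHom.mem_ker, map_sub,
      sub_eq_zero]
    exact hr.symm

end Completion

section Coheight

lemma coheight_eq_ringKrullDim_quotient {R : Type u} [CommRing R] (P : PrimeSpectrum R) :
    (Order.coheight P : WithBot ℕ∞) = ringKrullDim (R ⧸ P.asIdeal) := by
  rw [ringKrullDim_quotient, Order.coheight_eq_krullDim_Ici]
  rfl

lemma coheight_le_of_forall {R : Type u} [CommRing R] [IsNoetherianRing R] [IsLocalRing R]
    (P : PrimeSpectrum R) (t : Finset R)
    (ht : (t : Set R) ⊆ IsLocalRing.maximalIdeal R)
    (h : ∀ Q : PrimeSpectrum R, P ≤ Q → (t : Set R) ⊆ Q.asIdeal →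
      Q.asIdeal = IsLocalRing.maximalIdeal R) : Order.coheight P ≤ t.card := by
  classical
  let π := Ideal.Quotient.mk P.asIdeal
  have hπ : Function.Surjective π := Ideal.Quotient.mk_surjective
  have : IsLocalRing (R ⧸ P.asIdeal) := IsLocalRing.of_surjective' π hπ
  have hmin : IsLocalRing.maximalIdeal (R ⧸ P.asIdeal) ∈
      (Ideal.span (t.image π : Set (R ⧸ P.asIdeal))).minimalPrimes := by
    have key (Q : Ideal (R ⧸ P.asIdeal)) (hQ : Q.IsPrime)
        (hle : (t.image π : Set (R ⧸ P.asIdeal)) ⊆ Q) :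
        Q = IsLocalRing.maximalIdeal (R ⧸ P.asIdeal) := by
      have h1 := h ⟨Q.comap π, inferInstance⟩
        (Ideal.mk_ker.ge.trans (Ideal.ker_le_comap π))
        (fun x hx => hle (Finset.mem_coe.2 (Finset.mem_image_of_mem π hx)))
      have : (Q.comap π).IsMaximal := by
        rw [show Q.comap π = _ from h1]; infer_instance
      have : Q.IsMaximal := by
        rw [← Ideal.map_comap_of_surjective π hπ Q]
        exact (Ideal.map_eq_top_or_isMaximal_of_surjective π hπ this).resolve_left (by
          rw [Ideal.map_comap_of_surjective π hπ Q]; exact hQ.ne_top)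
      exact IsLocalRing.eq_maximalIdeal this
    refine ⟨⟨inferInstance, ?_⟩, fun Q hQ _ => (key Q hQ.1 (Ideal.span_le.1 hQ.2)).ge⟩
    rw [Ideal.span_le, Finset.coe_image]
    rintro _ ⟨x, hx, rfl⟩
    have : IsLocalHom π := hπ.isLocalHom
    exact (IsLocalRing.mem_maximalIdeal _).2 fun hu =>
      (IsLocalRing.mem_maximalIdeal _).1 (ht hx) (isUnit_of_map_unit π x hu)
  have h2 := Ideal.height_le_card_of_mem_minimalPrimes_span_finset hmin
  have h3 : (Order.coheight P : WithBot ℕ∞) ≤ (t.card : ℕ∞) := by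
    rw [coheight_eq_ringKrullDim_quotient, ← IsLocalRing.maximalIdeal_height_eq_ringKrullDim]
    exact WithBot.coe_le_coe.2 (h2.trans (by exact_mod_cast Finset.card_image_le))
  exact WithBot.coe_le_coe.1 h3

lemma exists_finset_of_coheight_le {R : Type u} [CommRing R] [IsNoetherianRing R]
    (p : PrimeSpectrum R) (m : Ideal R) [m.IsMaximal] (hpm : p.asIdeal ≤ m) {n : ℕ}
    (hp : Order.coheight p ≤ n) : ∃ t : Finset R, t.card ≤ n ∧ (t : Set R) ⊆ m ∧
      ∀ Q : Ideal R, Q.IsPrime → p.asIdeal ≤ Q → Q ≤ m → (t : Set R) ⊆ Q → Q = m := by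
  classical
  let π := Ideal.Quotient.mk p.asIdeal
  have hπ : Function.Surjective π := Ideal.Quotient.mk_surjective
  have hker : RingHom.ker π = p.asIdeal := Ideal.mk_ker
  have hm : (m.map π).IsPrime := Ideal.map_isPrime_of_surjective hπ (hker.le.trans hpm)
  obtain ⟨s, hs, hcard⟩ := (m.map π).exists_finset_card_eq_height_of_isNoetherianRing
  have hcomap (Q : Ideal R) (hQ : p.asIdeal ≤ Q) : (Q.map π).comap π = Q := by
    rw [Ideal.comap_map_of_surjective' π hπ, hker, sup_eq_left.2 hQ]
  have hle : s.card ≤ n := by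
    have h1 : ((m.map π).height : WithBot ℕ∞) ≤ Order.coheight p := by
      rw [coheight_eq_ringKrullDim_quotient]
      exact Ideal.height_le_ringKrullDim_of_ne_top hm.ne_top
    exact_mod_cast hcard.trans_le ((WithBot.coe_le_coe.1 h1).trans hp)
  have hts : ((s.image (Function.surjInv hπ)).image π) = s := by
    rw [Finset.image_image, Finset.image_congr (g := id), Finset.image_id]
    exact fun x _ => Function.surjInv_eq hπ x
  have hsub (Q : Ideal R) (hQ : p.asIdeal ≤ Q) :
      ((s.image (Function.surjInv hπ) : Finset R) : Set R) ⊆ Q ↔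
        Ideal.span (s : Set _) ≤ Q.map π := by
    conv_rhs => rw [← hts, Finset.coe_image, ← Ideal.map_span, Ideal.map_le_iff_le_comap,
      hcomap Q hQ, Ideal.span_le]
  refine ⟨s.image (Function.surjInv hπ), Finset.card_image_le.trans hle, (hsub m hpm).2 hs.1.2,
    fun Q hQ hpQ hQm ht => le_antisymm hQm ?_⟩
  have h1 := hs.2 (y := Q.map π)
    ⟨Ideal.map_isPrime_of_surjective hπ (hker.le.trans hpQ), (hsub Q hpQ).1 ht⟩ (Ideal.map_mono hQm)
  rw [← hcomap Q hpQ, ← hcomap m hpm]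
  exact Ideal.comap_mono h1

lemma coheight_le_of_map_eq_maximalIdeal {R : Type u} [CommRing R] [IsNoetherianRing R]
    {S : Type u} [CommRing S] [IsNoetherianRing S] [IsLocalRing S] [Algebra R S]
    (m : Ideal R) [m.IsMaximal] (hm : m.map (algebraMap R S) = IsLocalRing.maximalIdeal S)
    (P : PrimeSpectrum S) {n : ℕ}
    (h : Order.coheight (PrimeSpectrum.comap (algebraMap R S) P) ≤ n) : Order.coheight P ≤ n := by
  classical
  have hcomap (Q : Ideal S) (hQ : Q.IsPrime) : Q.comap (algebraMap R S) ≤ m := by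
    have h1 : m ≤ (IsLocalRing.maximalIdeal S).comap (algebraMap R S) :=
      Ideal.map_le_iff_le_comap.1 hm.le
    have h2 : (IsLocalRing.maximalIdeal S).comap (algebraMap R S) ≠ ⊤ :=
      (Ideal.IsPrime.comap _).ne_top
    rw [(‹m.IsMaximal›.eq_of_le h2 h1)]
    exact Ideal.comap_mono (IsLocalRing.le_maximalIdeal hQ.ne_top)
  obtain ⟨t, htn, htm, ht⟩ := exists_finset_of_coheight_le _ m (hcomap _ P.2) h
  refine (coheight_le_of_forall P (t.image (algebraMap R S)) ?_ fun Q hPQ htQ => ?_).trans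
    (by exact_mod_cast Finset.card_image_le.trans htn)
  · rw [Finset.coe_image, Set.image_subset_iff]
    exact fun x hx => hm.le (Ideal.mem_map_of_mem _ (htm hx))
  have h3 := ht (Q.asIdeal.comap (algebraMap R S)) inferInstance (Ideal.comap_mono hPQ)
    (hcomap _ Q.2) (fun x hx => htQ (Finset.mem_coe.2 (Finset.mem_image_of_mem _ hx)))
  refine le_antisymm (IsLocalRing.le_maximalIdeal Q.2.ne_top) ?_
  rw [← hm, Ideal.map_le_iff_le_comap, h3]

end Coheight

end Cofinite

namespace Cofinite

open Submodule

section Complete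

variable {R : Type u} [CommRing R]

lemma isPrecomplete_pi {I : Ideal R} [IsPrecomplete I R] (ι : Type) [Finite ι] :
    IsPrecomplete I (ι → R) := by
  classical
  have := Fintype.ofFinite ι
  have key (n : ℕ) (x : ι → R) : x ∈ (I ^ n • ⊤ : Submodule R (ι → R)) ↔ ∀ i, x i ∈ I ^ n := by
    refine ⟨fun hx i => ?_, fun hx => ?_⟩
    · refine smul_induction_on hx (fun r hr y _ => ?_) fun y z hy hz => ?_
      · exact Ideal.mul_mem_right _ _ hr
      · exact add_mem hy hz
    · rw [pi_eq_sum_univ' x]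
      exact sum_mem fun i _ => smul_mem_smul (hx i) mem_top
  refine ⟨fun f hf => ?_⟩
  have h (i : ι) : ∃ L : R, ∀ n, f n i ≡ L [SMOD (I ^ n • ⊤ : Submodule R R)] := by
    refine IsPrecomplete.prec inferInstance fun {m n} hmn => ?_
    have := hf hmn
    rw [SModEq.sub_mem, key] at this
    rw [SModEq.sub_mem]
    simpa using this i
  choose L hL using h
  refine ⟨L, fun n => ?_⟩
  rw [SModEq.sub_mem, key]
  intro i
  have := SModEq.sub_mem.1 (hL i n)
  simpa using this

/-- A Hausdorff module over a complete ring that is finitely generated modulo the ideal is finitely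
generated. -/
lemma finite_of_finite_quotient {I : Ideal R} [IsPrecomplete I R] (T : Type u) [AddCommGroup T]
    [Module R T] [IsHausdorff I T] (h : Module.Finite R (T ⧸ (I • ⊤ : Submodule R T))) :
    Module.Finite R T := by
  obtain ⟨n, g, hg⟩ := Module.Finite.exists_fin' R (T ⧸ (I • ⊤ : Submodule R T))
  choose t ht using fun i : Fin n => mkQ_surjective (I • ⊤ : Submodule R T) (g (Pi.single i 1))
  have := isPrecomplete_pi (I := I) (Fin n)
  have hf : mkQ (I • ⊤) ∘ₗ Fintype.linearCombination R t = g := by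
    refine LinearMap.pi_ext' fun i => LinearMap.ext_ring ?_
    simp [← ht, Fintype.linearCombination_apply_single]
  exact Module.Finite.of_surjective _ (surjective_of_mkQ_comp_surjective (I := I)
    (f := Fintype.linearCombination R t) (by rw [hf]; exact hg))

end Complete

section Tate

variable {R : Type u} [CommRing R] (s : R) (B : Type u) [AddCommGroup B] [Module R B]

/-- The Tate module of `B` at `s`: sequences of compatible division points. -/
def tateModule : Submodule R (ℕ → B) where
  carrier := {b | b 0 = 0 ∧ ∀ n, s • b (n + 1) = b n}
  add_mem' := by
    rintro a b ⟨ha, ha'⟩ ⟨hb, hb'⟩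
    exact ⟨by simp [ha, hb], fun n => by simp [smul_add, ha', hb']⟩
  zero_mem' := ⟨rfl, fun n => by simp⟩
  smul_mem' := by
    rintro r b ⟨hb, hb'⟩
    exact ⟨by simp [hb], fun n => by simp [smul_comm s r, hb']⟩

variable {s B}

lemma pow_smul_tateModule {b : ℕ → B} (hb : b ∈ tateModule s B) (n : ℕ) : s ^ n • b n = 0 := by
  induction n with
  | zero => simpa using hb.1
  | succ n ih => rw [pow_succ, mul_smul, hb.2, ih]

lemma exists_tateModule (hs : ∀ b : B, ∃ c, s • c = b) {b : B} {n : ℕ} (hb : s ^ n • b = 0) :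
    ∃ x ∈ tateModule s B, x n = b := by
  choose σ hσ using hs
  have h (j : ℕ) : s ^ j • σ^[j] b = b := by
    induction j with
    | zero => simp
    | succ j ih => rw [pow_succ, mul_smul, Function.iterate_succ_apply', hσ, ih]
  refine ⟨fun j => s ^ n • σ^[j] b, ⟨hb, fun j => ?_⟩, h n⟩
  rw [smul_comm, Function.iterate_succ_apply', hσ]

lemma smul_eq_zero_of_pow_smul_eq_zero {m : Ideal R} {k : ℕ}
    (hk : ∀ r ∈ m ^ k, ∀ b : B, s • b = 0 → r • b = 0) (j : ℕ) :
    ∀ r ∈ m ^ (k * j), ∀ b : B, s ^ j • b = 0 → r • b = 0 := by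
  induction j with
  | zero => intro r _ b hb; rw [pow_zero, one_smul] at hb; rw [hb, smul_zero]
  | succ j ih =>
    intro r hr b hb
    rw [mul_add, mul_one, pow_add, mul_comm] at hr
    refine Submodule.mul_induction_on hr (fun x hx y hy => ?_) fun x y hx hy => ?_
    · rw [mul_smul]
      refine hk x hx _ ?_
      rw [smul_comm]
      exact ih y hy _ (by rwa [← mul_smul, ← pow_succ])
    · rw [add_smul, hx, hy, add_zero]

lemma isHausdorff_tateModule {m : Ideal R} {k : ℕ}
    (hk : ∀ r ∈ m ^ k, ∀ b : B, s • b = 0 → r • b = 0) : IsHausdorff m (tateModule s B) := by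
  refine ⟨fun x hx => Subtype.ext (funext fun j => ?_)⟩
  have h := hx (k * j)
  rw [SModEq.zero] at h
  refine smul_induction_on (p := fun y : tateModule s B => y.1 j = 0) h
    (fun r hr y _ => ?_) fun y z hy hz => ?_
  · exact smul_eq_zero_of_pow_smul_eq_zero hk j r hr _ (pow_smul_tateModule y.2 j)
  · change y.1 j + z.1 j = 0
    rw [hy, hz, add_zero]

lemma ker_tateModule_le :
    LinearMap.ker (LinearMap.proj 1 ∘ₗ (tateModule s B).subtype) ≤
      (Ideal.span {s} • ⊤ : Submodule R (tateModule s B)) := by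
  rintro ⟨b, hb⟩ h
  have h1 : b 1 = 0 := h
  have : (⟨b, hb⟩ : tateModule s B) = s • ⟨fun n => b (n + 1), h1, fun n => hb.2 (n + 1)⟩ :=
    Subtype.ext (funext fun n => (hb.2 n).symm)
  rw [this]
  exact smul_mem_smul (mem_span_singleton_self s) mem_top

variable [IsNoetherianRing R]

/-- A divisible module over a complete ring with finite `s`-torsion of finite length has at most
one-dimensional annihilator. -/
lemma le_of_annihilator_le {m : Ideal R} [IsPrecomplete m R] (hsm : s ∈ m)
    (hs : ∀ b : B, ∃ c, s • c = b) (htor : ∀ b : B, ∃ n : ℕ, s ^ n • b = 0)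
    (hfin : Module.Finite R (torsionBy R B s)) {k : ℕ}
    (hk : ∀ r ∈ m ^ k, ∀ b : B, s • b = 0 → r • b = 0) (Q : PrimeSpectrum R)
    (hQ : Module.annihilator R B ≤ Q.asIdeal) (hsQ : s ∈ Q.asIdeal) : m ≤ Q.asIdeal := by
  let T := tateModule s B
  let φ : T →ₗ[R] torsionBy R B s := LinearMap.codRestrict _
    (LinearMap.proj 1 ∘ₗ (tateModule s B).subtype) fun b => by
      rw [mem_torsionBy_iff]
      exact (b.2.2 0).trans b.2.1
  have hφ : LinearMap.ker φ ≤ (Ideal.span {s} • ⊤ : Submodule R T) := by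
    rw [LinearMap.ker_codRestrict]; exact ker_tateModule_le
  have hfin1 : Module.Finite R (T ⧸ LinearMap.ker φ) :=
    Module.Finite.equiv φ.quotKerEquivRange.symm
  have := isHausdorff_tateModule hk
  have : Module.Finite R T := by
    refine finite_of_finite_quotient (I := m) T
      (Module.Finite.of_surjective _ (factor_surjective (p := LinearMap.ker φ) (hφ.trans ?_)))
    exact smul_mono_left ((Ideal.span_singleton_le_iff_mem _).2 hsm)
  have hQT : Q ∈ Module.support R T := by
    rw [Module.mem_support_iff_of_finite]
    refine le_trans (fun r hr => Module.mem_annihilator.2 fun b => ?_) hQ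
    obtain ⟨n, hn⟩ := htor b
    obtain ⟨x, hx, rfl⟩ := exists_tateModule hs hn
    exact congrFun (congrArg Subtype.val (Module.mem_annihilator.1 hr ⟨x, hx⟩)) n
  have hQs : Q ∈ Module.support R (T ⧸ (Ideal.span {s} • ⊤ : Submodule R T)) := by
    rw [Module.support_quotient]
    exact ⟨hQT, by simpa using hsQ⟩
  refine Q.2.le_of_pow_le (n := k) (le_trans (fun r hr => Module.mem_annihilator.2 fun z => ?_)
    (Module.mem_support_iff_of_finite.1 hQs))
  obtain ⟨z, rfl⟩ := mkQ_surjective _ z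
  rw [← map_smul, mkQ_apply, Quotient.mk_eq_zero]
  refine hφ (LinearMap.mem_ker.2 ?_)
  rw [map_smul]
  exact Subtype.ext (hk r hr _ (φ z).2)

end Tate

end Cofinite

namespace Cofinite

open Submodule

section Core

variable {R : Type u} [CommRing R] [IsNoetherianRing R] [IsLocalRing R]

lemma exists_pow_le_annihilator (L : Type u) [AddCommGroup L] [Module R L] [Module.Finite R L]
    (h : ∀ p ∈ Module.support R L, p.asIdeal.IsMaximal) :
    ∃ k : ℕ, IsLocalRing.maximalIdeal R ^ k ≤ Module.annihilator R L := by
  refine Ideal.exists_pow_le_of_le_radical_of_fg ?_ (IsNoetherian.noetherian _)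
  rw [Ideal.radical_eq_sInf]
  refine le_sInf fun p ⟨hp, hpp⟩ => ?_
  have := h ⟨p, hpp⟩ (Module.mem_support_iff_of_finite.2 hp)
  exact (IsLocalRing.eq_maximalIdeal this).ge

variable {E : Type u} [AddCommGroup E] [Module R E]

omit [IsNoetherianRing R] [IsLocalRing R] in
/-- A module all of whose proper submodules are finitely generated is either finitely generated or
every ring element acts on it as zero or surjectively. -/
lemma smul_eq_zero_or_surjective (B : Submodule R E) (hB : ∀ C < B, C.FG) (hBfg : ¬ B.FG) (r : R) :
    (∀ b : B, r • b = 0) ∨ ∀ b : B, ∃ c : B, r • c = b := by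
  let f := LinearMap.lsmul R B r
  have hlt (N : Submodule R B) (hN : N ≠ ⊤) : N.FG := by
    have : N.map B.subtype < B := by
      refine lt_of_le_of_ne (map_subtype_le _ _) fun h => hN (eq_top_iff.2 fun b _ => ?_)
      have hb : (b : E) ∈ N.map B.subtype := h.symm.le b.2
      obtain ⟨c, hc, hcb⟩ := mem_map.1 hb
      rwa [← Subtype.ext hcb]
    exact fg_of_fg_map_injective _ B.subtype_injective (hB _ this)
  by_cases h1 : LinearMap.range f = ⊤
  · exact Or.inr fun b => LinearMap.range_eq_top.1 h1 b
  by_cases h2 : LinearMap.ker f = ⊤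
  · exact Or.inl fun b => LinearMap.congr_fun (LinearMap.ker_eq_top.1 h2) b
  refine absurd ?_ hBfg
  rw [← Module.Finite.iff_fg, Module.finite_def]
  refine fg_of_fg_map_of_fg_inf_ker f ?_ ?_
  · rw [Submodule.map_top]; exact hlt _ h1
  · rw [top_inf_eq]; exact hlt _ h2

lemma finite_of_forall_torsionBy [IsAdicComplete (IsLocalRing.maximalIdeal R) R]
    (hE : ∀ p ∈ Module.support R E, p.asIdeal.IsMaximal) {s : R}
    (hs : ∀ z : E, ∃ n : ℕ, s ^ n • z = 0) {T : Set (PrimeSpectrum R)} (hT : T.Finite)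
    (hTd : ∀ p ∈ T, ¬ Order.coheight p ≤ 1) (hsT : ∀ p ∈ T, s ∉ p.asIdeal)
    (h : ∀ r : R, (∀ p ∈ T, r ∉ p.asIdeal) → Module.Finite R (torsionBy R E r)) :
    Module.Finite R E := by
  have hsfin := h s hsT
  have hsE : ∀ p ∈ Module.support R (torsionBy R E s), p.asIdeal.IsMaximal := fun p hp =>
    hE p (support_submodule_subset _ hp)
  have : IsArtinian R (torsionBy R E s) := isArtinian_of_support _ hsE
  have : IsArtinian R E := isArtinian_of_torsionBy s hs
  obtain ⟨k, hk⟩ := exists_pow_le_annihilator _ hsE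
  suffices ∀ B : Submodule R E, B.FG by rw [Module.finite_def]; exact this ⊤
  intro B
  induction B using WellFoundedLT.induction with | ind B ih => ?_
  by_contra hB
  have hdich := smul_eq_zero_or_surjective B ih hB
  have hne : ∃ b : B, b ≠ 0 := by
    by_contra! h0
    exact hB ((eq_bot_iff.2 fun b hb => congrArg Subtype.val (h0 ⟨b, hb⟩) : B = ⊥) ▸ fg_bot)
  have hPp : (Module.annihilator R B).IsPrime := by
    refine ⟨fun htop => ?_, fun {x y} hxy => ?_⟩
    · obtain ⟨b, hb⟩ := hne
      have := Module.mem_annihilator.1 ((Ideal.eq_top_iff_one _).1 htop) b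
      exact hb (by rwa [one_smul] at this)
    · refine (hdich x).imp (fun h1 => Module.mem_annihilator.2 h1) fun h1 =>
        Module.mem_annihilator.2 fun b => ?_
      obtain ⟨c, rfl⟩ := h1 b
      rw [← mul_smul, mul_comm]
      exact Module.mem_annihilator.1 hxy c
  obtain ⟨p, hpT, hp⟩ : ∃ p ∈ T, Module.annihilator R B ≤ p.asIdeal := by
    rw [← Ideal.subset_union_prime_finite hT (f := fun p : PrimeSpectrum R => p.asIdeal)
      ⟨IsLocalRing.maximalIdeal R, inferInstance⟩ ⟨IsLocalRing.maximalIdeal R, inferInstance⟩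
      (fun p _ _ _ => p.2)]
    intro r hr
    by_contra hrT
    have hrfin := h r fun p hp hrp => hrT (Set.mem_biUnion hp hrp)
    have hle : B ≤ torsionBy R E r := fun b hb =>
      congrArg Subtype.val (Module.mem_annihilator.1 hr ⟨b, hb⟩)
    exact hB (FG.of_le (Module.Finite.iff_fg.1 hrfin) hle)
  have hsP : s ∉ Module.annihilator R B := fun h1 => hsT p hpT (hp h1)
  have hsB := (hdich s).resolve_left fun h1 => hsP (Module.mem_annihilator.2 h1)
  have htor (b : B) : ∃ n : ℕ, s ^ n • b = 0 := by
    obtain ⟨n, hn⟩ := hs b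
    exact ⟨n, Subtype.ext hn⟩
  have hsm : s ∈ IsLocalRing.maximalIdeal R := by
    refine (IsLocalRing.mem_maximalIdeal _).2 fun hu => ?_
    obtain ⟨b, hb⟩ := hne
    obtain ⟨n, hn⟩ := htor b
    exact hb ((hu.pow n).smul_eq_zero.1 hn)
  have hsBfin : Module.Finite R (torsionBy R B s) := by
    refine Module.Finite.of_injective (N := torsionBy R E s) (LinearMap.codRestrict _
      (B.subtype ∘ₗ (torsionBy R B s).subtype) fun b => congrArg Subtype.val b.2) fun x y hxy => ?_
    exact Subtype.ext (Subtype.ext (congrArg (Subtype.val : torsionBy R E s → E) hxy))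
  have hkB (r : R) (hr : r ∈ IsLocalRing.maximalIdeal R ^ k) (b : B) (hb : s • b = 0) :
      r • b = 0 :=
    Subtype.ext (congrArg (Subtype.val : torsionBy R E s → E)
      (Module.mem_annihilator.1 (hk hr) ⟨b.1, congrArg Subtype.val hb⟩))
  let P : PrimeSpectrum R := ⟨_, hPp⟩
  have hP1 : Order.coheight P ≤ 1 := by
    refine (coheight_le_of_forall P {s} (by simpa using hsm) fun Q hPQ hsQ => ?_).trans (by simp)
    exact le_antisymm (IsLocalRing.le_maximalIdeal Q.2.ne_top)
      (le_of_annihilator_le hsm hsB htor hsBfin hkB Q hPQ (hsQ (by simp)))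
  exact hTd p hpT ((Order.coheight_anti (show P ≤ p from hp)).trans hP1)

end Core

end Cofinite

namespace Cofinite

open Submodule ResData TensorProduct

section Flat

variable {R : Type u} [CommRing R] (m : Ideal R) (A : Type u) [CommRing A]
  [Algebra R A] [Module.Flat R A]

lemma notMem_support_of_subsingleton_baseChange (hA : m.map (algebraMap R A) ≠ ⊤)
    {X : Type u} [AddCommGroup X] [Module R X] [Subsingleton (A ⊗[R] X)]
    {p : PrimeSpectrum R} (hp : p.asIdeal = m) : p ∉ Module.support R X := by
  intro hpX
  obtain ⟨x, hx⟩ := Module.mem_support_iff_exists_annihilator.1 hpX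
  rw [hp] at hx
  have hinj : Function.Injective ((span R {x}).subtype.lTensor A) :=
    Module.Flat.lTensor_preserves_injective_linearMap _ (span R {x}).injective_subtype
  have : Subsingleton (A ⊗[R] span R {x}) := hinj.subsingleton
  let e := LinearMap.quotKerEquivRange (LinearMap.toSpanSingleton R X x)
  let B := A ⧸ m.map (algebraMap R A)
  have hker : LinearMap.ker (LinearMap.toSpanSingleton R X x) ≤
      LinearMap.ker (Algebra.linearMap R B) := fun r hr => by
    have hrm : r ∈ m := hx ((mem_annihilator_span_singleton _ _).2 (by simpa using hr))
    rw [LinearMap.mem_ker, Algebra.linearMap_apply]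
    exact Ideal.Quotient.eq_zero_iff_mem.2 (Ideal.mem_map_of_mem _ hrm)
  let f : (R ⧸ LinearMap.ker (LinearMap.toSpanSingleton R X x)) →ₗ[R] B :=
    (LinearMap.ker (LinearMap.toSpanSingleton R X x)).liftQ (Algebra.linearMap R B) hker
  let g : span R {x} →ₗ[R] B := f ∘ₗ e.symm.toLinearMap ∘ₗ
    (LinearEquiv.ofEq _ _ (LinearMap.range_toSpanSingleton x).symm).toLinearMap
  have hg : g ⟨x, mem_span_singleton_self x⟩ = 1 := by
    have : e (mkQ _ 1) = LinearEquiv.ofEq _ _ (LinearMap.range_toSpanSingleton x).symm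
        ⟨x, mem_span_singleton_self x⟩ :=
      Subtype.ext (one_smul R x)
    simp only [g, LinearMap.comp_apply, LinearEquiv.coe_coe, ← this, LinearEquiv.symm_apply_apply]
    exact (liftQ_apply _ _ _).trans (map_one (algebraMap R B))
  have h1 : (1 : A) ⊗ₜ[R] (⟨x, mem_span_singleton_self x⟩ : span R {x}) = 0 := Subsingleton.elim _ _
  have h2 := congrArg (g.liftBaseChange A) h1
  rw [LinearMap.liftBaseChange_tmul, hg, one_smul, map_zero] at h2
  have : Nontrivial B := Ideal.Quotient.nontrivial_iff.2 hA
  exact one_ne_zero h2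

end Flat

variable {R : Type u} [CommRing R] [IsNoetherianRing R] {a : Ideal R} (𝒟 : ResData a)
  {M : Type u} [AddCommGroup M] [Module R M]

lemma finite_baseChange_quotient (hM : IsTorsionIdeal a M)
    (hd : ∀ p ∈ Module.support R M, Order.coheight p ≤ 2)
    (h : ∀ i ≤ 2, FGUpTo (⊥ : Submonoid R) (𝒟.H i M)) (i : ℕ) {s : R}
    (hs : ∀ p ∈ Module.support R M, s ∈ p.asIdeal → Order.coheight p ≤ 1)
    {N : Submodule R (𝒟.H i M)} (hN : N.FG)
    (hsN : ∀ z : 𝒟.H i M ⧸ N, ∃ n : ℕ, s ^ n • z = 0)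
    (hE : ∀ p ∈ Module.support R (𝒟.H i M ⧸ N), Order.coheight p ≤ 0)
    (m : Ideal R) [m.IsMaximal] (A : Type u) [CommRing A] [Algebra R A] [Module.Flat R A]
    [IsNoetherianRing A] [IsLocalRing A] [IsAdicComplete (IsLocalRing.maximalIdeal A) A]
    (hA : m.map (algebraMap R A) = IsLocalRing.maximalIdeal A) :
    Module.Finite A (A ⊗[R] (𝒟.H i M ⧸ N)) := by
  have hTA : ∀ s ∈ (⊥ : Submonoid R), IsUnit (algebraMap R A s) := fun s hs => by
    rw [Submonoid.mem_bot.1 hs, map_one]; exact isUnit_one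
  have hH (j : ℕ) (hj : j ≤ 2) : FGUpTo (⊥ : Submonoid A) ((𝒟.baseChange A).H j (A ⊗[R] M)) := by
    have := (h j hj).finite_baseChange A hTA
    obtain ⟨e⟩ := nonempty_baseChange_H A 𝒟 M j
    exact fgUpTo_bot_iff.2 (Module.Finite.equiv e)
  have hMA := isTorsionIdeal_baseChange A hM
  have hdA : ∀ P ∈ Module.support A (A ⊗[R] M), Order.coheight P ≤ 2 := fun P hP =>
    coheight_le_of_map_eq_maximalIdeal m hA P (n := 2) (hd _ (comap_mem_support A hP))
  refine finite_of_forall_torsionBy (s := algebraMap R A s)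
    (T := {P ∈ Module.support A (A ⊗[R] M) | Order.coheight P = 2}) ?_ ?_ ?_ ?_ ?_ ?_
  · intro P hP
    have h0 := coheight_le_of_map_eq_maximalIdeal m hA P (n := 0) (hE _ (comap_mem_support A hP))
    exact PrimeSpectrum.isMax_iff.1 (Order.coheight_eq_zero.1 (le_antisymm h0 bot_le))
  · intro z
    obtain ⟨n, hn⟩ := isTorsionIdeal_baseChange A (isTorsionIdeal_span_singleton hsN) z
    exact ⟨n, hn _ (Ideal.pow_mem_pow (Ideal.mem_map_of_mem _
      (Ideal.mem_span_singleton_self s)) n)⟩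
  · exact finite_setOf_coheight_eq hMA
      (fgUpTo_bot_iff.1 ((𝒟.baseChange A).fgUpTo_zero_iff.1 (hH 0 (by lia)))) 2 hdA
  · intro P hP h1
    rw [hP.2] at h1
    exact absurd h1 (by decide)
  · intro P hP hsP
    have h1 := coheight_le_of_map_eq_maximalIdeal m hA P (n := 1)
      (hs _ (comap_mem_support A hP.1) hsP)
    rw [hP.2] at h1
    exact absurd h1 (by decide)
  · intro r hr
    have h1 := finite_torsionBy_H (𝒟.baseChange A) hMA hH r
      (fun P hP hrP => coheight_le_of_notMem (d := 1) hdA hr hP hrP) i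
    obtain ⟨e⟩ := nonempty_baseChange_H A 𝒟 M i
    refine fgUpTo_bot_iff.1 (fgUpTo_torsionBy_of_surjective r
      (N.mkQ.baseChange A ∘ₗ e.symm.toLinearMap) ?_ ?_ h1)
    · exact (LinearMap.lTensor_surjective A N.mkQ_surjective).comp e.symm.surjective
    · have hk : LinearMap.ker (N.mkQ.baseChange A) = LinearMap.range (N.subtype.baseChange A) :=
        SetLike.ext fun z => (lTensor_exact A (LinearMap.exact_subtype_mkQ N) N.mkQ_surjective) z
      have : Module.Finite R N := Module.Finite.iff_fg.2 hN
      have hke : LinearMap.ker (N.mkQ.baseChange A ∘ₗ e.symm.toLinearMap) =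
          LinearMap.range (e.toLinearMap ∘ₗ N.subtype.baseChange A) := by
        rw [LinearMap.ker_comp, hk, LinearMap.range_comp]
        exact (map_equiv_eq_comap_symm e _).symm
      rw [hke, ← Module.Finite.iff_fg]
      exact Module.Finite.range _

lemma exists_fg_notMem_support (hM : IsTorsionIdeal a M)
    (hd : ∀ p ∈ Module.support R M, Order.coheight p ≤ 2)
    (h : ∀ i ≤ 2, FGUpTo (⊥ : Submonoid R) (𝒟.H i M)) (i : ℕ) {s : R}
    (hs : ∀ p ∈ Module.support R M, s ∈ p.asIdeal → Order.coheight p ≤ 1)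
    {N : Submodule R (𝒟.H i M)} (hN : N.FG)
    (hsN : ∀ z : 𝒟.H i M ⧸ N, ∃ n : ℕ, s ^ n • z = 0)
    (hE : ∀ p ∈ Module.support R (𝒟.H i M ⧸ N), Order.coheight p ≤ 0)
    (p : PrimeSpectrum R) (hp : p.asIdeal.IsMaximal) :
    ∃ K : Submodule R (𝒟.H i M ⧸ N), K.FG ∧ p ∉ Module.support R ((𝒟.H i M ⧸ N) ⧸ K) := by
  let m := p.asIdeal
  let A := AdicCompletion m R
  have hfg : m.FG := IsNoetherian.noetherian m
  have hmax : (m.map (algebraMap R A)).IsMaximal :=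
    AdicCompletion.isMaximal_map_of_le m m le_rfl hfg
  have hcomp : IsAdicComplete (m.map (algebraMap R A)) A := AdicCompletion.isAdicComplete_self m hfg
  have : IsNoetherianRing A := isNoetherianRing_adicCompletion m
  have : IsLocalRing A := isLocalRing_of_isAdicComplete_maximal (m.map (algebraMap R A))
  have hA : m.map (algebraMap R A) = IsLocalRing.maximalIdeal A :=
    IsLocalRing.eq_maximalIdeal hmax
  have : IsAdicComplete (IsLocalRing.maximalIdeal A) A := hA ▸ hcomp
  have := finite_baseChange_quotient 𝒟 hM hd h i hs hN hsN hE m A hA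
  obtain ⟨K, hK, hsub⟩ := exists_fg_of_finite_baseChange (R := R) A (𝒟.H i M ⧸ N)
  exact ⟨K, hK, notMem_support_of_subsingleton_baseChange m A hmax.ne_top rfl⟩

/-- Cofiniteness for torsion modules with support of dimension at most two. -/
theorem finite_H_of_coheight_le_two (hM : IsTorsionIdeal a M)
    (hd : ∀ p ∈ Module.support R M, Order.coheight p ≤ 2)
    (h : ∀ i ≤ 2, FGUpTo (⊥ : Submonoid R) (𝒟.H i M)) (i : ℕ) :
    FGUpTo (⊥ : Submonoid R) (𝒟.H i M) := by
  obtain ⟨s, hs, N, hN, hsN, hE⟩ := exists_submodule_H 𝒟 hM hd h i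
  have hsupp : (Module.support R (𝒟.H i M ⧸ N)).Finite := by
    refine (finite_setOf_coheight_eq (isTorsionIdeal_span_singleton hsN)
      (finite_torsionBySet_H_quotient 𝒟 hM h s hs i N hN) 0 hE).subset fun p hp => ⟨hp, ?_⟩
    exact le_antisymm (hE p hp) bot_le
  have hmax (p : Module.support R (𝒟.H i M ⧸ N)) : p.1.asIdeal.IsMaximal :=
    PrimeSpectrum.isMax_iff.1 (Order.coheight_eq_zero.1 (le_antisymm (hE _ p.2) bot_le))
  choose K hK hpK using fun p : Module.support R (𝒟.H i M ⧸ N) =>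
    exists_fg_notMem_support 𝒟 hM hd h i hs hN hsN hE p.1 (hmax p)
  have := hsupp.to_subtype
  have hfg : (⨆ p, K p).FG := fg_iSup K hK
  have hempty : Module.support R ((𝒟.H i M ⧸ N) ⧸ ⨆ p, K p) = ∅ := by
    refine Set.eq_empty_of_forall_notMem fun p hp => ?_
    have hp' := support_quotient_subset _ hp
    exact hpK ⟨p, hp'⟩ (Module.support_subset_of_surjective _
      (factor_surjective (le_iSup K ⟨p, hp'⟩)) hp)
  rw [Module.support_eq_empty_iff, Submodule.Quotient.subsingleton_iff] at hempty
  have : Module.Finite R (𝒟.H i M ⧸ N) := Module.finite_def.2 (hempty ▸ hfg)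
  have : Module.Finite R N := Module.Finite.iff_fg.2 hN
  exact fgUpTo_bot_iff.2 (Module.Finite.of_submodule_quotient N)

end Cofinite

namespace Cofinite

open Submodule ResData

variable {R : Type u} [CommRing R] [IsNoetherianRing R] {a : Ideal R}

omit [IsNoetherianRing R] in
lemma coheight_le_of_ringKrullDim_quotient_le {n : ℕ} (h : ringKrullDim (R ⧸ a) ≤ n)
    {p : PrimeSpectrum R} (hp : a ≤ p.asIdeal) : Order.coheight p ≤ n := by
  have h1 := coheight_eq_ringKrullDim_quotient p
  have h2 := ringKrullDim_le_of_surjective (Ideal.Quotient.factor hp)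
    (Ideal.Quotient.factor_surjective hp)
  exact_mod_cast h1.trans_le (h2.trans h)

lemma exists_notMem_of_mem_minimalPrimes {p : Ideal R} (hp : p ∈ minimalPrimes R) (ha : a ≤ p) :
    ∃ s ∉ p, ∃ n : ℕ, s ∈ (a ^ n).annihilator := by
  have hprime := hp.1.1
  obtain ⟨G, g, hg⟩ := fg_iff_exists_fin_generating_family.1 (IsNoetherian.noetherian a)
  have key (j : Fin G) : ∃ s ∉ p, ∃ n : ℕ, s * g j ^ n = 0 := by
    by_contra! H
    obtain ⟨q, hq, -, hd⟩ := Ideal.exists_le_prime_disjoint ⊥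
      (p.primeCompl ⊔ Submonoid.powers (g j)) (Set.disjoint_left.2 fun z hz hzW => by
        obtain ⟨s, hs, _, ⟨n, rfl⟩, hsz⟩ := Submonoid.mem_sup.1 hzW
        exact H s hs n (hsz.trans hz))
    have hqp : q ≤ p := fun z hz => by
      by_contra hzp
      exact Set.disjoint_left.1 hd hz (Submonoid.mem_sup_left (S := p.primeCompl) hzp)
    have hj : g j ∈ p := ha (hg ▸ subset_span ⟨j, rfl⟩)
    exact Set.disjoint_left.1 hd (hp.2 ⟨hq, bot_le⟩ hqp hj)
      (Submonoid.mem_sup_right (Submonoid.mem_powers _))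
  choose s hs n hn using key
  have hle : a ≤ (Ideal.span {∏ j, s j}).annihilator.radical := by
    rw [← hg, span_le]
    rintro _ ⟨j, rfl⟩
    refine ⟨n j, (mem_annihilator_span_singleton _ _).2 ?_⟩
    obtain ⟨c, hc⟩ := Finset.dvd_prod_of_mem s (Finset.mem_univ j)
    rw [smul_eq_mul, hc, ← mul_assoc, mul_comm _ (s j), hn, zero_mul]
  obtain ⟨k, hk⟩ := Ideal.exists_pow_le_of_le_radical_of_fg hle (IsNoetherian.noetherian a)
  refine ⟨∏ j, s j, hprime.prod_mem_iff.not.2 fun ⟨j, _, hj⟩ => hs j hj, k,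
    mem_annihilator.2 fun x hx => ?_⟩
  rw [smul_eq_mul, mul_comm]
  exact (mem_annihilator_span_singleton _ _).1 (hk hx)

variable (𝒟 : ResData a) {M : Type u} [AddCommGroup M] [Module R M]

lemma finite_quotient_torsionBySet {I : Ideal R} {n : ℕ} (hI : I ≤ (a ^ n).annihilator)
    (h : FGUpTo (⊥ : Submonoid R) (torsionBySet R M a)) :
    FGUpTo (⊥ : Submonoid R) (M ⧸ torsionBySet R M I) := by
  obtain ⟨G, g, hg⟩ := fg_iff_exists_fin_generating_family.1 (IsNoetherian.noetherian I)
  let L := torsionBySet R M (a ^ n : Ideal R)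
  have hL : FGUpTo (⊥ : Submonoid R) L := by
    refine fgUpTo_of_pow_smul_eq_zero (a := a) n ?_ fun x hx m =>
      Subtype.ext ((mem_torsionBySet_iff _ _).1 m.2 ⟨x, hx⟩)
    refine h.of_injective (L.subtype.restrict (q := torsionBySet R M a) fun z hz => ?_) ?_
    · exact (mem_torsionBySet_iff _ _).2 fun x =>
        congrArg Subtype.val ((mem_torsionBySet_iff _ _).1 hz x)
    · intro z w hzw
      have h1 := congrArg Subtype.val hzw
      exact Subtype.ext (Subtype.ext h1)
  have hgI (j : Fin G) : g j ∈ I := hg ▸ subset_span ⟨j, rfl⟩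
  let f : M →ₗ[R] Fin G → L := LinearMap.pi fun j => (LinearMap.lsmul R M (g j)).codRestrict L
    fun m => (mem_torsionBySet_iff _ _).2 fun x => by
      have := mem_annihilator.1 (hI (hgI j)) x x.2
      rw [smul_eq_mul, mul_comm] at this
      rw [LinearMap.lsmul_apply, smul_smul, this, zero_smul]
  have hf : LinearMap.ker f = torsionBySet R M I := by
    ext m
    rw [← hg, ← torsionBySet_eq_torsionBySet_span, mem_torsionBySet_iff, LinearMap.mem_ker]
    refine ⟨?_, fun h => funext fun j => Subtype.ext (h ⟨_, j, rfl⟩)⟩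
    rintro h ⟨_, j, rfl⟩
    exact congrArg Subtype.val (congrFun h j)
  rw [← hf]
  exact hL.pi.of_injective _ (LinearMap.ker_eq_bot.1 (ker_liftQ_eq_bot' _ f rfl))

lemma finite_H_of_ringKrullDim_le_three (hR : ringKrullDim R ≤ 3) (hM : IsTorsionIdeal a M)
    (h : ∀ i ≤ 2, FGUpTo (⊥ : Submonoid R) (𝒟.H i M)) (i : ℕ) :
    FGUpTo (⊥ : Submonoid R) (𝒟.H i M) := by
  obtain ⟨n, hn⟩ := monotone_stabilizes_iff_noetherian.2 (inferInstanceAs (IsNoetherian R R))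
    ⟨fun n => (a ^ n).annihilator, fun k l hkl => annihilator_mono (Ideal.pow_le_pow_right hkl)⟩
  let I := (a ^ n).annihilator
  have hI (k : ℕ) : (a ^ k).annihilator ≤ I := (annihilator_mono
    (Ideal.pow_le_pow_right (le_max_left k n))).trans (hn _ (le_max_right k n)).ge
  let L := torsionBySet R M I
  have hQ := finite_quotient_torsionBySet (M := M) (le_refl I) (𝒟.fgUpTo_zero_iff.1 (h 0 (by lia)))
  have hQH (j : ℕ) : FGUpTo (⊥ : Submonoid R) (𝒟.H j (M ⧸ L)) := 𝒟.fgUpTo_of_fgUpTo j hQ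
  refine fgUpTo_H_of_submodule_quotient 𝒟 L i (finite_H_of_coheight_le_two 𝒟
    (isTorsionIdeal_submodule L hM) (fun p hp => ?_) (fun j hj => ?_) i) (hQH i)
  · have hap : a ≤ p.asIdeal :=
      support_subset_of_isTorsionIdeal hM (support_submodule_subset L hp)
    have hIp : I ≤ p.asIdeal := by
      obtain ⟨z, hz⟩ := Module.mem_support_iff_exists_annihilator.1 hp
      exact fun x hx => hz ((mem_annihilator_span_singleton _ _).2
        (Subtype.ext ((mem_torsionBySet_iff _ _).1 z.2 ⟨x, hx⟩)))
    by_contra hlt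
    have hmin : p.asIdeal ∈ minimalPrimes R := by
      refine ⟨⟨p.2, bot_le⟩, fun q hq hqp => ?_⟩
      by_contra hpq
      have hqlt : (⟨q, hq.1⟩ : PrimeSpectrum R) < p := lt_of_le_not_ge hqp hpq
      have h1 := Order.coheight_add_one_le hqlt
      have h2 : (Order.coheight (⟨q, hq.1⟩ : PrimeSpectrum R) : WithBot ℕ∞) ≤ 3 :=
        (Order.coheight_le_krullDim _).trans hR
      have h3 : Order.coheight (⟨q, hq.1⟩ : PrimeSpectrum R) ≤ 3 := WithBot.coe_le_coe.1 h2
      have h4 : Order.coheight p + 1 ≤ 2 + 1 := h1.trans h3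
      exact hlt ((ENat.add_le_add_iff_right (by simp)).1 h4)
    obtain ⟨s, hs, k, hk⟩ := exists_notMem_of_mem_minimalPrimes hmin hap
    exact hs (hIp (hI k hk))
  · cases j with
    | zero => exact 𝒟.fgUpTo_left_zero L.injective_subtype (h 0 hj)
    | succ j =>
      exact 𝒟.fgUpTo_left_succ L.injective_subtype (LinearMap.exact_subtype_mkQ L)
        L.mkQ_surjective j (hQH j) (h _ hj)

omit [IsNoetherianRing R] in
lemma radical_span_pow_pair (x y : R) (k l : ℕ) :
    Ideal.span {x, y} ≤ (Ideal.span {x ^ k, y ^ l}).radical := by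
  refine Ideal.span_le.2 ?_
  rintro _ (rfl | rfl)
  · exact ⟨k, Ideal.subset_span (by simp)⟩
  · exact ⟨l, Ideal.subset_span (by simp)⟩

lemma exists_pair_of_arithRank_eq_two (h : arithRank a = 2) :
    ∃ x ∈ a, ∃ y ∈ a, ∃ k : ℕ, a ^ k ≤ Ideal.span {x, y} := by
  obtain ⟨f, hf⟩ : 2 ∈ {n : ℕ | ∃ f : Fin n → R, (Ideal.span (Set.range f)).radical = a.radical} :=
    h ▸ Nat.sInf_mem (Nat.nonempty_of_pos_sInf (h.symm ▸ two_pos : 0 < arithRank a))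
  have hrange : Set.range f = {f 0, f 1} := by
    ext z; simp [Fin.exists_fin_two, eq_comm]
  rw [hrange] at hf
  have hmem (z : R) (hz : z ∈ ({f 0, f 1} : Set R)) : z ∈ a.radical :=
    hf ▸ Ideal.le_radical (Ideal.subset_span hz)
  obtain ⟨k, hk⟩ := hmem (f 0) (by simp)
  obtain ⟨l, hl⟩ := hmem (f 1) (by simp)
  refine ⟨_, hk, _, hl, Ideal.exists_pow_le_of_le_radical_of_fg ?_ (IsNoetherian.noetherian a)⟩
  calc a ≤ a.radical := Ideal.le_radical
    _ = (Ideal.span {f 0, f 1}).radical := hf.symm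
    _ ≤ _ := Ideal.radical_le_radical_iff.2 (radical_span_pow_pair _ _ k l)

end Cofinite

/-- Yang–Shen, Corollary 2.2: if `dim R/𝔞 = 2`, or `dim R = 3`, or `ara 𝔞 = 2`, then an
`R`-module `M` is `𝔞`-cofinite if and only if `Supp_R M ⊆ V(𝔞)` and `Ext^i_R(R/𝔞, M)` is
finitely generated for `i = 0, 1, 2`. -/
theorem isCofinite_iff_of_dim_or_ara
    {R : Type u} [CommRing R] [IsNoetherianRing R] (𝔞 : Ideal R)
    (h : ringKrullDim (R ⧸ 𝔞) = 2 ∨ ringKrullDim R = 3 ∨ arithRank 𝔞 = 2)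
    (M : ModuleCat.{u} R) :
    IsCofinite 𝔞 M ↔
      (Module.support R M ⊆ PrimeSpectrum.zeroLocus (𝔞 : Set R) ∧
        ∀ i : ℕ, i ≤ 2 → Module.Finite R (extIdeal 𝔞 i M)) := by
  refine and_congr_right fun hs => ⟨fun H i _ => H i, fun H => ?_⟩
  let 𝒟 := Cofinite.resData 𝔞
  have hext (i : ℕ) : Module.Finite R (extIdeal 𝔞 i M) ↔
      Cofinite.FGUpTo (⊥ : Submonoid R) (𝒟.H i M) :=
    (Cofinite.finite_ext_iff 𝔞 M i).trans Cofinite.fgUpTo_bot_iff.symm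
  simp only [hext] at H ⊢
  have hM : IsTorsionIdeal 𝔞 M := Cofinite.isTorsionIdeal_of_support hs
  intro i
  obtain h | h | h := h
  · exact Cofinite.finite_H_of_coheight_le_two 𝒟 hM
      (fun p hp => Cofinite.coheight_le_of_ringKrullDim_quotient_le (n := 2) h.le (hs hp)) H i
  · exact Cofinite.finite_H_of_ringKrullDim_le_three 𝒟 h.le hM H i
  · obtain ⟨x, hx, y, hy, k, hk⟩ := Cofinite.exists_pair_of_arithRank_eq_two h
    exact Cofinite.finite_H_of_pow_le_span_pair 𝒟 hx hy hk (H 0 (by lia)) (H 1 (by lia))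
      (H 2 le_rfl) i
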